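/- arXiv:2604.20525 — 2 statements merged into one kernel-verified Lean document; each statement's English description precedes it below -/
import Mathlib

section
/- Let a₀ ∈ C_c^∞(ℝ²) be real-valued with supp a₀ ⊂ (−1/2, 1/2)², and for j ∈ ℤ² let a_j be the translate of a₀ by j. Let b₀ > 0. Then there exists a function r : (0,1) → [0,∞) with r(h) = O(h^∞) (i.e. for every N > 0 there is C_N with r(h) ≤ C_N h^N for all h ∈ (0,1)), depending only on a₀ and b₀ and not on Λ̃, such that for every finite set Λ̃ ⊂ ℤ², every μ₀ ≥ b₀, every δ with 0 < δ < b₀/2, and every h ∈ (0,1): if the spectrum of â_j does not meet the interval [μ₀ − (δ + r(h)), μ₀ + (δ + r(h))] for every j ∈ Λ̃, then the spectrum of A := Σ_{j ∈ Λ̃} â_j does not meet [μ₀ − δ, μ₀ + δ]. -/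
/-!
STATEMENT 4: With a₀ ∈ C_c^∞(ℝ²) real-valued, supp a₀ ⊂ (−1/2,1/2)², and
b₀ > 0, there exists r : (0,1) → [0,∞) with r(h) = O(h^∞), depending only on
a₀ and b₀ (not on Λ̃), such that for every finite Λ̃ ⊂ ℤ², μ₀ ≥ b₀,
0 < δ < b₀/2, h ∈ (0,1): if σ(â_j) ∩ [μ₀ ± (δ + r(h))] = ∅ for all j ∈ Λ̃,
then σ(Σ_{j∈Λ̃} â_j) ∩ [μ₀ ± δ] = ∅.
-/

open MeasureTheory Complex Real

noncomputable section

/-- The Hilbert space `L²(ℝ)` of complex-valued square-integrable functions. -/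
abbrev L2R := MeasureTheory.Lp ℂ 2 (MeasureTheory.volume : MeasureTheory.Measure ℝ)

/-- The semiclassical Weyl kernel of a symbol `a : ℝ² → ℝ` at parameter `h`. -/
def weylKernel (h : ℝ) (a : ℝ × ℝ → ℝ) (y y' : ℝ) : ℂ :=
  ((1 / (2 * Real.pi * h) : ℝ) : ℂ) *
    ∫ η : ℝ, Complex.exp (Complex.I * (((y - y') * η / h : ℝ) : ℂ)) *
      ((a ((y + y') / 2, η) : ℝ) : ℂ)

/-- `T` is the semiclassical Weyl quantization of the symbol `a` at parameter `h`. -/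
def IsWeylQuant (h : ℝ) (a : ℝ × ℝ → ℝ) (T : L2R →L[ℂ] L2R) : Prop :=
  ∀ u : L2R, (T u : ℝ → ℂ) =ᵐ[volume]
    fun y => ∫ y' : ℝ, weylKernel h a y y' * (u : ℝ → ℂ) y'

/-- The translate of a symbol by a lattice point `j ∈ ℤ²`. -/
def shiftSymbol (a : ℝ × ℝ → ℝ) (j : ℤ × ℤ) : ℝ × ℝ → ℝ :=
  fun p => a (p.1 - (j.1 : ℝ), p.2 - (j.2 : ℝ))

/-!
Write each `T j` as `b j * c j` with `b j = √|T j|` and `c j = sign (T j) * √|T j|`. Away from `0`,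
the spectrum of `∑ j, b j * c j` agrees with that of the operator matrix `(c i * b j)`. Its diagonal
entries are the `T j`, and its off-diagonal entries satisfy `‖c i * b j‖ ≤ √‖T i * T j‖`. A
Gershgorin argument for operator matrices therefore confines the nonzero spectrum of `∑ j, T j` to
the neighbourhoods of the spectra of the `T i` of radius `∑ j ≠ i, √‖T i * T j‖`.

The translated symbols have uniformly separated supports. If the supports are separated in position,
then one of the two Weyl kernels of the product `T i * T j` is evaluated far from its diagonal; if
they are separated in momentum, the kernel of the product is an oscillatory integral in the
intermediate position whose phase is not stationary. Repeated integration by parts gives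
`√‖T i * T j‖ ≤ C_m * h ^ m * ‖i - j‖⁻³` for every `m`, which is summable over the lattice.
-/

section Gershgorin

open Finset Matrix
open scoped Matrix.Norms.Operator

lemma norm_mul_eq_of_star_mul_self_eq {A : Type*} [NonUnitalNormedRing A] [StarRing A]
    [CStarRing A] {a b : A} (h : star a * a = star b * b) (c : A) : ‖a * c‖ = ‖b * c‖ := by
  rw [← mul_self_inj (norm_nonneg _) (norm_nonneg _), ← CStarRing.norm_star_mul_self,
    ← CStarRing.norm_star_mul_self]
  simp only [star_mul, mul_assoc]
  rw [← mul_assoc (star a), h, mul_assoc]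

lemma norm_mul_eq_of_mul_star_self_eq {A : Type*} [NonUnitalNormedRing A] [StarRing A]
    [CStarRing A] {a b : A} (h : a * star a = b * star b) (c : A) : ‖c * a‖ = ‖c * b‖ := by
  have h' : star (star a) * star a = star (star b) * star b := by simpa only [star_star] using h
  have := norm_mul_eq_of_star_mul_self_eq h' (star c)
  rwa [← star_mul, ← star_mul, _root_.norm_star, _root_.norm_star] at this

variable {A : Type*} [CStarAlgebra A] {ι : Type*} [Fintype ι] [DecidableEq ι]

lemma norm_mul_sq_le_norm_sq_mul_sq {a b : A} (ha : IsSelfAdjoint a) (hb : IsSelfAdjoint b) :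
    ‖a * b‖ ^ 2 ≤ ‖a ^ 2 * b ^ 2‖ := by
  nontriviality A
  have hstar : star (a * b) * (a * b) = b * (a ^ 2 * b) := by
    rw [star_mul, ha.star_eq, hb.star_eq]
    noncomm_ring
  have hradius : spectralRadius ℂ (b * (a ^ 2 * b)) ≤ ‖a ^ 2 * b ^ 2‖₊ := by
    refine iSup₂_le fun z hz ↦ ?_
    rcases eq_or_ne z 0 with rfl | hz0
    · simp
    have hz' : z ∈ spectrum ℂ (a ^ 2 * b * b) \ {0} := by
      rw [← spectrum.nonzero_mul_comm]
      exact ⟨hz, hz0⟩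
    rw [mul_assoc, ← sq] at hz'
    exact_mod_cast spectrum.norm_le_norm_of_mem hz'.1
  rw [← hstar, (IsSelfAdjoint.star_mul_self _).spectralRadius_eq_nnnorm] at hradius
  rw [sq, ← CStarRing.norm_star_mul_self]
  exact_mod_cast hradius

/-- The odd square root `sign x * √|x|`, written using the convention that `√x = 0` for `x ≤ 0`.
With it a self-adjoint `a` factors as `signedSqrt a * √|a|`. -/
def signedSqrt (x : ℝ) : ℝ := √x - √(-x)

@[fun_prop]
lemma continuous_signedSqrt : Continuous signedSqrt := by
  unfold signedSqrt
  fun_prop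

lemma signedSqrt_mul_self (x : ℝ) : signedSqrt x * signedSqrt x = |x| := by
  unfold signedSqrt
  rcases le_total 0 x with h | h
  · simp [abs_of_nonneg h, Real.sqrt_eq_zero_of_nonpos (neg_nonpos.2 h), Real.mul_self_sqrt h]
  · simp [abs_of_nonpos h, Real.sqrt_eq_zero_of_nonpos h, Real.mul_self_sqrt (neg_nonneg.2 h)]

lemma sqrt_abs_mul_signedSqrt (x : ℝ) : √|x| * signedSqrt x = x := by
  unfold signedSqrt
  rcases le_total 0 x with h | h
  · simp [abs_of_nonneg h, Real.sqrt_eq_zero_of_nonpos (neg_nonpos.2 h), Real.mul_self_sqrt h]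
  · simp [abs_of_nonpos h, Real.sqrt_eq_zero_of_nonpos h, Real.mul_self_sqrt (neg_nonneg.2 h)]

lemma cfc_abs_mul_self {a : A} (ha : IsSelfAdjoint a) :
    cfc (fun x : ℝ ↦ |x|) a * cfc (fun x : ℝ ↦ |x|) a = a * a := by
  rw [← cfc_mul .., ← sq, ← cfc_pow_id (R := ℝ) a 2]
  simp only [abs_mul_abs_self, sq]

lemma norm_cfc_signedSqrt_mul_cfc_sqrt_abs_le {a b : A} (ha : IsSelfAdjoint a)
    (hb : IsSelfAdjoint b) :
    ‖cfc signedSqrt a * cfc (fun x : ℝ ↦ √|x|) b‖ ≤ √‖a * b‖ := by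
  have hsq : cfc signedSqrt a ^ 2 = cfc (fun x : ℝ ↦ |x|) a := by
    rw [sq, ← cfc_mul ..]
    simp only [signedSqrt_mul_self]
  have hsq' : cfc (fun x : ℝ ↦ √|x|) b ^ 2 = cfc (fun x : ℝ ↦ |x|) b := by
    rw [← cfc_pow ..]
    simp only [Real.sq_sqrt (abs_nonneg _)]
  have habs (c : A) : star (cfc (fun x : ℝ ↦ |x|) c) = cfc (fun x : ℝ ↦ |x|) c :=
    (cfc_predicate (fun x : ℝ ↦ |x|) c).star_eq
  refine Real.le_sqrt_of_sq_le ?_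
  calc ‖cfc signedSqrt a * cfc (fun x : ℝ ↦ √|x|) b‖ ^ 2
      ≤ ‖cfc signedSqrt a ^ 2 * cfc (fun x : ℝ ↦ √|x|) b ^ 2‖ :=
        norm_mul_sq_le_norm_sq_mul_sq (cfc_predicate ..) (cfc_predicate ..)
    _ = ‖cfc (fun x : ℝ ↦ |x|) a * cfc (fun x : ℝ ↦ |x|) b‖ := by rw [hsq, hsq']
    _ = ‖a * cfc (fun x : ℝ ↦ |x|) b‖ :=
        norm_mul_eq_of_star_mul_self_eq (by rw [habs, cfc_abs_mul_self ha, ha.star_eq]) _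
    _ = ‖a * b‖ :=
        norm_mul_eq_of_mul_star_self_eq (by rw [habs, cfc_abs_mul_self hb, hb.star_eq]) _

lemma exists_unit_eq_algebraMap_sub_norm_inv_lt {a : A} (ha : IsSelfAdjoint a) {μ κ : ℝ}
    (hκ : 0 ≤ κ) (hgap : ∀ ν ∈ spectrum ℝ a, κ < |ν - μ|) :
    ∃ u : Aˣ, (u : A) = algebraMap ℝ A μ - a ∧ ‖(↑u⁻¹ : A)‖ * κ < 1 := by
  have hne : ∀ ν ∈ spectrum ℝ a, μ - ν ≠ 0 := fun ν hν ↦ by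
    rw [← abs_pos, abs_sub_comm]
    exact hκ.trans_lt (hgap ν hν)
  refine ⟨cfcUnits (fun ν ↦ μ - ν) a hne, ?_, ?_⟩
  · simp only [val_cfcUnits]
    rw [cfc_sub .., cfc_const μ a, cfc_id' ℝ a]
  · rcases hκ.eq_or_lt with rfl | hκ
    · simp
    · rw [val_inv_cfcUnits (fun ν ↦ μ - ν) a hne, ← lt_div_iff₀ hκ, one_div]
      refine norm_cfc_lt (inv_pos.2 hκ) fun ν hν ↦ ?_
      rw [norm_inv, Real.norm_eq_abs, abs_sub_comm]
      exact inv_strictAnti₀ hκ (hgap ν hν)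

open MulOpposite in
lemma mem_spectrum_vecMulVec_of_mem_spectrum_dotProduct {𝕜 R : Type*} [Field 𝕜] [Ring R]
    [Algebra 𝕜 R] {b c : ι → R} {μ : 𝕜} (hμ : μ ≠ 0) (h : μ ∈ spectrum 𝕜 (b ⬝ᵥ c)) :
    μ ∈ spectrum 𝕜 (vecMulVec c b) := by
  contrapose! h
  rw [spectrum.notMem_iff] at h ⊢
  obtain ⟨⟨D, E, hDE, hED⟩, rfl : D = _⟩ := h
  have hmul (v : ι → R) : (algebraMap 𝕜 (Matrix ι ι R) μ - vecMulVec c b) *ᵥ v =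
      μ • v - op (b ⬝ᵥ v) • c := by
    rw [sub_mulVec, vecMulVec_mulVec, Algebra.algebraMap_eq_smul_one, smul_mulVec, one_mulVec]
  have hr : μ • (b ⬝ᵥ E *ᵥ c) - (b ⬝ᵥ c) * (b ⬝ᵥ E *ᵥ c) = b ⬝ᵥ c := by
    have := congr(b ⬝ᵥ ($hDE *ᵥ c))
    rwa [← mulVec_mulVec, hmul, dotProduct_sub, dotProduct_smul, dotProduct_smul, one_mulVec,
      op_smul_eq_mul] at this
  have hl : μ • (b ⬝ᵥ E *ᵥ c) - (b ⬝ᵥ E *ᵥ c) * (b ⬝ᵥ c) = b ⬝ᵥ c := by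
    have := congr(b ⬝ᵥ ($hED *ᵥ c))
    rwa [← mulVec_mulVec, hmul, mulVec_sub, mulVec_smul, mulVec_smul, dotProduct_sub,
      dotProduct_smul, dotProduct_smul, one_mulVec, op_smul_eq_mul] at this
  have hcancel {x : R} (hx : x = μ • 1) : μ⁻¹ • x = 1 := by rw [hx, inv_smul_smul₀ hμ]
  refine ⟨⟨_, μ⁻¹ • (1 + b ⬝ᵥ E *ᵥ c), ?_, ?_⟩, rfl⟩ <;>
    simp only [Algebra.algebraMap_eq_smul_one, mul_smul_comm, smul_mul_assoc] <;>
    refine hcancel ?_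
  · rw [sub_mul, smul_mul_assoc, one_mul, smul_add, mul_add, mul_one]
    rw [add_sub_add_comm, hr, sub_add_cancel]
  · rw [mul_sub, mul_smul_comm, mul_one, smul_add, add_mul, one_mul]
    rw [add_sub_add_comm, hl, sub_add_cancel]

lemma isUnit_matrix_of_norm_inv_mul_sum_lt_one {R : Type*} [NormedRing R] [CompleteSpace R]
    {M : Matrix ι ι R} {u : ι → Rˣ} (hdiag : ∀ i, M i i = u i)
    (hdom : ∀ i, ‖(↑(u i)⁻¹ : R)‖ * ∑ j ∈ univ.erase i, ‖M i j‖ < 1) : IsUnit M := by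
  let N : Matrix ι ι R := .of fun i j ↦ if j = i then 0 else -(↑(u i)⁻¹ * M i j)
  have hrow (i : ι) : ∑ j, ‖N i j‖₊ < 1 := by
    rw [← NNReal.coe_lt_coe, NNReal.coe_sum, NNReal.coe_one]
    refine lt_of_le_of_lt ?_ (hdom i)
    rw [Finset.mul_sum, ← Finset.add_sum_erase _ _ (mem_univ i)]
    simp only [N, Matrix.of_apply, if_true, nnnorm_zero, NNReal.coe_zero, zero_add, coe_nnnorm]
    gcongr with j hj
    rw [if_neg (ne_of_mem_erase hj), norm_neg]
    exact norm_mul_le _ _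
  have hN : ‖N‖ < 1 := by
    rw [Matrix.linfty_opNorm_def]
    exact_mod_cast (Finset.sup_lt_iff one_pos).2 fun i _ ↦ hrow i
  have hfactor : M = diagonal (fun i ↦ (u i : R)) * (1 - N) := by
    ext i j
    rcases eq_or_ne j i with rfl | hij
    · simp [N, hdiag]
    · simp [N, hij, hij.symm]
  have : @CompleteSpace (Matrix ι ι R) PseudoMetricSpace.toUniformSpace :=
    Matrix.instCompleteSpace ι ι R
  rw [hfactor]
  exact ((Pi.isUnit_iff.2 fun i ↦ (u i).isUnit).map (diagonalRingHom ι R)).mul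
    (isUnit_one_sub_of_norm_lt_one hN)

theorem exists_abs_sub_le_of_mem_spectrum_sum {a : ι → A} (ha : ∀ i, IsSelfAdjoint (a i)) {μ : ℝ}
    (hμ : μ ≠ 0) (hmem : μ ∈ spectrum ℝ (∑ i, a i)) :
    ∃ i, ∃ ν ∈ spectrum ℝ (a i), |ν - μ| ≤ ∑ j ∈ univ.erase i, √‖a i * a j‖ := by
  by_contra! hgap
  choose u hu hu_inv using fun i ↦ exists_unit_eq_algebraMap_sub_norm_inv_lt (ha i)
    (Finset.sum_nonneg fun _ _ ↦ Real.sqrt_nonneg _) (hgap i)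
  let b (i : ι) : A := cfc (fun x : ℝ ↦ √|x|) (a i)
  let c (i : ι) : A := cfc signedSqrt (a i)
  have hbc (i : ι) : b i * c i = a i := by
    simp only [b, c]
    rw [← cfc_mul ..]
    simp only [sqrt_abs_mul_signedSqrt]
    exact cfc_id' ℝ (a i)
  have hcb (i : ι) : c i * b i = a i := by rw [cfc_commute_cfc .., hbc]
  rw [← funext hbc] at hmem
  refine mem_spectrum_vecMulVec_of_mem_spectrum_dotProduct (b := b) (c := c) hμ hmem ?_
  refine isUnit_matrix_of_norm_inv_mul_sum_lt_one (u := u) (fun i ↦ ?_) fun i ↦ ?_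
  · simp [hu, vecMulVec_apply, hcb, Matrix.algebraMap_matrix_apply]
  · refine lt_of_le_of_lt ?_ (hu_inv i)
    gcongr with j hj
    rw [Matrix.sub_apply, Matrix.algebraMap_matrix_apply, if_neg (ne_of_mem_erase hj).symm,
      zero_sub, norm_neg]
    exact norm_cfc_signedSqrt_mul_cfc_sqrt_abs_le (ha i) (ha j)

theorem exists_abs_sub_le_of_mem_spectrum_finsetSum {A ι : Type*} [CStarAlgebra A] [DecidableEq ι]
    {s : Finset ι} {a : ι → A} (ha : ∀ i ∈ s, IsSelfAdjoint (a i)) {μ : ℝ} (hμ : μ ≠ 0)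
    (hmem : (μ : ℂ) ∈ spectrum ℂ (∑ i ∈ s, a i)) :
    ∃ i ∈ s, ∃ ν : ℝ, (ν : ℂ) ∈ spectrum ℂ (a i) ∧ |ν - μ| ≤ ∑ j ∈ s.erase i, √‖a i * a j‖ := by
  rw [← Finset.sum_coe_sort] at hmem
  obtain ⟨i, ν, hν, hle⟩ := exists_abs_sub_le_of_mem_spectrum_sum (ι := s) (fun i ↦ ha i i.2) hμ
    ((spectrum.algebraMap_mem_iff ℂ).1 hmem)
  refine ⟨i, i.2, ν, (spectrum.algebraMap_mem_iff ℂ).2 hν, hle.trans_eq ?_⟩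
  rw [Finset.sum_erase_eq_sub (mem_univ i), Finset.sum_erase_eq_sub i.2,
    Finset.sum_coe_sort s fun j ↦ √‖a i * a j‖]

end Gershgorin

section Oscillatory

lemma abs_mul_norm_integral_exp_mul {f f' : ℝ → ℂ} (hf : ∀ s, HasDerivAt f (f' s) s)
    (hint : Integrable f) (hint' : Integrable f') (ω : ℝ) :
    |ω| * ‖∫ s, cexp (I * (ω * s : ℝ)) * f s‖ = ‖∫ s, cexp (I * (ω * s : ℝ)) * f' s‖ := by
  have hexp (s : ℝ) : HasDerivAt (fun s : ℝ ↦ cexp (I * (ω * s : ℝ)))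
      (cexp (I * (ω * s : ℝ)) * (I * ω)) s := by
    have hlin : HasDerivAt (fun s : ℝ ↦ ω * s) ω s := by
      simpa only [mul_one, id] using (hasDerivAt_id s).const_mul ω
    exact (hlin.ofReal_comp.const_mul I).cexp
  have hmul {g : ℝ → ℂ} (hg : Integrable g) : Integrable fun s ↦ cexp (I * (ω * s : ℝ)) * g s :=
    hg.bdd_mul (c := 1) (by fun_prop) (.of_forall fun s ↦ (norm_exp_I_mul_ofReal _).le)
  have hcomm : (fun s : ℝ ↦ cexp (I * (ω * s : ℝ)) * (I * ω) * f s) =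
      fun s : ℝ ↦ I * ω * (cexp (I * (ω * s : ℝ)) * f s) := by
    ext s
    ring
  rw [integral_mul_deriv_eq_deriv_mul_of_integrable (fun s _ ↦ hexp s) (fun s _ ↦ hf s)
    (hmul hint') ?_ (hmul hint), hcomm, integral_const_mul, norm_neg, norm_mul, norm_mul, norm_I,
    one_mul, norm_real, Real.norm_eq_abs]
  simpa only [Pi.mul_def, hcomm] using (hmul hint).const_mul (I * ω)

variable {E : Type*} [NormedAddCommGroup E] {Φ : ℝ × E → ℂ}

lemma exists_norm_le_mul_inv_one_add_sq (hΦ : Continuous Φ) (hsupp : HasCompactSupport Φ) :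
    ∃ C, ∀ s e, ‖Φ (s, e)‖ ≤ C * (1 + s ^ 2)⁻¹ := by
  have hbound : ∃ C, ∀ p : ℝ × E, ‖((1 + p.1 ^ 2 : ℝ) : ℂ) * Φ p‖ ≤ C :=
    HasCompactSupport.exists_bound_of_continuous hsupp.mul_left (by fun_prop)
  obtain ⟨C, hC⟩ := hbound
  refine ⟨C, fun s e ↦ ?_⟩
  have hs : ‖((1 + s ^ 2 : ℝ) : ℂ)‖ = 1 + s ^ 2 := by rw [norm_real, norm_of_nonneg (by positivity)]
  rw [← div_eq_mul_inv, le_div_iff₀' (by positivity), ← hs, ← norm_mul]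
  exact hC (s, e)

theorem exists_pow_mul_norm_integral_exp_mul_le [NormedSpace ℝ E] (hΦ : ContDiff ℝ (⊤ : ℕ∞) Φ)
    (hsupp : HasCompactSupport Φ) (M : ℕ) :
    ∃ C, ∀ (e : E) (ω : ℝ), |ω| ^ M * ‖∫ s, cexp (I * (ω * s : ℝ)) * Φ (s, e)‖ ≤ C := by
  have hint {Ψ : ℝ × E → ℂ} (hΨ : Continuous Ψ) (hΨsupp : HasCompactSupport Ψ) (e : E) :
      Integrable fun s ↦ Ψ (s, e) := by
    obtain ⟨C, hC⟩ := exists_norm_le_mul_inv_one_add_sq hΨ hΨsupp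
    exact (integrable_inv_one_add_sq.const_mul C).mono' (by fun_prop) (.of_forall fun s ↦ hC s e)
  induction M generalizing Φ with
  | zero =>
    obtain ⟨C, hC⟩ := exists_norm_le_mul_inv_one_add_sq hΦ.continuous hsupp
    refine ⟨∫ s, C * (1 + s ^ 2)⁻¹, fun e ω ↦ ?_⟩
    rw [pow_zero, one_mul]
    refine norm_integral_le_of_norm_le (integrable_inv_one_add_sq.const_mul C)
      (.of_forall fun s ↦ ?_)
    rw [norm_mul, norm_exp_I_mul_ofReal, one_mul]
    exact hC s e
  | succ M ih =>
    have hΦ' : ContDiff ℝ (⊤ : ℕ∞) fun p ↦ fderiv ℝ Φ p (1, 0) :=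
      (hΦ.fderiv_right le_rfl).clm_apply contDiff_const
    have hsupp' := hsupp.fderiv_apply ℝ (1, 0)
    have hderiv (e : E) (s : ℝ) :
        HasDerivAt (fun s ↦ Φ (s, e)) (fderiv ℝ Φ (s, e) (1, 0)) s :=
      (hΦ.differentiable (by simp) _).hasFDerivAt.comp_hasDerivAt s
        ((hasDerivAt_id s).prodMk (hasDerivAt_const s e))
    refine (ih hΦ' hsupp').imp fun C hC e ω ↦ ?_
    rw [pow_succ, mul_assoc, abs_mul_norm_integral_exp_mul (hderiv e)
      (hint hΦ.continuous hsupp e) (hint hΦ'.continuous hsupp' e)]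
    exact hC e ω

theorem exists_one_add_pow_mul_norm_integral_exp_mul_le [NormedSpace ℝ E]
    (hΦ : ContDiff ℝ (⊤ : ℕ∞) Φ) (hsupp : HasCompactSupport Φ) (M : ℕ) :
    ∃ C, ∀ (e : E) (ω : ℝ), (1 + |ω|) ^ M * ‖∫ s, cexp (I * (ω * s : ℝ)) * Φ (s, e)‖ ≤ C := by
  obtain ⟨C₀, hC₀⟩ := exists_pow_mul_norm_integral_exp_mul_le hΦ hsupp 0
  obtain ⟨C, hC⟩ := exists_pow_mul_norm_integral_exp_mul_le hΦ hsupp M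
  refine ⟨2 ^ (M - 1) * (C₀ + C), fun e ω ↦ ?_⟩
  set J := ‖∫ s, cexp (I * (ω * s : ℝ)) * Φ (s, e)‖
  calc (1 + |ω|) ^ M * J ≤ 2 ^ (M - 1) * (1 ^ M + |ω| ^ M) * J := by
        gcongr
        exact add_pow_le zero_le_one (abs_nonneg ω) M
    _ = 2 ^ (M - 1) * (|ω| ^ 0 * J + |ω| ^ M * J) := by ring
    _ ≤ 2 ^ (M - 1) * (C₀ + C) := by gcongr; exacts [hC₀ e ω, hC e ω]

end Oscillatory

section IntegralOperators

variable {α 𝕜 : Type*} [MeasurableSpace α] {μ : Measure α} [RCLike 𝕜]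

/-- The bounded operator `T` on `L²(μ)` is the integral operator with kernel `K`. Integrability of
`K y z * u z` in `z` is not part of the definition; all results below assume a product bound
`‖K y z‖ ≤ f y * g z` with `f, g ∈ L²(μ)`, which implies it. -/
def HasKernel (T : Lp 𝕜 2 μ →L[𝕜] Lp 𝕜 2 μ) (K : α → α → 𝕜) : Prop :=
  ∀ u : Lp 𝕜 2 μ, T u =ᵐ[μ] fun y ↦ ∫ z, K y z * u z ∂μ

/-- The kernel `(y, z) ↦ ∫ x, K y x * L x z` of the product of the integral operators with kernels
`K` and `L`. -/
def kernelComp (μ : Measure α) (K L : α → α → 𝕜) (y z : α) : 𝕜 := ∫ x, K y x * L x z ∂μ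

lemma integral_norm_mul_norm_le {E F : Type*} [NormedAddCommGroup E] [NormedAddCommGroup F]
    {f : α → E} (hf : MemLp f 2 μ) (u : Lp F 2 μ) :
    ∫ z, ‖f z‖ * ‖u z‖ ∂μ ≤ ‖hf.toLp f‖ * ‖u‖ := by
  have hinner : inner ℝ (hf.norm.toLp _) ((Lp.memLp u).norm.toLp _) =
      ∫ z, ‖f z‖ * ‖u z‖ ∂μ := by
    rw [L2.inner_def]
    refine integral_congr_ae ?_
    filter_upwards [hf.norm.coeFn_toLp, (Lp.memLp u).norm.coeFn_toLp] with z hfz huz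
    rw [hfz, huz, real_inner_comm, RCLike.inner_apply, conj_trivial]
  calc ∫ z, ‖f z‖ * ‖u z‖ ∂μ ≤ ‖hf.norm.toLp _‖ * ‖(Lp.memLp u).norm.toLp _‖ :=
        hinner ▸ real_inner_le_norm ..
    _ = ‖hf.toLp f‖ * ‖u‖ := by
        rw [Lp.norm_toLp, Lp.norm_toLp, Lp.norm_toLp, eLpNorm_norm, eLpNorm_norm, Lp.norm_def]

namespace HasKernel

variable {S T : Lp 𝕜 2 μ →L[𝕜] Lp 𝕜 2 μ} {K L : α → α → 𝕜} {f g f' g' : α → ℝ}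

lemma norm_le (hT : HasKernel T K) (hf : MemLp f 2 μ) (hg : MemLp g 2 μ)
    (hK : ∀ y z, ‖K y z‖ ≤ f y * g z) : ‖T‖ ≤ ‖hf.toLp f‖ * ‖hg.toLp g‖ := by
  refine T.opNorm_le_bound (by positivity) fun u ↦ ?_
  have hint : Integrable (fun z ↦ ‖g z‖ * ‖u z‖) μ := hg.norm.integrable_mul (Lp.memLp u).norm
  have hTu : ∀ᵐ y ∂μ, ‖T u y‖ ≤ ‖hg.toLp g‖ * ‖u‖ * ‖hf.toLp f y‖ := by
    filter_upwards [hT u, hf.coeFn_toLp] with y hTy hfy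
    rw [hTy, hfy]
    calc ‖∫ z, K y z * u z ∂μ‖ ≤ ∫ z, ‖f y‖ * (‖g z‖ * ‖u z‖) ∂μ := by
          refine norm_integral_le_of_norm_le (hint.const_mul _) (.of_forall fun z ↦ ?_)
          rw [norm_mul, ← mul_assoc, ← norm_mul (f y)]
          gcongr
          exact (hK y z).trans (le_norm_self _)
      _ = ‖f y‖ * ∫ z, ‖g z‖ * ‖u z‖ ∂μ := integral_const_mul ..
      _ ≤ ‖f y‖ * (‖hg.toLp g‖ * ‖u‖) := by
          gcongr
          exact integral_norm_mul_norm_le hg u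
      _ = ‖hg.toLp g‖ * ‖u‖ * ‖f y‖ := mul_comm ..
  calc ‖T u‖ ≤ ‖hg.toLp g‖ * ‖u‖ * ‖hf.toLp f‖ := Lp.norm_le_mul_norm_of_ae_le_mul hTu
    _ = ‖hf.toLp f‖ * ‖hg.toLp g‖ * ‖u‖ := by ring

variable [SFinite μ]

lemma isSelfAdjoint (hT : HasKernel T K) (hKm : StronglyMeasurable (Function.uncurry K))
    (hK_star : ∀ y z, star (K y z) = K z y) (hf : MemLp f 2 μ) (hg : MemLp g 2 μ)
    (hK : ∀ y z, ‖K y z‖ ≤ f y * g z) : IsSelfAdjoint T := by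
  rw [ContinuousLinearMap.isSelfAdjoint_iff_isSymmetric]
  intro u v
  have hleft : inner 𝕜 (T u) v = ∫ y, ∫ z, K z y * star (u z) * v y ∂μ ∂μ := by
    rw [L2.inner_def]
    refine integral_congr_ae ?_
    filter_upwards [hT u] with y hy
    rw [hy, RCLike.inner_apply, ← integral_conj, mul_comm, ← integral_mul_const]
    simp only [map_mul, starRingEnd_apply, hK_star]
  have hright : inner 𝕜 u (T v) = ∫ z, ∫ y, K z y * star (u z) * v y ∂μ ∂μ := by
    rw [L2.inner_def]
    refine integral_congr_ae ?_
    filter_upwards [hT v] with z hz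
    rw [hz, RCLike.inner_apply, ← integral_mul_const]
    simp only [starRingEnd_apply, mul_right_comm]
  refine hleft.trans (.trans (integral_integral_swap ?_) hright.symm)
  have hdom : Integrable (fun p : α × α ↦ (g p.1 * ‖v p.1‖) * (f p.2 * ‖u p.2‖)) (μ.prod μ) :=
    (hg.integrable_mul (Lp.memLp v).norm).mul_prod (hf.integrable_mul (Lp.memLp u).norm)
  refine hdom.mono' ?_ (.of_forall fun ⟨y, z⟩ ↦ ?_)
  · have hu := (Lp.stronglyMeasurable u).measurable
    have hv := (Lp.stronglyMeasurable v).measurable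
    have hKm' : Measurable fun p : α × α ↦ K p.2 p.1 := hKm.measurable.comp measurable_swap
    exact ((hKm'.mul (continuous_star.measurable.comp (hu.comp measurable_snd))).mul
      (hv.comp measurable_fst)).aestronglyMeasurable
  · calc ‖K z y * star (u z) * v y‖ = ‖K z y‖ * ‖u z‖ * ‖v y‖ := by simp
      _ ≤ f z * g y * ‖u z‖ * ‖v y‖ := by gcongr; exact hK z y
      _ = g y * ‖v y‖ * (f z * ‖u z‖) := by ring

lemma mul (hS : HasKernel S K) (hT : HasKernel T L)
    (hKm : StronglyMeasurable (Function.uncurry K)) (hLm : StronglyMeasurable (Function.uncurry L))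
    (hg : MemLp g 2 μ) (hf' : MemLp f' 2 μ) (hg' : MemLp g' 2 μ)
    (hK : ∀ y z, ‖K y z‖ ≤ f y * g z) (hL : ∀ y z, ‖L y z‖ ≤ f' y * g' z) :
    HasKernel (S * T) (kernelComp μ K L) := by
  intro u
  filter_upwards [hS (T u)] with y hy
  have hTu : ∫ x, K y x * T u x ∂μ = ∫ x, ∫ z, K y x * L x z * u z ∂μ ∂μ := by
    refine integral_congr_ae ?_
    filter_upwards [hT u] with x hx
    rw [hx, ← integral_const_mul]
    simp only [mul_assoc]
  have hdom : Integrable (fun p : α × α ↦ f y * ((g p.1 * f' p.1) * (g' p.2 * ‖u p.2‖)))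
      (μ.prod μ) :=
    ((hg.integrable_mul hf').mul_prod (hg'.integrable_mul (Lp.memLp u).norm)).const_mul (f y)
  have hswap : Integrable (fun p : α × α ↦ K y p.1 * L p.1 p.2 * u p.2) (μ.prod μ) := by
    refine hdom.mono' ?_ (.of_forall fun ⟨x, z⟩ ↦ ?_)
    · have hKy : Measurable fun p : α × α ↦ K y p.1 :=
        hKm.measurable.comp (measurable_const.prodMk measurable_fst)
      exact ((hKy.mul hLm.measurable).mul
        ((Lp.stronglyMeasurable u).measurable.comp measurable_snd)).aestronglyMeasurable
    · calc ‖K y x * L x z * u z‖ = ‖K y x‖ * ‖L x z‖ * ‖u z‖ := by rw [norm_mul, norm_mul]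
        _ ≤ (f y * g x) * (f' x * g' z) * ‖u z‖ := by
          gcongr
          exacts [(norm_nonneg _).trans (hK y x), hK y x, hL x z]
        _ = f y * ((g x * f' x) * (g' z * ‖u z‖)) := by ring
  rw [mul_apply_eq_comp, hy, hTu, integral_integral_swap hswap]
  simp only [kernelComp, integral_mul_const]

end HasKernel
end IntegralOperators

section Weight

/-- The weight `1 / (1 + |s|)`. It is square integrable, and products of two translates of it
dominate the kernels of quantizations of compactly supported symbols. -/
def decayWeight (s : ℝ) : ℝ := (1 + |s|)⁻¹

lemma decayWeight_pos (s : ℝ) : 0 < decayWeight s := by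
  unfold decayWeight
  positivity

lemma decayWeight_le_one (s : ℝ) : decayWeight s ≤ 1 :=
  inv_le_one_of_one_le₀ (by linarith [abs_nonneg s])

@[fun_prop]
lemma continuous_decayWeight : Continuous decayWeight :=
  Continuous.inv₀ (by fun_prop) fun s ↦ by positivity

lemma one_le_mul_decayWeight {c s ρ t : ℝ} (hc : |c| ≤ ρ) (hs : |s - c| ≤ t) :
    1 ≤ (1 + ρ) * (1 + t) * decayWeight s := by
  rw [decayWeight, ← div_eq_mul_inv, one_le_div (by positivity)]
  nlinarith [abs_sub_abs_le_abs_sub s c, abs_nonneg c, abs_nonneg (s - c)]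

lemma memLp_decayWeight : MemLp decayWeight 2 := by
  rw [memLp_two_iff_integrable_sq (by fun_prop)]
  refine integrable_inv_one_add_sq.mono' (by fun_prop) (.of_forall fun s ↦ ?_)
  rw [norm_of_nonneg (by positivity), decayWeight, inv_pow]
  gcongr
  nlinarith [abs_nonneg s, sq_abs s]

lemma memLp_decayWeight_sub (c : ℝ) : MemLp (fun s ↦ decayWeight (s - c)) 2 :=
  memLp_decayWeight.comp_measurePreserving (measurePreserving_sub_right volume c)

lemma norm_toLp_decayWeight_sub (c : ℝ) :
    ‖(memLp_decayWeight_sub c).toLp _‖ = ‖memLp_decayWeight.toLp _‖ := by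
  rw [Lp.norm_toLp, Lp.norm_toLp]
  exact congrArg _ (eLpNorm_comp_measurePreserving continuous_decayWeight.aestronglyMeasurable
    (measurePreserving_sub_right volume c))

end Weight

section WeylKernel

open scoped translate

lemma star_weylKernel (h : ℝ) (a : ℝ × ℝ → ℝ) (y z : ℝ) :
    star (weylKernel h a y z) = weylKernel h a z y := by
  rw [← starRingEnd_apply, weylKernel, map_mul, conj_ofReal, ← integral_conj, weylKernel]
  simp only [map_mul, ← exp_conj, conj_I, conj_ofReal, add_comm y z, neg_mul_comm, ← ofReal_neg,
    ← neg_div, ← neg_mul, neg_sub]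

lemma stronglyMeasurable_uncurry_weylKernel (h : ℝ) {a : ℝ × ℝ → ℝ} (ha : Continuous a) :
    StronglyMeasurable (Function.uncurry (weylKernel h a)) := by
  unfold weylKernel
  refine StronglyMeasurable.const_mul ?_ _
  refine StronglyMeasurable.integral_prod_right (f := fun (p : ℝ × ℝ) (η : ℝ) ↦
    cexp (I * ((p.1 - p.2) * η / h : ℝ)) * (a ((p.1 + p.2) / 2, η) : ℂ)) ?_
  refine Continuous.stronglyMeasurable ?_
  simp only [Function.uncurry_def]
  fun_prop

lemma weylKernel_translate (h : ℝ) (a : ℝ × ℝ → ℝ) (p : ℝ × ℝ) (y z : ℝ) :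
    weylKernel h (τ p a) y z =
      cexp (I * ((y - z) * p.2 / h : ℝ)) * weylKernel h a (y - p.1) (z - p.1) := by
  rw [weylKernel, weylKernel, mul_left_comm,
    ← integral_const_mul (cexp (I * ((y - z) * p.2 / h : ℝ))), ← integral_add_right_eq_self _ p.2]
  congr 1
  refine integral_congr_ae (.of_forall fun η ↦ ?_)
  have hpoint : ((y + z) / 2, η + p.2) - p = ((y - p.1 + (z - p.1)) / 2, η) := by
    ext <;> simp only [Prod.fst_sub, Prod.snd_sub] <;> ring
  beta_reduce
  rw [translate_apply, hpoint, ← mul_assoc, ← Complex.exp_add]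
  congr 2
  push_cast
  ring

lemma norm_weylKernel_translate (h : ℝ) (a : ℝ × ℝ → ℝ) (p : ℝ × ℝ) (y z : ℝ) :
    ‖weylKernel h (τ p a) y z‖ = ‖weylKernel h a (y - p.1) (z - p.1)‖ := by
  rw [weylKernel_translate, norm_mul, norm_exp_I_mul_ofReal, one_mul]

variable {a b : ℝ × ℝ → ℝ} {ρ : ℝ}

lemma abs_le_and_abs_le_of_ne_zero (ha : Function.support a ⊆ Metric.closedBall 0 ρ) {x η : ℝ}
    (hne : a (x, η) ≠ 0) : |x| ≤ ρ ∧ |η| ≤ ρ :=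
  max_le_iff.1 (mem_closedBall_zero_iff.1 (ha hne))

lemma hasCompactSupport_of_support_subset_closedBall
    (ha : Function.support a ⊆ Metric.closedBall 0 ρ) : HasCompactSupport a :=
  .of_support_subset_isCompact (isCompact_closedBall 0 ρ) ha

lemma abs_midpoint_sub_le_of_weylKernel_translate_ne_zero
    (ha : Function.support a ⊆ Metric.closedBall 0 ρ) {h y z : ℝ} {p : ℝ × ℝ}
    (hne : weylKernel h (τ p a) y z ≠ 0) : |(y + z) / 2 - p.1| ≤ ρ := by
  contrapose! hne
  have hzero (η : ℝ) : a (((y + z) / 2, η) - p) = 0 := by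
    contrapose! hne
    exact (abs_le_and_abs_le_of_ne_zero ha hne).1
  simp [weylKernel, translate_apply, hzero]

lemma exists_one_add_pow_mul_norm_weylKernel_le (ha : ContDiff ℝ (⊤ : ℕ∞) a)
    (ha_supp : HasCompactSupport a) (M : ℕ) :
    ∃ C, 0 ≤ C ∧ ∀ h : ℝ, 0 < h → ∀ y z,
      (1 + |y - z| / h) ^ M * ‖weylKernel h a y z‖ ≤ C / h := by
  obtain ⟨C, hC⟩ := exists_one_add_pow_mul_norm_integral_exp_mul_le
    (Φ := fun p : ℝ × ℝ ↦ (a p.swap : ℂ))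
    (ofRealCLM.contDiff.comp (ha.comp (contDiff_snd.prodMk contDiff_fst)))
    ((ha_supp.comp_homeomorph (.prodComm ℝ ℝ)).comp_left ofReal_zero) M
  have hC_nonneg : 0 ≤ C := le_trans (by positivity) (hC 0 0)
  refine ⟨C / (2 * π), by positivity, fun h hh y z ↦ ?_⟩
  have hphase (η : ℝ) : (y - z) * η / h = (y - z) / h * η := by ring
  rw [weylKernel, norm_mul, norm_real, norm_of_nonneg (by positivity)]
  simp only [hphase]
  calc _ = (1 + |(y - z) / h|) ^ M * ‖∫ η, cexp (I * ((y - z) / h * η : ℝ)) *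
          (a ((y + z) / 2, η) : ℂ)‖ * (1 / (2 * π * h)) := by
        rw [abs_div, abs_of_pos hh]
        ring
    _ ≤ C * (1 / (2 * π * h)) := by
        gcongr
        exact hC ((y + z) / 2) ((y - z) / h)
    _ = C / (2 * π) / h := by field_simp

theorem exists_one_add_pow_mul_norm_weylKernel_translate_le (ha : ContDiff ℝ (⊤ : ℕ∞) a)
    (ha_supp : Function.support a ⊆ Metric.closedBall 0 ρ) (M : ℕ) :
    ∃ C, 0 ≤ C ∧ ∀ h : ℝ, 0 < h → h < 1 → ∀ (p : ℝ × ℝ) (y z : ℝ),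
      (1 + |y - z| / h) ^ M * ‖weylKernel h (τ p a) y z‖ ≤
        C / h * (decayWeight (y - p.1) * decayWeight (z - p.1)) ^ 2 := by
  obtain ⟨C, hC_nonneg, hC⟩ := exists_one_add_pow_mul_norm_weylKernel_le ha
    (hasCompactSupport_of_support_subset_closedBall ha_supp) (M + 4)
  refine ⟨(1 + ρ) ^ 4 * C, by positivity, fun h hh hh1 p y z ↦ ?_⟩
  by_cases hne : weylKernel h (τ p a) y z = 0
  · rw [hne, norm_zero, mul_zero]
    positivity
  have hmid := abs_midpoint_sub_le_of_weylKernel_translate_ne_zero ha_supp hne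
  have hρ : 0 ≤ ρ := (abs_nonneg _).trans hmid
  set t := |y - z| / h with ht
  have hyz : |y - z| ≤ t := by rw [ht]; exact le_div_self (abs_nonneg _) hh hh1.le
  have ht_nonneg : 0 ≤ t := (abs_nonneg _).trans hyz
  have hy : |y - p.1 - ((y + z) / 2 - p.1)| ≤ t := by
    rw [show y - p.1 - ((y + z) / 2 - p.1) = (y - z) / 2 by ring, abs_div, abs_two]
    linarith
  have hz : |z - p.1 - ((y + z) / 2 - p.1)| ≤ t := by
    rw [show z - p.1 - ((y + z) / 2 - p.1) = -((y - z) / 2) by ring, abs_neg, abs_div, abs_two]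
    linarith
  set N := ‖weylKernel h (τ p a) y z‖ with hN
  have hCN : (1 + t) ^ (M + 4) * N ≤ C / h := by
    simpa only [hN, ht, norm_weylKernel_translate, sub_sub_sub_cancel_right] using
      hC h hh (y - p.1) (z - p.1)
  calc (1 + t) ^ M * N
      ≤ (1 + t) ^ M * N * (((1 + ρ) * (1 + t) * decayWeight (y - p.1)) *
          ((1 + ρ) * (1 + t) * decayWeight (z - p.1))) ^ 2 :=
        le_mul_of_one_le_right (by positivity)
          (one_le_pow₀ (one_le_mul_of_one_le_of_one_le (one_le_mul_decayWeight hmid hy)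
            (one_le_mul_decayWeight hmid hz)))
    _ = (1 + ρ) ^ 4 * ((1 + t) ^ (M + 4) * N) *
          (decayWeight (y - p.1) * decayWeight (z - p.1)) ^ 2 := by ring
    _ ≤ (1 + ρ) ^ 4 * (C / h) * (decayWeight (y - p.1) * decayWeight (z - p.1)) ^ 2 := by gcongr
    _ = _ := by ring

end WeylKernel

section CompositionKernel

open scoped translate

lemma continuous_translate {G X : Type*} [AddCommGroup G] [TopologicalSpace G]
    [IsTopologicalAddGroup G] [TopologicalSpace X] {f : G → X} (hf : Continuous f) (p : G) :
    Continuous (τ p f) := hf.comp (continuous_sub_right p)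

lemma hasCompactSupport_translate {G X : Type*} [AddCommGroup G] [TopologicalSpace G]
    [IsTopologicalAddGroup G] [Zero X] {f : G → X} (hf : HasCompactSupport f) (p : G) :
    HasCompactSupport (τ p f) := hf.comp_homeomorph (.subRight p)

variable {a b : ℝ × ℝ → ℝ} {ρ : ℝ}

lemma exists_norm_weylKernel_translate_le (ha : ContDiff ℝ (⊤ : ℕ∞) a)
    (ha_supp : Function.support a ⊆ Metric.closedBall 0 ρ) :
    ∃ C, 0 ≤ C ∧ ∀ h : ℝ, 0 < h → h < 1 → ∀ (p : ℝ × ℝ) (y z : ℝ),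
      ‖weylKernel h (τ p a) y z‖ ≤ C / h * decayWeight (y - p.1) * decayWeight (z - p.1) := by
  obtain ⟨C, hC_nonneg, hC⟩ := exists_one_add_pow_mul_norm_weylKernel_translate_le ha ha_supp 0
  refine ⟨C, hC_nonneg, fun h hh hh1 p y z ↦ ?_⟩
  have hy := decayWeight_pos (y - p.1)
  have hz := decayWeight_pos (z - p.1)
  calc ‖weylKernel h (τ p a) y z‖
      ≤ C / h * (decayWeight (y - p.1) * decayWeight (z - p.1)) ^ 2 := by
        simpa only [pow_zero, one_mul] using hC h hh hh1 p y z
    _ ≤ C / h * (decayWeight (y - p.1) * decayWeight (z - p.1)) := by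
        gcongr
        exact pow_le_of_le_one (by positivity)
          (mul_le_one₀ (decayWeight_le_one _) hz.le (decayWeight_le_one _)) two_ne_zero
    _ = _ := by ring

lemma posPart_div_le_of_weylKernel_mul_ne_zero
    (ha : Function.support a ⊆ Metric.closedBall 0 ρ)
    (hb : Function.support b ⊆ Metric.closedBall 0 ρ) {h x y z : ℝ} (hh : 0 < h) {p q : ℝ × ℝ}
    (hne : weylKernel h (τ p a) y x * weylKernel h (τ q b) x z ≠ 0) :
    1 + (|p.1 - q.1| - 2 * ρ)⁺ / h ≤ (1 + |y - x| / h) * (1 + |x - z| / h) := by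
  have hp := abs_le.1 <|
    abs_midpoint_sub_le_of_weylKernel_translate_ne_zero ha (left_ne_zero_of_mul hne)
  have hq := abs_le.1 <|
    abs_midpoint_sub_le_of_weylKernel_translate_ne_zero hb (right_ne_zero_of_mul hne)
  have hpq : (|p.1 - q.1| - 2 * ρ)⁺ ≤ |y - x| + |x - z| := by
    refine sup_le ?_ (by positivity)
    rw [sub_le_iff_le_add, abs_le]
    constructor <;> linarith [abs_le.1 (le_refl |y - x|), abs_le.1 (le_refl |x - z|)]
  calc 1 + (|p.1 - q.1| - 2 * ρ)⁺ / h ≤ 1 + (|y - x| + |x - z|) / h := by gcongr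
    _ ≤ 1 + (|y - x| + |x - z|) / h + |y - x| / h * (|x - z| / h) :=
        le_add_of_nonneg_right (by positivity)
    _ = _ := by ring

lemma exists_fst_decay_weylKernel_mul (ha : ContDiff ℝ (⊤ : ℕ∞) a) (hb : ContDiff ℝ (⊤ : ℕ∞) b)
    (ha_supp : Function.support a ⊆ Metric.closedBall 0 ρ)
    (hb_supp : Function.support b ⊆ Metric.closedBall 0 ρ) (M : ℕ) :
    ∃ C, 0 ≤ C ∧ ∀ h : ℝ, 0 < h → h < 1 → ∀ (p q : ℝ × ℝ) (x y z : ℝ),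
      (1 + (|p.1 - q.1| - 2 * ρ)⁺ / h) ^ M *
          ‖weylKernel h (τ p a) y x * weylKernel h (τ q b) x z‖ ≤
        C / h ^ 2 * (decayWeight (y - p.1) * decayWeight (z - q.1)) ^ 2 *
          decayWeight (x - p.1) ^ 2 := by
  obtain ⟨A, hA_nonneg, hA⟩ := exists_one_add_pow_mul_norm_weylKernel_translate_le ha ha_supp M
  obtain ⟨B, hB_nonneg, hB⟩ := exists_one_add_pow_mul_norm_weylKernel_translate_le hb hb_supp M
  refine ⟨A * B, by positivity, fun h hh hh1 p q x y z ↦ ?_⟩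
  by_cases hne : weylKernel h (τ p a) y x * weylKernel h (τ q b) x z = 0
  · rw [hne, norm_zero, mul_zero]
    positivity
  have hxq : decayWeight (x - q.1) ^ 2 ≤ 1 :=
    pow_le_one₀ (decayWeight_pos _).le (decayWeight_le_one _)
  rw [norm_mul]
  calc (1 + (|p.1 - q.1| - 2 * ρ)⁺ / h) ^ M *
        (‖weylKernel h (τ p a) y x‖ * ‖weylKernel h (τ q b) x z‖)
      ≤ ((1 + |y - x| / h) * (1 + |x - z| / h)) ^ M *
          (‖weylKernel h (τ p a) y x‖ * ‖weylKernel h (τ q b) x z‖) := by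
        gcongr
        exact posPart_div_le_of_weylKernel_mul_ne_zero ha_supp hb_supp hh hne
    _ = ((1 + |y - x| / h) ^ M * ‖weylKernel h (τ p a) y x‖) *
          ((1 + |x - z| / h) ^ M * ‖weylKernel h (τ q b) x z‖) := by rw [mul_pow]; ring
    _ ≤ (A / h * (decayWeight (y - p.1) * decayWeight (x - p.1)) ^ 2) *
          (B / h * (decayWeight (x - q.1) * decayWeight (z - q.1)) ^ 2) :=
        mul_le_mul (hA h hh hh1 p y x) (hB h hh hh1 q x z) (by positivity) (by positivity)
    _ = A * B / h ^ 2 * (decayWeight (y - p.1) * decayWeight (z - q.1)) ^ 2 *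
          decayWeight (x - p.1) ^ 2 * decayWeight (x - q.1) ^ 2 := by ring
    _ ≤ A * B / h ^ 2 * (decayWeight (y - p.1) * decayWeight (z - q.1)) ^ 2 *
          decayWeight (x - p.1) ^ 2 := mul_le_of_le_one_right (by positivity) hxq

theorem exists_fst_decay_kernelComp (ha : ContDiff ℝ (⊤ : ℕ∞) a) (hb : ContDiff ℝ (⊤ : ℕ∞) b)
    (ha_supp : Function.support a ⊆ Metric.closedBall 0 ρ)
    (hb_supp : Function.support b ⊆ Metric.closedBall 0 ρ) (M : ℕ) :
    ∃ C, 0 ≤ C ∧ ∀ h : ℝ, 0 < h → h < 1 → ∀ (p q : ℝ × ℝ) (y z : ℝ),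
      (1 + (|p.1 - q.1| - 2 * ρ)⁺ / h) ^ M *
          ‖kernelComp volume (weylKernel h (τ p a)) (weylKernel h (τ q b)) y z‖ ≤
        C / h ^ 2 * (decayWeight (y - p.1) * decayWeight (z - q.1)) ^ 2 := by
  obtain ⟨C, hC_nonneg, hC⟩ := exists_fst_decay_weylKernel_mul ha hb ha_supp hb_supp M
  refine ⟨C * ∫ x, decayWeight x ^ 2, by positivity, fun h hh hh1 p q y z ↦ ?_⟩
  set W := C / h ^ 2 * (decayWeight (y - p.1) * decayWeight (z - q.1)) ^ 2
  have hΛ : ‖(1 + (|p.1 - q.1| - 2 * ρ)⁺ / h) ^ M‖ = (1 + (|p.1 - q.1| - 2 * ρ)⁺ / h) ^ M :=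
    norm_of_nonneg (by positivity)
  rw [← hΛ, ← norm_smul, kernelComp, ← integral_smul]
  calc _ ≤ ∫ x, W * decayWeight (x - p.1) ^ 2 := by
        refine norm_integral_le_of_norm_le
          ((memLp_decayWeight_sub p.1).integrable_sq.const_mul W) (.of_forall fun x ↦ ?_)
        rw [norm_smul, hΛ]
        exact hC h hh hh1 p q x y z
    _ = W * ∫ x, decayWeight x ^ 2 := by
        rw [integral_const_mul, integral_sub_right_eq_self (fun x ↦ decayWeight x ^ 2)]
    _ = _ := by ring

/-- The integrand of `kernelComp volume (weylKernel h a) (weylKernel h b) y z`, up to the factor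
`(2πh)⁻²`, as a function of the intermediate position `x` and the two momenta `v`. -/
def weylCompIntegrand (h : ℝ) (a b : ℝ × ℝ → ℝ) (y z x : ℝ) (v : ℝ × ℝ) : ℂ :=
  cexp (I * ((y - x) * v.1 / h : ℝ)) * a ((y + x) / 2, v.1) *
    (cexp (I * ((x - z) * v.2 / h : ℝ)) * b ((x + z) / 2, v.2))

lemma integrable_uncurry_weylCompIntegrand (h : ℝ) (ha : Continuous a) (hb : Continuous b)
    (ha_supp : HasCompactSupport a) (hb_supp : HasCompactSupport b) (y z : ℝ) :
    Integrable (Function.uncurry (weylCompIntegrand h a b y z)) (volume.prod volume) := by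
  obtain ⟨R, hR⟩ := (ha_supp.isCompact.union hb_supp.isCompact).isBounded.subset_closedBall 0
  have ha_ball := (subset_tsupport a).trans (Set.subset_union_left.trans hR)
  have hb_ball := (subset_tsupport b).trans (Set.subset_union_right.trans hR)
  refine Continuous.integrable_of_hasCompactSupport ?_ <|
    .of_support_subset_isCompact (isCompact_closedBall 0 (2 * R + |y|)) fun ⟨x, v⟩ hne ↦ ?_
  · unfold weylCompIntegrand
    simp only [Function.uncurry_def]
    fun_prop
  · have hne' : weylCompIntegrand h a b y z x v ≠ 0 := hne
    have ha' := abs_le_and_abs_le_of_ne_zero ha_ball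
      (ofReal_ne_zero.1 (right_ne_zero_of_mul (left_ne_zero_of_mul hne')))
    have hb' := abs_le_and_abs_le_of_ne_zero hb_ball
      (ofReal_ne_zero.1 (right_ne_zero_of_mul (right_ne_zero_of_mul hne')))
    have hR_nonneg := (abs_nonneg _).trans ha'.2
    have hx : |x| ≤ 2 * R + |y| := by
      rw [abs_le]
      constructor <;> linarith [abs_le.1 ha'.1, abs_le.1 (le_refl |y|)]
    rw [mem_closedBall_zero_iff]
    have hR_le : R ≤ 2 * R + |y| := by linarith [abs_nonneg y]
    exact max_le hx (max_le (ha'.2.trans hR_le) (hb'.2.trans hR_le))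

lemma kernelComp_weylKernel (h : ℝ) (ha : Continuous a) (hb : Continuous b)
    (ha_supp : HasCompactSupport a) (hb_supp : HasCompactSupport b) (y z : ℝ) :
    kernelComp volume (weylKernel h a) (weylKernel h b) y z =
      ((1 / (2 * π * h) : ℝ) : ℂ) ^ 2 * ∫ v, ∫ x, weylCompIntegrand h a b y z x v := by
  rw [← integral_integral_swap (integrable_uncurry_weylCompIntegrand h ha hb ha_supp hb_supp y z),
    ← integral_const_mul]
  refine integral_congr_ae (.of_forall fun x ↦ ?_)
  simp only [weylKernel, weylCompIntegrand]
  rw [Measure.volume_eq_prod,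
    integral_prod_mul (fun η ↦ cexp (I * ((y - x) * η / h : ℝ)) * (a ((y + x) / 2, η) : ℂ))
      (fun η ↦ cexp (I * ((x - z) * η / h : ℝ)) * (b ((x + z) / 2, η) : ℂ))]
  ring

lemma norm_integral_weylCompIntegrand_translate (h : ℝ) (a b : ℝ × ℝ → ℝ) (p q : ℝ × ℝ) (y z : ℝ)
    (v : ℝ × ℝ) :
    ‖∫ x, weylCompIntegrand h (τ p a) (τ q b) y z x v‖ =
      ‖∫ s, cexp (I * ((v.2 - v.1) / h * s : ℝ)) * ((a (s / 2, v.1 - p.2) *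
        b (s / 2 + ((z - y) / 2 + p.1 - q.1), v.2 - q.2) : ℝ) : ℂ)‖ := by
  have hphase (s : ℝ) : weylCompIntegrand h (τ p a) (τ q b) y z (s + (2 * p.1 - y)) v =
      cexp (I * (((2 * y - 2 * p.1) * v.1 + (2 * p.1 - y - z) * v.2) / h : ℝ)) *
        (cexp (I * ((v.2 - v.1) / h * s : ℝ)) * ((a (s / 2, v.1 - p.2) *
          b (s / 2 + ((z - y) / 2 + p.1 - q.1), v.2 - q.2) : ℝ) : ℂ)) := by
    have ha : ((y + (s + (2 * p.1 - y))) / 2, v.1) - p = (s / 2, v.1 - p.2) := by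
      ext
      · simp only [Prod.fst_sub]
        ring
      · rfl
    have hb : ((s + (2 * p.1 - y) + z) / 2, v.2) - q =
        (s / 2 + ((z - y) / 2 + p.1 - q.1), v.2 - q.2) := by
      ext
      · simp only [Prod.fst_sub]
        ring
      · rfl
    rw [weylCompIntegrand, translate_apply, translate_apply, ha, hb, mul_mul_mul_comm,
      ← Complex.exp_add, ← mul_assoc (cexp _) (cexp _), ← Complex.exp_add, ofReal_mul (a _)]
    congr 2
    push_cast
    ring
  rw [← integral_add_right_eq_self _ (2 * p.1 - y)]
  simp only [hphase]
  rw [integral_const_mul, norm_mul, norm_exp_I_mul_ofReal, one_mul]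

lemma weylCompIntegrand_translate_eq_zero (ha : Function.support a ⊆ Metric.closedBall 0 ρ)
    (hb : Function.support b ⊆ Metric.closedBall 0 ρ) {p q v : ℝ × ℝ}
    (hv : v ∉ Metric.closedBall (p.2, q.2) ρ) (h x y z : ℝ) :
    weylCompIntegrand h (τ p a) (τ q b) y z x v = 0 := by
  contrapose! hv
  have ha' := abs_le_and_abs_le_of_ne_zero ha
    (ofReal_ne_zero.1 (right_ne_zero_of_mul (left_ne_zero_of_mul hv)))
  have hb' := abs_le_and_abs_le_of_ne_zero hb
    (ofReal_ne_zero.1 (right_ne_zero_of_mul (right_ne_zero_of_mul hv)))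
  exact mem_closedBall_iff_norm.2 (max_le ha'.2 hb'.2)

lemma exists_snd_decay_integral_weylCompIntegrand (ha : ContDiff ℝ (⊤ : ℕ∞) a)
    (hb : ContDiff ℝ (⊤ : ℕ∞) b) (ha_supp : Function.support a ⊆ Metric.closedBall 0 ρ)
    (hb_supp : Function.support b ⊆ Metric.closedBall 0 ρ) (M : ℕ) :
    ∃ C, ∀ h : ℝ, 0 < h → ∀ (p q : ℝ × ℝ) (y z : ℝ), ∀ v ∈ Metric.closedBall (p.2, q.2) ρ,
      (1 + (|p.2 - q.2| - 2 * ρ)⁺ / h) ^ M *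
        ‖∫ x, weylCompIntegrand h (τ p a) (τ q b) y z x v‖ ≤ C := by
  have hsmooth : ContDiff ℝ (⊤ : ℕ∞) fun e : ℝ × ℝ × ℝ × ℝ ↦
      ((a (e.1 / 2, e.2.2.1) * b (e.1 / 2 + e.2.1, e.2.2.2) : ℝ) : ℂ) :=
    ofRealCLM.contDiff.comp ((ha.comp (by fun_prop)).mul (hb.comp (by fun_prop)))
  have hsupp : HasCompactSupport fun e : ℝ × ℝ × ℝ × ℝ ↦
      ((a (e.1 / 2, e.2.2.1) * b (e.1 / 2 + e.2.1, e.2.2.2) : ℝ) : ℂ) := by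
    refine .of_support_subset_isCompact (isCompact_closedBall 0 (2 * ρ)) fun e hne ↦ ?_
    have hne' := ofReal_ne_zero.1 hne
    have ha' := abs_le_and_abs_le_of_ne_zero ha_supp (left_ne_zero_of_mul hne')
    have hb' := abs_le_and_abs_le_of_ne_zero hb_supp (right_ne_zero_of_mul hne')
    simp only [abs_le] at ha' hb'
    rw [mem_closedBall_zero_iff]
    refine max_le ?_ (max_le ?_ (max_le ?_ ?_)) <;> refine abs_le.2 ?_ <;>
      constructor <;> linarith
  obtain ⟨C, hC⟩ := exists_one_add_pow_mul_norm_integral_exp_mul_le hsmooth hsupp M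
  refine ⟨C, fun h hh p q y z v hv ↦ ?_⟩
  have hv' := max_le_iff.1 (mem_closedBall_iff_norm.1 hv)
  have hfreq : (|p.2 - q.2| - 2 * ρ)⁺ / h ≤ |(v.2 - v.1) / h| := by
    rw [abs_div, abs_of_pos hh]
    gcongr
    refine sup_le ?_ (abs_nonneg _)
    simp only [Prod.fst_sub, Prod.snd_sub, Real.norm_eq_abs, abs_le] at hv'
    rw [sub_le_iff_le_add, abs_le]
    constructor <;> linarith [abs_le.1 (le_refl |v.2 - v.1|)]
  rw [norm_integral_weylCompIntegrand_translate]
  refine le_trans ?_ (hC ((z - y) / 2 + p.1 - q.1, v.1 - p.2, v.2 - q.2) ((v.2 - v.1) / h))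
  gcongr

lemma exists_snd_decay_integral_integral_weylCompIntegrand (ha : ContDiff ℝ (⊤ : ℕ∞) a)
    (hb : ContDiff ℝ (⊤ : ℕ∞) b) (ha_supp : Function.support a ⊆ Metric.closedBall 0 ρ)
    (hb_supp : Function.support b ⊆ Metric.closedBall 0 ρ) (M : ℕ) :
    ∃ C, ∀ h : ℝ, 0 < h → ∀ (p q : ℝ × ℝ) (y z : ℝ),
      (1 + (|p.2 - q.2| - 2 * ρ)⁺ / h) ^ M *
        ‖∫ v, ∫ x, weylCompIntegrand h (τ p a) (τ q b) y z x v‖ ≤ C := by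
  obtain ⟨C, hC⟩ := exists_snd_decay_integral_weylCompIntegrand ha hb ha_supp hb_supp M
  refine ⟨C * volume.real (Metric.closedBall (0 : ℝ × ℝ) ρ), fun h hh p q y z ↦ ?_⟩
  set Λ := (1 + (|p.2 - q.2| - 2 * ρ)⁺ / h) ^ M
  have hΛ : ‖Λ‖ = Λ := norm_of_nonneg (by positivity)
  rw [← setIntegral_eq_integral_of_forall_compl_eq_zero
    (s := Metric.closedBall (p.2, q.2) ρ) fun v hv ↦ by
      simp only [weylCompIntegrand_translate_eq_zero ha_supp hb_supp hv, integral_zero],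
    ← hΛ, ← norm_smul, ← integral_smul, ← Measure.addHaar_real_closedBall_center _ (p.2, q.2)]
  refine norm_setIntegral_le_of_norm_le_const measure_closedBall_lt_top fun v hv ↦ ?_
  rw [norm_smul, hΛ]
  exact hC h hh p q y z v hv

theorem exists_snd_decay_kernelComp (ha : ContDiff ℝ (⊤ : ℕ∞) a) (hb : ContDiff ℝ (⊤ : ℕ∞) b)
    (ha_supp : Function.support a ⊆ Metric.closedBall 0 ρ)
    (hb_supp : Function.support b ⊆ Metric.closedBall 0 ρ) (M : ℕ) :
    ∃ C, ∀ h : ℝ, 0 < h → ∀ (p q : ℝ × ℝ) (y z : ℝ),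
      (1 + (|p.2 - q.2| - 2 * ρ)⁺ / h) ^ M *
          ‖kernelComp volume (weylKernel h (τ p a)) (weylKernel h (τ q b)) y z‖ ≤
        C / h ^ 2 := by
  obtain ⟨C, hC⟩ := exists_snd_decay_integral_integral_weylCompIntegrand ha hb ha_supp hb_supp M
  refine ⟨C / (2 * π) ^ 2, fun h hh p q y z ↦ ?_⟩
  have ha_cpt := hasCompactSupport_of_support_subset_closedBall ha_supp
  have hb_cpt := hasCompactSupport_of_support_subset_closedBall hb_supp
  rw [kernelComp_weylKernel h (continuous_translate ha.continuous p)
    (continuous_translate hb.continuous q) (hasCompactSupport_translate ha_cpt p)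
    (hasCompactSupport_translate hb_cpt q), norm_mul, norm_pow, norm_real,
    norm_of_nonneg (by positivity)]
  calc _ = (1 + (|p.2 - q.2| - 2 * ρ)⁺ / h) ^ M *
          ‖∫ v, ∫ x, weylCompIntegrand h (τ p a) (τ q b) y z x v‖ * (1 / (2 * π * h)) ^ 2 := by
        ring
    _ ≤ C * (1 / (2 * π * h)) ^ 2 := by
        gcongr
        exact hC h hh p q y z
    _ = _ := by field_simp

theorem exists_decay_kernelComp (ha : ContDiff ℝ (⊤ : ℕ∞) a) (hb : ContDiff ℝ (⊤ : ℕ∞) b)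
    (ha_supp : Function.support a ⊆ Metric.closedBall 0 ρ)
    (hb_supp : Function.support b ⊆ Metric.closedBall 0 ρ) (M : ℕ) :
    ∃ C, 0 ≤ C ∧ ∀ h : ℝ, 0 < h → h < 1 → ∀ (p q : ℝ × ℝ) (y z : ℝ),
      (1 + (‖p - q‖ - 2 * ρ)⁺ / h) ^ M *
          ‖kernelComp volume (weylKernel h (τ p a)) (weylKernel h (τ q b)) y z‖ ≤
        C / h ^ 2 * (decayWeight (y - p.1) * decayWeight (z - q.1)) := by
  obtain ⟨B, hB_nonneg, hB⟩ := exists_fst_decay_kernelComp ha hb ha_supp hb_supp 0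
  obtain ⟨C₁, hC₁_nonneg, hC₁⟩ := exists_fst_decay_kernelComp ha hb ha_supp hb_supp (2 * M)
  obtain ⟨C₂, hC₂⟩ := exists_snd_decay_kernelComp ha hb ha_supp hb_supp (2 * M)
  refine ⟨√(max C₁ C₂ * B), by positivity, fun h hh hh1 p q y z ↦ ?_⟩
  set K := ‖kernelComp volume (weylKernel h (τ p a)) (weylKernel h (τ q b)) y z‖
  set w := decayWeight (y - p.1) * decayWeight (z - q.1)
  have hw : 0 ≤ w := mul_nonneg (decayWeight_pos _).le (decayWeight_pos _).le
  have hw1 : w ≤ 1 :=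
    mul_le_one₀ (decayWeight_le_one _) (decayWeight_pos _).le (decayWeight_le_one _)
  have hK_weight : K ≤ B / h ^ 2 * w ^ 2 := by
    simpa only [pow_zero, one_mul] using hB h hh hh1 p q y z
  have hK_dist : (1 + (‖p - q‖ - 2 * ρ)⁺ / h) ^ (2 * M) * K ≤ max C₁ C₂ / h ^ 2 := by
    have hpq : ‖p - q‖ = |p.1 - q.1| ∨ ‖p - q‖ = |p.2 - q.2| := max_choice _ _
    rcases hpq with hpq | hpq <;> rw [hpq]
    · calc _ ≤ C₁ / h ^ 2 * w ^ 2 := hC₁ h hh hh1 p q y z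
        _ ≤ C₁ / h ^ 2 := mul_le_of_le_one_right (by positivity) (pow_le_one₀ hw hw1)
        _ ≤ max C₁ C₂ / h ^ 2 := by gcongr; exact le_max_left _ _
    · calc _ ≤ C₂ / h ^ 2 := hC₂ h hh p q y z
        _ ≤ max C₁ C₂ / h ^ 2 := by gcongr; exact le_max_right _ _
  -- The decay in `‖p - q‖` and the decay in `y, z` are combined by taking a geometric mean.
  refine le_of_sq_le_sq ?_ (by positivity)
  calc ((1 + (‖p - q‖ - 2 * ρ)⁺ / h) ^ M * K) ^ 2
      = (1 + (‖p - q‖ - 2 * ρ)⁺ / h) ^ (2 * M) * K * K := by ring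
    _ ≤ max C₁ C₂ / h ^ 2 * (B / h ^ 2 * w ^ 2) := by gcongr
    _ = (√(max C₁ C₂ * B) / h ^ 2 * w) ^ 2 := by
        rw [mul_pow _ w, div_pow, Real.sq_sqrt (by positivity)]
        ring

theorem exists_decay_norm_mul (ha : ContDiff ℝ (⊤ : ℕ∞) a) (hb : ContDiff ℝ (⊤ : ℕ∞) b)
    (ha_supp : Function.support a ⊆ Metric.closedBall 0 ρ)
    (hb_supp : Function.support b ⊆ Metric.closedBall 0 ρ) (M : ℕ) :
    ∃ C, 0 ≤ C ∧ ∀ h : ℝ, 0 < h → h < 1 → ∀ (p q : ℝ × ℝ) (S T : L2R →L[ℂ] L2R),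
      HasKernel S (weylKernel h (τ p a)) → HasKernel T (weylKernel h (τ q b)) →
        (1 + (‖p - q‖ - 2 * ρ)⁺ / h) ^ M * ‖S * T‖ ≤ C / h ^ 2 := by
  obtain ⟨A, -, hA⟩ := exists_norm_weylKernel_translate_le ha ha_supp
  obtain ⟨B, -, hB⟩ := exists_norm_weylKernel_translate_le hb hb_supp
  obtain ⟨C, hC_nonneg, hC⟩ := exists_decay_kernelComp ha hb ha_supp hb_supp M
  refine ⟨C * ‖memLp_decayWeight.toLp _‖ ^ 2, by positivity, fun h hh hh1 p q S T hS hT ↦ ?_⟩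
  set Λ := (1 + (‖p - q‖ - 2 * ρ)⁺ / h) ^ M
  have hΛ : 0 < Λ := by positivity
  have hST := hS.mul hT
    (stronglyMeasurable_uncurry_weylKernel h (continuous_translate ha.continuous p))
    (stronglyMeasurable_uncurry_weylKernel h (continuous_translate hb.continuous q))
    (memLp_decayWeight_sub p.1) ((memLp_decayWeight_sub q.1).const_mul (B / h))
    (memLp_decayWeight_sub q.1) (hA h hh hh1 p) (hB h hh hh1 q)
  have hnorm := hST.norm_le ((memLp_decayWeight_sub p.1).const_smul (C / h ^ 2 / Λ))
    (memLp_decayWeight_sub q.1) fun y z ↦ by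
      rw [Pi.smul_apply, smul_eq_mul, mul_assoc, div_mul_eq_mul_div, le_div_iff₀' hΛ]
      exact hC h hh hh1 p q y z
  rw [MemLp.toLp_const_smul _ (memLp_decayWeight_sub p.1), norm_smul,
    norm_of_nonneg (by positivity), norm_toLp_decayWeight_sub,
    norm_toLp_decayWeight_sub] at hnorm
  rw [← le_div_iff₀' hΛ]
  exact hnorm.trans_eq (by ring)

lemma isSelfAdjoint_of_hasKernel_weylKernel_translate (ha : ContDiff ℝ (⊤ : ℕ∞) a)
    (ha_supp : Function.support a ⊆ Metric.closedBall 0 ρ) {h : ℝ} (hh : 0 < h) (hh1 : h < 1)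
    {p : ℝ × ℝ} {T : L2R →L[ℂ] L2R} (hT : HasKernel T (weylKernel h (τ p a))) :
    IsSelfAdjoint T := by
  obtain ⟨C, -, hC⟩ := exists_norm_weylKernel_translate_le ha ha_supp
  exact hT.isSelfAdjoint
    (stronglyMeasurable_uncurry_weylKernel h (continuous_translate ha.continuous p))
    (star_weylKernel h _) ((memLp_decayWeight_sub p.1).const_mul (C / h))
    (memLp_decayWeight_sub p.1) (hC h hh hh1 p)

theorem exists_sqrt_norm_mul_le (ha : ContDiff ℝ (⊤ : ℕ∞) a) (hb : ContDiff ℝ (⊤ : ℕ∞) b)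
    (ha_supp : Function.support a ⊆ Metric.closedBall 0 ρ)
    (hb_supp : Function.support b ⊆ Metric.closedBall 0 ρ) (hρ_nonneg : 0 ≤ ρ)
    (hρ : ρ < 1 / 2) (m : ℕ) :
    ∃ C, 0 ≤ C ∧ ∀ h : ℝ, 0 < h → h < 1 → ∀ (p q : ℝ × ℝ) (S T : L2R →L[ℂ] L2R),
      1 ≤ ‖p - q‖ → HasKernel S (weylKernel h (τ p a)) → HasKernel T (weylKernel h (τ q b)) →
        √‖S * T‖ ≤ C * h ^ m * (‖p - q‖ ^ 3)⁻¹ := by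
  obtain ⟨C, hC_nonneg, hC⟩ := exists_decay_norm_mul ha hb ha_supp hb_supp (2 * (m + 3))
  have hc : 0 < 1 - 2 * ρ := by linarith
  refine ⟨√C / (1 - 2 * ρ) ^ (m + 3), by positivity, fun h hh hh1 p q S T hpq hS hT ↦ ?_⟩
  set d := ‖p - q‖
  have hgap : (1 - 2 * ρ) * d / h ≤ 1 + (d - 2 * ρ)⁺ / h := by
    have : (1 - 2 * ρ) * d ≤ (d - 2 * ρ)⁺ := le_sup_of_le_left (by nlinarith)
    calc (1 - 2 * ρ) * d / h ≤ (d - 2 * ρ)⁺ / h := by gcongr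
      _ ≤ 1 + (d - 2 * ρ)⁺ / h := by linarith
  have hnorm : ‖S * T‖ ≤ (√C / h / ((1 - 2 * ρ) * d / h) ^ (m + 3)) ^ 2 := by
    rw [div_pow, ← pow_mul, mul_comm (m + 3), div_pow, Real.sq_sqrt hC_nonneg,
      le_div_iff₀' (by positivity)]
    refine le_trans ?_ (hC h hh hh1 p q S T hS hT)
    gcongr
  calc √‖S * T‖ ≤ √C / h / ((1 - 2 * ρ) * d / h) ^ (m + 3) :=
        Real.sqrt_le_iff.2 ⟨by positivity, hnorm⟩
    _ = √C / (1 - 2 * ρ) ^ (m + 3) * h ^ (m + 2) * (d ^ (m + 3))⁻¹ := by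
        rw [div_pow, mul_pow]
        field_simp
        ring
    _ ≤ √C / (1 - 2 * ρ) ^ (m + 3) * h ^ m * (d ^ 3)⁻¹ := by
        gcongr √C / (1 - 2 * ρ) ^ (m + 3) * ?_ * (?_)⁻¹
        · exact pow_le_pow_of_le_one hh.le hh1.le (by omega)
        · exact pow_le_pow_right₀ hpq (by omega)

end CompositionKernel

section Lattice

open scoped translate

lemma summable_inv_norm_cube_int_prod : Summable fun d : ℤ × ℤ ↦ (‖d‖ ^ 3)⁻¹ := by
  have h := EisensteinSeries.summable_one_div_norm_rpow (k := 3) (by norm_num)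
  rw [← (finTwoArrowEquiv ℤ).symm.summable_iff] at h
  refine h.congr fun d ↦ ?_
  have hnorm : ‖![d.1, d.2]‖ = ‖d‖ := by
    rw [EisensteinSeries.norm_eq_max_natAbs, Prod.norm_def, Int.norm_eq_abs, Int.norm_eq_abs]
    push_cast [Nat.cast_natAbs]
    rfl
  rw [Function.comp_apply, finTwoArrowEquiv_symm_apply]
  beta_reduce
  rw [hnorm, Real.rpow_neg (norm_nonneg _)]
  norm_cast

lemma sum_inv_norm_sub_cube_le_tsum (s : Finset (ℤ × ℤ)) (j : ℤ × ℤ) :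
    ∑ k ∈ s, (‖j - k‖ ^ 3)⁻¹ ≤ ∑' d : ℤ × ℤ, (‖d‖ ^ 3)⁻¹ := by
  rw [← (Equiv.subLeft j).tsum_eq]
  exact ((Equiv.subLeft j).summable_iff.2 summable_inv_norm_cube_int_prod).sum_le_tsum s
    fun _ _ ↦ by positivity

lemma one_le_norm_sub_of_ne {j k : ℤ × ℤ} (hjk : j ≠ k) : 1 ≤ ‖j - k‖ := by
  have hint {m n : ℤ} (hmn : m ≠ n) : 1 ≤ ‖m - n‖ := by
    rw [Int.norm_eq_abs]
    exact_mod_cast Int.one_le_abs (sub_ne_zero.2 hmn)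
  rcases ne_or_eq j.1 k.1 with h1 | h1
  · exact (hint h1).trans (le_max_left _ _)
  · exact (hint fun h2 ↦ hjk (Prod.ext h1 h2)).trans (le_max_right _ _)

lemma exists_subset_closedBall_of_subset_box {s : Set (ℝ × ℝ)} (hs : IsClosed s)
    (hbox : s ⊆ Set.Ioo (-(1 / 2) : ℝ) (1 / 2) ×ˢ Set.Ioo (-(1 / 2) : ℝ) (1 / 2)) :
    ∃ ρ, 0 ≤ ρ ∧ ρ < 1 / 2 ∧ s ⊆ Metric.closedBall 0 ρ := by
  have hball : s ⊆ Metric.ball 0 (1 / 2) := by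
    rwa [← Prod.mk_zero_zero, ← ball_prod_same, Real.ball_zero_eq_Ioo]
  obtain ⟨ρ, hρ, hsρ⟩ := exists_pos_lt_subset_ball one_half_pos hs hball
  exact ⟨ρ, hρ.1.le, hρ.2, hsρ.trans Metric.ball_subset_closedBall⟩

variable {a : ℝ × ℝ → ℝ}

lemma exists_sum_sqrt_norm_mul_le (ha : ContDiff ℝ (⊤ : ℕ∞) a)
    (ha_supp : tsupport a ⊆ Set.Ioo (-(1 / 2) : ℝ) (1 / 2) ×ˢ Set.Ioo (-(1 / 2) : ℝ) (1 / 2))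
    (m : ℕ) :
    ∃ C, 0 ≤ C ∧ ∀ h : ℝ, 0 < h → h < 1 → ∀ (Λ : Finset (ℤ × ℤ)) (T : ℤ × ℤ → (L2R →L[ℂ] L2R)),
      (∀ j ∈ Λ, IsWeylQuant h (shiftSymbol a j) (T j)) →
        ∀ j ∈ Λ, ∑ k ∈ Λ.erase j, √‖T j * T k‖ ≤ C * h ^ m := by
  obtain ⟨ρ, hρ_nonneg, hρ, hρ_supp⟩ :=
    exists_subset_closedBall_of_subset_box (isClosed_tsupport a) ha_supp
  have hsupp := (subset_tsupport a).trans hρ_supp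
  obtain ⟨C, hC_nonneg, hC⟩ := exists_sqrt_norm_mul_le ha ha hsupp hsupp hρ_nonneg hρ m
  refine ⟨C * ∑' d : ℤ × ℤ, (‖d‖ ^ 3)⁻¹, by positivity, fun h hh hh1 Λ T hT j hj ↦ ?_⟩
  let P (j : ℤ × ℤ) : ℝ × ℝ := (j.1, j.2)
  have hP (k : ℤ × ℤ) : ‖P j - P k‖ = ‖j - k‖ := by
    simp only [P, Prod.norm_def, Prod.fst_sub, Prod.snd_sub, ← Int.norm_cast_real, Int.cast_sub]
  calc ∑ k ∈ Λ.erase j, √‖T j * T k‖ ≤ ∑ k ∈ Λ.erase j, C * h ^ m * (‖j - k‖ ^ 3)⁻¹ := by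
        refine Finset.sum_le_sum fun k hk ↦ ?_
        rw [← hP]
        exact hC h hh hh1 (P j) (P k) (T j) (T k)
          ((one_le_norm_sub_of_ne (Finset.ne_of_mem_erase hk).symm).trans_eq (hP k).symm)
          (hT j hj) (hT k (Finset.mem_of_mem_erase hk))
    _ = C * h ^ m * ∑ k ∈ Λ.erase j, (‖j - k‖ ^ 3)⁻¹ := by rw [Finset.mul_sum]
    _ ≤ C * h ^ m * ∑' d : ℤ × ℤ, (‖d‖ ^ 3)⁻¹ := by
        gcongr
        exact sum_inv_norm_sub_cube_le_tsum _ j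
    _ = _ := by ring

end Lattice

lemma exists_rapidDecay_of_forall_le_mul_pow {C : ℕ → ℝ} (hC : ∀ m, 0 ≤ C m) :
    ∃ r : ℝ → ℝ, (∀ h, 0 < h → 0 ≤ r h) ∧
      (∀ N : ℝ, ∃ B, ∀ h, 0 < h → h < 1 → r h ≤ B * h ^ N) ∧
      ∀ h x : ℝ, (∀ m, x ≤ C m * h ^ m) → x ≤ r h := by
  refine ⟨fun h ↦ ⨅ m, C m * h ^ m, fun h hh ↦ ?_, fun N ↦ ?_, fun h x hx ↦ le_ciInf hx⟩
  · exact Real.iInf_nonneg fun m ↦ mul_nonneg (hC m) (by positivity)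
  · obtain ⟨m, hm⟩ := exists_nat_ge N
    refine ⟨C m, fun h hh hh1 ↦ ?_⟩
    have hbdd : BddBelow (Set.range fun m ↦ C m * h ^ m) :=
      ⟨0, Set.forall_mem_range.2 fun m ↦ mul_nonneg (hC m) (by positivity)⟩
    calc ⨅ m, C m * h ^ m ≤ C m * h ^ m := ciInf_le hbdd m
      _ ≤ C m * h ^ N := by
        rw [← Real.rpow_natCast]
        exact mul_le_mul_of_nonneg_left (Real.rpow_le_rpow_of_exponent_ge hh hh1.le hm) (hC m)

theorem weyl_sum_spectral_gap_general (a₀ : ℝ × ℝ → ℝ) (ha_smooth : ContDiff ℝ (⊤ : ℕ∞) a₀)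
    (ha_supp : tsupport a₀ ⊆ Set.Ioo (-(1 / 2) : ℝ) (1 / 2) ×ˢ Set.Ioo (-(1 / 2) : ℝ) (1 / 2)) :
    ∃ r : ℝ → ℝ,
      (∀ h : ℝ, 0 < h → 0 ≤ r h) ∧
      (∀ N : ℝ, ∃ C : ℝ, ∀ h : ℝ, 0 < h → h < 1 → r h ≤ C * h ^ N) ∧
      ∀ (Λ : Finset (ℤ × ℤ)) (μ h : ℝ), μ ≠ 0 → 0 < h → h < 1 →
        ∀ T : ℤ × ℤ → (L2R →L[ℂ] L2R),
          (∀ j ∈ Λ, IsWeylQuant h (shiftSymbol a₀ j) (T j)) →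
          (∀ j ∈ Λ, ∀ ν ∈ Set.Icc (μ - r h) (μ + r h), (ν : ℂ) ∉ spectrum ℂ (T j)) →
          (μ : ℂ) ∉ spectrum ℂ (∑ j ∈ Λ, T j) := by
  choose C hC_nonneg hC using exists_sum_sqrt_norm_mul_le ha_smooth ha_supp
  obtain ⟨r, hr_nonneg, hr_decay, hr⟩ := exists_rapidDecay_of_forall_le_mul_pow hC_nonneg
  refine ⟨r, hr_nonneg, hr_decay, fun Λ μ h hμ hh hh1 T hT hgap hmem ↦ ?_⟩
  obtain ⟨ρ, -, -, hρ⟩ := exists_subset_closedBall_of_subset_box (isClosed_tsupport a₀) ha_supp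
  have hsa : ∀ j ∈ Λ, IsSelfAdjoint (T j) := fun j hj ↦
    isSelfAdjoint_of_hasKernel_weylKernel_translate ha_smooth ((subset_tsupport a₀).trans hρ)
      hh hh1 (p := (j.1, j.2)) (hT j hj)
  obtain ⟨j, hj, ν, hν, hνμ⟩ := exists_abs_sub_le_of_mem_spectrum_finsetSum hsa hμ hmem
  have hdist : |ν - μ| ≤ r h := hνμ.trans (hr h _ fun m ↦ hC m h hh hh1 Λ T hT j hj)
  obtain ⟨hle, hge⟩ := abs_sub_le_iff.1 hdist
  exact hgap j hj ν ⟨by linarith, by linarith⟩ hν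

theorem weyl_sum_spectral_gap
    (a₀ : ℝ × ℝ → ℝ)
    (ha_smooth : ContDiff ℝ (⊤ : ℕ∞) a₀) (ha_supp : HasCompactSupport a₀)
    (ha_supp' : tsupport a₀ ⊆
      Set.Ioo (-(1/2) : ℝ) (1/2) ×ˢ Set.Ioo (-(1/2) : ℝ) (1/2))
    (b₀ : ℝ) (hb₀ : 0 < b₀) :
    ∃ r : ℝ → ℝ,
      (∀ h : ℝ, 0 < h → h < 1 → 0 ≤ r h) ∧
      (∀ N : ℝ, 0 < N → ∃ C : ℝ, ∀ h : ℝ, 0 < h → h < 1 → r h ≤ C * h ^ N) ∧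
      ∀ (Λ : Finset (ℤ × ℤ)) (μ₀ δ h : ℝ),
        b₀ ≤ μ₀ → 0 < δ → δ < b₀ / 2 → 0 < h → h < 1 →
        ∀ T : ℤ × ℤ → (L2R →L[ℂ] L2R),
          (∀ j : ℤ × ℤ, IsWeylQuant h (shiftSymbol a₀ j) (T j)) →
          (∀ j ∈ Λ, ∀ μ ∈ Set.Icc (μ₀ - (δ + r h)) (μ₀ + (δ + r h)),
            (μ : ℂ) ∉ spectrum ℂ (T j)) →
          ∀ μ ∈ Set.Icc (μ₀ - δ) (μ₀ + δ),
            (μ : ℂ) ∉ spectrum ℂ (∑ j ∈ Λ, T j) := by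
  obtain ⟨r, hr_nonneg, hr_decay, hr⟩ := weyl_sum_spectral_gap_general a₀ ha_smooth ha_supp'
  refine ⟨r, fun h hh _ ↦ hr_nonneg h hh, fun N _ ↦ hr_decay N, ?_⟩
  intro Λ μ₀ δ h hμ₀ _ hδ hh hh1 T hT hgap μ hμ
  refine hr Λ μ h (by linarith [hμ.1]) hh hh1 T (fun j _ ↦ hT j) fun j hj ν hν ↦
    hgap j hj ν ⟨by linarith [hμ.1, hν.1], by linarith [hμ.2, hν.2]⟩
end
end

section
/- Let b₀ > 0 and let (M_N)_{N ∈ ℕ} be a sequence of positive constants. Let Λ̃ ⊂ ℤ² be finite, and for each j = (j₁,j₂) ∈ Λ̃ let a_j(x,y) := f_j(x − j₁, y − j₂), where f_j ∈ C_c^∞(ℝ²) is real-valued with supp f_j ⊂ (−1/2,1/2)² and sup |∂^α f_j| ≤ M_{|α|} for every multi-index α. Then there exists r : (0,1) → [0,∞) with r(h) = O(h^∞) (for every N there is C_N with r(h) ≤ C_N h^N for all h ∈ (0,1)), depending only on b₀ and (M_N) and not on Λ̃ or the f_j, such that for every μ₀ ≥ b₀, every 0 < δ < b₀/2, and every h ∈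 (0,1): if there is j* ∈ Λ̃ such that the spectrum of â_j does not meet [μ₀ − (δ + r(h)), μ₀ + (δ + r(h))] for every j ∈ Λ̃ with j ≠ j*, while the spectrum of â_{j*} in [μ₀ − (δ + r(h)), μ₀ + (δ + r(h))] consists of at most one eigenvalue whose eigenspace is one-dimensional, then for A := Σ_{j ∈ Λ̃} â_j the sum over eigenvalues λ ∈ [μ₀ − δ, μ₀ + δ] of A of the dimension of the eigenspace ker(A − λ) is at most 1. -/
/-!
STATEMENT 5: With b₀ > 0, a sequence of positive constants (M_N), a finite
Λ̃ ⊂ ℤ², and site symbols a_j = translates of f_j ∈ C_c^∞((−1/2,1/2)²) with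
sup |∂^α f_j| ≤ M_{|α|}: there is r(h) = O(h^∞), depending only on b₀ and
(M_N), such that for μ₀ ≥ b₀, 0 < δ < b₀/2, h ∈ (0,1): if for some j* ∈ Λ̃
the spectra of all â_j, j ≠ j*, avoid [μ₀ ± (δ + r(h))], while σ(â_{j*})
meets that interval in at most one eigenvalue with one-dimensional
eigenspace, then the total eigenvalue multiplicity of A := Σ_{j∈Λ̃} â_j in
[μ₀ ± δ] is at most 1.

"Total multiplicity at most 1" is rendered as: there are no two nonzero
eigenvectors of A with eigenvalues in the interval that are distinct, i.e.
either have different eigenvalues or are orthogonal.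
-/

open MeasureTheory Complex Real
open scoped InnerProductSpace

noncomputable section

/-!
Quantized symbols supported near different lattice points `i ≠ j` almost annihilate each other:
their composition is an integral of phase-space reflections against an oscillatory integral of
`a_i (z + s) * a_j z`, a function which is flat at `s = 0` because the supports are disjoint, and
repeated integration by parts gives `‖T i * T j‖ = O(h^∞ ‖i - j‖^(-∞))`. By the Cotlar–Stein lemma,
`A = ∑ T j` then has norm `O(h⁻¹)`, and `A ^ 2` differs from `∑ T j ^ 2` by `O(h^∞)` in norm.

Suppose `A u = μ u` with `μ ∈ [μ₀ - δ, μ₀ + δ]`. Since `T j (T j u) ≈ μ T j u`, the vector `T j u`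
nearly lies in the spectral subspace of `T j` for an interval around `μ`, which is zero except for
`j = j*`, where it is at most a line. Two eigenvectors therefore have a nontrivial combination `z`
with `∑ ‖T j z‖ ^ 2`, hence also `‖A z‖ ^ 2`, tiny compared with `‖z‖ ^ 2`; if they are orthogonal,
this contradicts `‖A z‖ ≥ (b₀ / 2) ‖z‖`.
-/

section CotlarStein

open Filter Topology

theorem le_of_frequently_pow_succ_le {x y C : ℝ} (hy : 0 ≤ y)
    (h : ∃ᶠ n : ℕ in atTop, x ^ (n + 1) ≤ C * y ^ n) : x ≤ y := by
  by_contra! hxy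
  have hx : 0 < x := hy.trans_lt hxy
  have hlim : Tendsto (fun n : ℕ => C * (y / x) ^ n) atTop (𝓝 0) := by
    simpa using (tendsto_pow_atTop_nhds_zero_of_lt_one (div_nonneg hy hx.le)
      ((div_lt_one hx).2 hxy)).const_mul C
  obtain ⟨n, hn, hn'⟩ := (h.and_eventually (hlim.eventually_lt_const hx)).exists
  refine hn'.not_ge ?_
  rwa [div_pow, ← mul_div_assoc, le_div_iff₀ (pow_pos hx n), ← pow_succ']

variable {ι E : Type*} [NormedRing E] [StarRing E] [CStarRing E]
  {s : Finset ι} {S : ι → E} {K : ℝ}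

theorem norm_le_of_sum_sqrt_norm_star_mul_le
    (hK : ∀ j ∈ s, ∑ i ∈ s, √‖star (S i) * S j‖ ≤ K) {j : ι} (hj : j ∈ s) : ‖S j‖ ≤ K := by
  calc ‖S j‖ = √‖star (S j) * S j‖ := by
        rw [CStarRing.norm_star_mul_self, Real.sqrt_mul_self (norm_nonneg _)]
    _ ≤ ∑ i ∈ s, √‖star (S i) * S j‖ :=
        Finset.single_le_sum (f := fun i => √‖star (S i) * S j‖)
          (fun _ _ => Real.sqrt_nonneg _) hj
    _ ≤ K := hK j hj

theorem sqrt_norm_mul_mul_norm_le {R : Type*} [NormedRing R] (a b c y : R) :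
    √(‖a * (b * (c * y))‖ * ‖b * (c * y)‖) ≤ √‖a * b‖ * √‖b * c‖ * √(‖c * y‖ * ‖y‖) := by
  rw [← Real.sqrt_mul (norm_nonneg _), ← Real.sqrt_mul (by positivity)]
  refine Real.sqrt_le_sqrt ?_
  calc _ ≤ (‖a * b‖ * ‖c * y‖) * (‖b * c‖ * ‖y‖) := by
        gcongr
        · rw [← mul_assoc]; exact norm_mul_le _ _
        · rw [← mul_assoc]; exact norm_mul_le _ _
    _ = _ := by ring

-- Peeling the factors next to `S j` leaves a bound of the same shape, so that the geometric mean
-- of the two ways of grouping the long product never has to be written out.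
theorem norm_pow_mul_le_of_sum_sqrt_norm_le
    (hleft : ∀ j ∈ s, ∑ i ∈ s, √‖star (S i) * S j‖ ≤ K)
    (hright : ∀ j ∈ s, ∑ i ∈ s, √‖S i * star (S j)‖ ≤ K)
    (n : ℕ) {j : ι} (hj : j ∈ s) (y : E) :
    ‖((∑ i ∈ s, S i) * star (∑ i ∈ s, S i)) ^ n * (S j * y)‖ ≤
      (K ^ 2) ^ n * (√K * √(‖S j * y‖ * ‖y‖)) := by
  have hSK := norm_le_of_sum_sqrt_norm_star_mul_le hleft hj
  have hK : 0 ≤ K := (norm_nonneg _).trans hSK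
  induction n generalizing j y with
  | zero =>
    rw [pow_zero, pow_zero, one_mul, one_mul, ← Real.sqrt_mul hK]
    refine Real.le_sqrt_of_sq_le ?_
    calc ‖S j * y‖ ^ 2 ≤ ‖S j * y‖ * (K * ‖y‖) := by
          rw [sq]; gcongr; exact (norm_mul_le _ _).trans (by gcongr)
      _ = K * (‖S j * y‖ * ‖y‖) := by ring
  | succ n ih =>
    set Q := ∑ i ∈ s, S i with hQ
    have hexpand : (Q * star Q) ^ (n + 1) * (S j * y) =
        ∑ k ∈ s, ∑ i ∈ s, (Q * star Q) ^ n * (S i * (star (S k) * (S j * y))) := by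
      simp only [← Finset.mul_sum, ← Finset.sum_mul, ← star_sum, ← hQ, pow_succ, mul_assoc]
    calc ‖(Q * star Q) ^ (n + 1) * (S j * y)‖
        ≤ ∑ k ∈ s, ∑ i ∈ s, ‖(Q * star Q) ^ n * (S i * (star (S k) * (S j * y)))‖ :=
          hexpand ▸ (norm_sum_le _ _).trans (Finset.sum_le_sum fun k _ => norm_sum_le _ _)
      _ ≤ ∑ k ∈ s, ∑ i ∈ s, (K ^ 2) ^ n * (√K *
            (√‖S i * star (S k)‖ * √‖star (S k) * S j‖ * √(‖S j * y‖ * ‖y‖))) := by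
          gcongr with k _ i hi
          exact (ih hi _ (norm_le_of_sum_sqrt_norm_star_mul_le hleft hi)).trans
            (by gcongr; exact sqrt_norm_mul_mul_norm_le _ _ _ y)
      _ = (K ^ 2) ^ n * (√K * ((∑ k ∈ s, (∑ i ∈ s, √‖S i * star (S k)‖) *
            √‖star (S k) * S j‖) * √(‖S j * y‖ * ‖y‖))) := by
          simp only [Finset.mul_sum, Finset.sum_mul]
      _ ≤ (K ^ 2) ^ n * (√K * ((∑ k ∈ s, K * √‖star (S k) * S j‖) * √(‖S j * y‖ * ‖y‖))) := by
          gcongr with k hk; exact hright k hk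
      _ ≤ (K ^ 2) ^ n * (√K * ((K * K) * √(‖S j * y‖ * ‖y‖))) := by
          rw [← Finset.mul_sum]; gcongr; exact hleft j hj
      _ = (K ^ 2) ^ (n + 1) * (√K * √(‖S j * y‖ * ‖y‖)) := by ring

theorem norm_sum_le_of_sum_sqrt_norm_le (hK : 0 ≤ K)
    (hleft : ∀ j ∈ s, ∑ i ∈ s, √‖star (S i) * S j‖ ≤ K)
    (hright : ∀ j ∈ s, ∑ i ∈ s, √‖S i * star (S j)‖ ≤ K) :
    ‖∑ i ∈ s, S i‖ ≤ K := by
  set Q := ∑ i ∈ s, S i with hQ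
  obtain ⟨C, hC⟩ : ∃ C, ∀ n : ℕ, ‖(Q * star Q) ^ (n + 1)‖ ≤ C * (K ^ 2) ^ n := by
    refine ⟨∑ j ∈ s, √K * √(‖S j * star Q‖ * ‖star Q‖), fun n => ?_⟩
    have hexpand : (Q * star Q) ^ (n + 1) = ∑ j ∈ s, (Q * star Q) ^ n * (S j * star Q) := by
      rw [← Finset.mul_sum, ← Finset.sum_mul, ← hQ, pow_succ]
    rw [hexpand, mul_comm, Finset.mul_sum]
    exact (norm_sum_le _ _).trans (Finset.sum_le_sum fun j hj =>
      norm_pow_mul_le_of_sum_sqrt_norm_le hleft hright n hj _)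
  have hsq : ‖Q‖ ^ 2 ≤ K ^ 2 := by
    refine le_of_frequently_pow_succ_le (C := C) (sq_nonneg K)
      (frequently_atTop.2 fun m => ⟨2 ^ m - 1, Nat.le_sub_one_of_lt Nat.lt_two_pow_self, ?_⟩)
    have hm := hC (2 ^ m - 1)
    rw [Nat.sub_add_cancel Nat.one_le_two_pow] at hm ⊢
    rwa [(IsSelfAdjoint.mul_star_self Q).norm_pow_two_pow, CStarRing.norm_self_mul_star, ← sq] at hm
  exact (sq_le_sq₀ (norm_nonneg _) hK).1 hsq

end CotlarStein

section SchurTest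

variable {ι : Type*} {s : Finset ι} {β : ℝ}

theorem sum_mul_mul_le_of_sum_le {c : ι → ι → ℝ} (hc : ∀ j k, 0 ≤ c j k)
    (hsymm : ∀ j k, c j k = c k j) (hrow : ∀ j ∈ s, ∑ k ∈ s, c j k ≤ β) (x : ι → ℝ) :
    ∑ j ∈ s, ∑ k ∈ s, c j k * (x j * x k) ≤ β * ∑ j ∈ s, x j ^ 2 := by
  have hswap : ∑ j ∈ s, ∑ k ∈ s, c j k * x k ^ 2 = ∑ j ∈ s, ∑ k ∈ s, c j k * x j ^ 2 := by
    rw [Finset.sum_comm]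
    simp only [fun j k => hsymm j k]
  calc ∑ j ∈ s, ∑ k ∈ s, c j k * (x j * x k)
      ≤ ∑ j ∈ s, ∑ k ∈ s, (c j k * x j ^ 2 / 2 + c j k * x k ^ 2 / 2) := by
        gcongr with j _ k _
        nlinarith [mul_nonneg (hc j k) (sq_nonneg (x j - x k))]
    _ = ∑ j ∈ s, (∑ k ∈ s, c j k) * x j ^ 2 := by
        simp only [Finset.sum_add_distrib, ← Finset.sum_div, hswap, add_halves, Finset.sum_mul]
    _ ≤ ∑ j ∈ s, β * x j ^ 2 := by gcongr with j hj; exact hrow j hj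
    _ = β * ∑ j ∈ s, x j ^ 2 := by rw [Finset.mul_sum]

variable {𝕜 H : Type*} [RCLike 𝕜] [NormedAddCommGroup H] [InnerProductSpace 𝕜 H] [CompleteSpace H]

-- `T T* ≤ β` and `T* T ≤ β` are equivalent for `T u = (B j u)ⱼ`, and `T T*` is the matrix
-- with entries `B j * star (B k)`.
theorem sum_norm_apply_sq_le_of_sum_norm_mul_star_le {B : ι → H →L[𝕜] H} (hβ : 0 ≤ β)
    (hrow : ∀ j ∈ s, ∑ k ∈ s, ‖B j * star (B k)‖ ≤ β) (u : H) :
    ∑ j ∈ s, ‖B j u‖ ^ 2 ≤ β * ‖u‖ ^ 2 := by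
  set q := ∑ j ∈ s, ‖B j u‖ ^ 2 with hq
  set v : H := ∑ j ∈ s, star (B j) (B j u) with hv
  have hqv : q ≤ ‖u‖ * ‖v‖ := by
    have : q = RCLike.re ⟪u, v⟫_𝕜 := by
      simp only [hv, hq, inner_sum, map_sum, ContinuousLinearMap.star_eq_adjoint,
        ContinuousLinearMap.adjoint_inner_right, inner_self_eq_norm_sq]
    exact this ▸ (RCLike.re_le_norm _).trans (norm_inner_le_norm _ _)
  have hvq : ‖v‖ ^ 2 ≤ β * q := by
    have hexpand : ‖v‖ ^ 2 =
        RCLike.re (∑ j ∈ s, ∑ k ∈ s, ⟪B j u, (B j * star (B k)) (B k u)⟫_𝕜) := by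
      rw [← inner_self_eq_norm_sq (𝕜 := 𝕜) v]
      simp only [hv, sum_inner, inner_sum, ContinuousLinearMap.star_eq_adjoint,
        ContinuousLinearMap.adjoint_inner_left, mul_apply_eq_comp]
      rw [Finset.sum_comm]
    calc ‖v‖ ^ 2 ≤ ∑ j ∈ s, ∑ k ∈ s, ‖⟪B j u, (B j * star (B k)) (B k u)⟫_𝕜‖ :=
          hexpand ▸ (RCLike.re_le_norm _).trans ((norm_sum_le _ _).trans
            (Finset.sum_le_sum fun j _ => norm_sum_le _ _))
      _ ≤ ∑ j ∈ s, ∑ k ∈ s, ‖B j * star (B k)‖ * (‖B j u‖ * ‖B k u‖) := by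
          gcongr with j _ k _
          calc _ ≤ ‖B j u‖ * ‖(B j * star (B k)) (B k u)‖ := norm_inner_le_norm _ _
            _ ≤ ‖B j u‖ * (‖B j * star (B k)‖ * ‖B k u‖) := by
                gcongr; exact ContinuousLinearMap.le_opNorm _ _
            _ = _ := by ring
      _ ≤ β * q := sum_mul_mul_le_of_sum_le (fun _ _ => norm_nonneg _)
          (fun j k => by rw [← norm_star, star_mul, star_star]) hrow _
  have hq0 : 0 ≤ q := Finset.sum_nonneg fun _ _ => sq_nonneg _
  by_contra! hlt
  have hq1 : 0 < q := (by positivity : 0 ≤ β * ‖u‖ ^ 2).trans_lt hlt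
  have : q ^ 2 ≤ ‖u‖ ^ 2 * (β * q) :=
    (pow_le_pow_left₀ hq0 hqv 2).trans (by rw [mul_pow]; gcongr)
  nlinarith

end SchurTest

section AlmostOrthogonal

/-- The fourth root of `‖a * b‖`, the measure of almost orthogonality of two self-adjoint elements
for which norms of fourfold products can be distributed over their three consecutive pairs. -/
def overlap {E : Type*} [NormedRing E] (a b : E) : ℝ := √√‖a * b‖

section NormedRing

variable {E : Type*} [NormedRing E]

theorem overlap_nonneg (a b : E) : 0 ≤ overlap a b := Real.sqrt_nonneg _

theorem overlap_sq (a b : E) : overlap a b ^ 2 = √‖a * b‖ := Real.sq_sqrt (Real.sqrt_nonneg _)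

theorem overlap_self [StarRing E] [CStarRing E] {a : E} (ha : IsSelfAdjoint a) :
    overlap a a = √‖a‖ := by
  rw [overlap, ← Real.sqrt_mul_self (norm_nonneg a), ← CStarRing.norm_star_mul_self, ha.star_eq]

theorem sqrt_norm_mul_mul_mul_le {a b c d : E} {K : ℝ} (hK : 0 ≤ K) (ha : ‖a‖ ≤ K ^ 2)
    (hd : ‖d‖ ≤ K ^ 2) :
    √‖a * b * (c * d)‖ ≤ K * (overlap a b * overlap b c * overlap c d) := by
  have hsq : ‖a * b * (c * d)‖ ^ 2 ≤ K ^ 4 * (‖a * b‖ * ‖b * c‖ * ‖c * d‖) := by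
    calc ‖a * b * (c * d)‖ ^ 2 = ‖a * b * (c * d)‖ * ‖a * (b * c) * d‖ := by
          rw [sq]; simp only [mul_assoc]
      _ ≤ (‖a * b‖ * ‖c * d‖) * (‖a‖ * ‖b * c‖ * ‖d‖) := by
          gcongr
          · exact norm_mul_le _ _
          · exact (norm_mul_le _ _).trans (by gcongr; exact norm_mul_le _ _)
      _ ≤ (‖a * b‖ * ‖c * d‖) * (K ^ 2 * ‖b * c‖ * K ^ 2) := by gcongr
      _ = _ := by ring
  refine Real.sqrt_le_iff.2 ⟨?_, ?_⟩
  · exact mul_nonneg hK (mul_nonneg (mul_nonneg (overlap_nonneg _ _) (overlap_nonneg _ _))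
      (overlap_nonneg _ _))
  · refine (sq_le_sq₀ (norm_nonneg _) (sq_nonneg _)).1 (hsq.trans_eq ?_)
    have hpow (x y : E) : ‖x * y‖ = overlap x y ^ 4 := by
      rw [pow_mul (overlap x y) 2 2, overlap_sq, Real.sq_sqrt (norm_nonneg _)]
    rw [hpow a b, hpow b c, hpow c d]
    ring

end NormedRing

variable {ι E : Type*} [DecidableEq ι] [NormedRing E]

/-- A finite self-adjoint family whose rows of overlaps are bounded by `K`, and by `η` (which is
thought of as small) once the diagonal is left out. -/
structure IsAlmostOrthogonal [Star E] (Λ : Finset ι) (T : ι → E) (K η : ℝ) : Prop where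
  isSelfAdjoint : ∀ i ∈ Λ, IsSelfAdjoint (T i)
  sum_overlap_le : ∀ i ∈ Λ, ∑ j ∈ Λ, overlap (T i) (T j) ≤ K
  sum_erase_overlap_le : ∀ i ∈ Λ, ∑ j ∈ Λ.erase i, overlap (T i) (T j) ≤ η

/-- The off-diagonal part of `T i * ∑ j ∈ Λ, T j`. -/
def crossTerm (Λ : Finset ι) (T : ι → E) (i : ι) : E := T i * ∑ j ∈ Λ.erase i, T j

theorem mul_sum_eq_add_crossTerm {Λ : Finset ι} (T : ι → E) {i : ι} (hi : i ∈ Λ) :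
    T i * ∑ j ∈ Λ, T j = T i * T i + crossTerm Λ T i := by
  rw [crossTerm, ← mul_add, Finset.add_sum_erase Λ T hi]

namespace IsAlmostOrthogonal

variable [StarRing E] {Λ : Finset ι} {T : ι → E} {K η : ℝ}

theorem overlap_le (h : IsAlmostOrthogonal Λ T K η) {i j : ι} (hi : i ∈ Λ)
    (hj : j ∈ Λ.erase i) : overlap (T i) (T j) ≤ η :=
  (Finset.single_le_sum (f := fun j => overlap (T i) (T j))
    (fun _ _ => overlap_nonneg _ _) hj).trans (h.sum_erase_overlap_le i hi)

theorem star_mul_eq (h : IsAlmostOrthogonal Λ T K η) {i j : ι} (hi : i ∈ Λ) (hj : j ∈ Λ) :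
    star (T i * T j) = T j * T i := by
  rw [star_mul, h.isSelfAdjoint i hi, h.isSelfAdjoint j hj]

variable [CStarRing E]

theorem overlap_comm (h : IsAlmostOrthogonal Λ T K η) {i j : ι} (hi : i ∈ Λ) (hj : j ∈ Λ) :
    overlap (T i) (T j) = overlap (T j) (T i) := by
  rw [overlap, ← norm_star, h.star_mul_eq hi hj, overlap]

theorem norm_le (h : IsAlmostOrthogonal Λ T K η) {i : ι} (hi : i ∈ Λ) : ‖T i‖ ≤ K ^ 2 := by
  rw [← Real.sq_sqrt (norm_nonneg (T i)), ← overlap_self (h.isSelfAdjoint i hi)]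
  exact pow_le_pow_left₀ (overlap_nonneg _ _) ((Finset.single_le_sum
    (f := fun j => overlap (T i) (T j)) (fun _ _ => overlap_nonneg _ _) hi).trans
      (h.sum_overlap_le i hi)) 2

theorem norm_sum_le (h : IsAlmostOrthogonal Λ T K η) : ‖∑ i ∈ Λ, T i‖ ≤ K ^ 2 := by
  have hrow {j : ι} (hj : j ∈ Λ) : ∑ i ∈ Λ, √‖T i * T j‖ ≤ K ^ 2 := by
    calc ∑ i ∈ Λ, √‖T i * T j‖ = ∑ i ∈ Λ, overlap (T j) (T i) ^ 2 :=
          Finset.sum_congr rfl fun i hi => by rw [h.overlap_comm hj hi, overlap_sq]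
      _ ≤ (∑ i ∈ Λ, overlap (T j) (T i)) ^ 2 :=
          Finset.sum_sq_le_sq_sum_of_nonneg fun _ _ => overlap_nonneg _ _
      _ ≤ K ^ 2 := pow_le_pow_left₀ (Finset.sum_nonneg fun _ _ => overlap_nonneg _ _)
          (h.sum_overlap_le j hj) 2
  refine norm_sum_le_of_sum_sqrt_norm_le (sq_nonneg K) (fun j hj => ?_) fun j hj => ?_
  · exact (Finset.sum_congr rfl fun i hi => by rw [h.isSelfAdjoint i hi]).trans_le (hrow hj)
  · exact (Finset.sum_congr rfl fun i _ => by rw [h.isSelfAdjoint j hj]).trans_le (hrow hj)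

theorem sum_sqrt_norm_mul_mul_mul_le (h : IsAlmostOrthogonal Λ T K η) {i j : ι} (hi : i ∈ Λ)
    (hj : j ∈ Λ) :
    ∑ k ∈ Λ, ∑ l ∈ Λ.erase k, √‖T i * T j * (T k * T l)‖ ≤
      overlap (T i) (T j) * (K ^ 2 * η) := by
  have hK : 0 ≤ K := (Finset.sum_nonneg fun _ _ => overlap_nonneg _ _).trans (h.sum_overlap_le i hi)
  have hη : 0 ≤ η :=
    (Finset.sum_nonneg fun _ _ => overlap_nonneg _ _).trans (h.sum_erase_overlap_le i hi)
  calc ∑ k ∈ Λ, ∑ l ∈ Λ.erase k, √‖T i * T j * (T k * T l)‖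
      ≤ ∑ k ∈ Λ, ∑ l ∈ Λ.erase k,
          K * (overlap (T i) (T j) * overlap (T j) (T k) * overlap (T k) (T l)) := by
        gcongr with k _ l hl
        exact sqrt_norm_mul_mul_mul_le hK (h.norm_le hi) (h.norm_le (Finset.mem_of_mem_erase hl))
    _ = K * overlap (T i) (T j) * ∑ k ∈ Λ, overlap (T j) (T k) *
          ∑ l ∈ Λ.erase k, overlap (T k) (T l) := by
        simp only [Finset.mul_sum, mul_assoc]
    _ ≤ K * overlap (T i) (T j) * ∑ k ∈ Λ, overlap (T j) (T k) * η := by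
        have := overlap_nonneg (T i) (T j)
        gcongr with k hk
        · exact overlap_nonneg _ _
        · exact h.sum_erase_overlap_le k hk
    _ ≤ K * overlap (T i) (T j) * (K * η) := by
        have := overlap_nonneg (T i) (T j)
        rw [← Finset.sum_mul]; gcongr; exact h.sum_overlap_le j hj
    _ = overlap (T i) (T j) * (K ^ 2 * η) := by ring

theorem sum_sqrt_norm_mul_mul_mul_swap_le (h : IsAlmostOrthogonal Λ T K η) {i j : ι} (hi : i ∈ Λ)
    (hj : j ∈ Λ) :
    ∑ l ∈ Λ, ∑ k ∈ Λ.erase l, √‖T i * T j * (T k * T l)‖ ≤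
      overlap (T i) (T j) * (K ^ 2 * η) := by
  refine (Finset.sum_comm' fun l k => ?_).trans_le (h.sum_sqrt_norm_mul_mul_mul_le hi hj)
  simp only [Finset.mem_erase]
  tauto

theorem sum_norm_mul_mul_mul_swap_le (h : IsAlmostOrthogonal Λ T K η) {i j : ι} (hi : i ∈ Λ)
    (hj : j ∈ Λ) :
    ∑ l ∈ Λ, ∑ k ∈ Λ.erase l, ‖T i * T j * (T k * T l)‖ ≤
      (overlap (T i) (T j) * (K ^ 2 * η)) ^ 2 := by
  have hsqrt (k l : ι) : 0 ≤ √‖T i * T j * (T k * T l)‖ := Real.sqrt_nonneg _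
  calc ∑ l ∈ Λ, ∑ k ∈ Λ.erase l, ‖T i * T j * (T k * T l)‖
      = ∑ l ∈ Λ, ∑ k ∈ Λ.erase l, √‖T i * T j * (T k * T l)‖ ^ 2 := by
        simp only [Real.sq_sqrt (norm_nonneg _)]
    _ ≤ ∑ l ∈ Λ, (∑ k ∈ Λ.erase l, √‖T i * T j * (T k * T l)‖) ^ 2 :=
        Finset.sum_le_sum fun l _ => Finset.sum_sq_le_sq_sum_of_nonneg fun k _ => hsqrt k l
    _ ≤ (∑ l ∈ Λ, ∑ k ∈ Λ.erase l, √‖T i * T j * (T k * T l)‖) ^ 2 :=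
        Finset.sum_sq_le_sq_sum_of_nonneg fun l _ => Finset.sum_nonneg fun k _ => hsqrt k l
    _ ≤ _ := pow_le_pow_left₀ (Finset.sum_nonneg fun l _ => Finset.sum_nonneg fun k _ => hsqrt k l)
        (h.sum_sqrt_norm_mul_mul_mul_swap_le hi hj) 2

theorem norm_sum_crossTerm_le (h : IsAlmostOrthogonal Λ T K η) :
    ‖∑ i ∈ Λ, crossTerm Λ T i‖ ≤ K ^ 2 * η ^ 2 := by
  have hsum : ∑ i ∈ Λ, crossTerm Λ T i =
      ∑ p ∈ Λ.sigma fun i => Λ.erase i, T p.1 * T p.2 := by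
    simp only [Finset.sum_sigma, crossTerm, Finset.mul_sum]
  have hle {i j : ι} (hi : i ∈ Λ) (hij : j ∈ Λ.erase i) :
      overlap (T i) (T j) * (K ^ 2 * η) ≤ K ^ 2 * η ^ 2 := by
    have hη : 0 ≤ η := (overlap_nonneg _ _).trans (h.overlap_le hi hij)
    exact (mul_le_mul_of_nonneg_right (h.overlap_le hi hij) (by positivity)).trans_eq (by ring)
  rw [hsum]
  refine norm_sum_le_of_sum_sqrt_norm_le (by positivity) ?_ ?_ <;> rintro ⟨i, j⟩ hp <;>
    obtain ⟨hi, hij⟩ := Finset.mem_sigma.1 hp <;>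
    have hj := Finset.mem_of_mem_erase hij <;>
    rw [Finset.sum_sigma] <;> refine le_trans ?_ (hle hi hij)
  · rw [h.overlap_comm hi hj]
    refine (Finset.sum_congr rfl fun k _ => Finset.sum_congr rfl fun l _ => ?_).trans_le
      (h.sum_sqrt_norm_mul_mul_mul_le hj hi)
    rw [← norm_star, star_mul, star_star, h.star_mul_eq hi hj]
  · refine (Finset.sum_congr rfl fun k hk => Finset.sum_congr rfl fun l hl => ?_).trans_le
      (h.sum_sqrt_norm_mul_mul_mul_swap_le hi hj)
    rw [← norm_star, star_mul, star_star, h.star_mul_eq hk (Finset.mem_of_mem_erase hl)]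

theorem sum_norm_crossTerm_mul_star_le (h : IsAlmostOrthogonal Λ T K η) {i : ι} (hi : i ∈ Λ) :
    ∑ j ∈ Λ, ‖crossTerm Λ T i * star (crossTerm Λ T j)‖ ≤ (K ^ 2 * η ^ 2) ^ 2 := by
  have hexpand {j : ι} (hj : j ∈ Λ) : crossTerm Λ T i * star (crossTerm Λ T j) =
      ∑ k ∈ Λ.erase i, ∑ l ∈ Λ.erase j, T i * T k * (T l * T j) := by
    simp only [crossTerm, Finset.mul_sum, Finset.sum_mul, star_sum]
    rw [Finset.sum_comm]
    refine Finset.sum_congr rfl fun k _ => Finset.sum_congr rfl fun l hl => ?_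
    rw [h.star_mul_eq hj (Finset.mem_of_mem_erase hl)]
  have hη : 0 ≤ η :=
    (Finset.sum_nonneg fun _ _ => overlap_nonneg _ _).trans (h.sum_erase_overlap_le i hi)
  calc ∑ j ∈ Λ, ‖crossTerm Λ T i * star (crossTerm Λ T j)‖
      ≤ ∑ j ∈ Λ, ∑ k ∈ Λ.erase i, ∑ l ∈ Λ.erase j, ‖T i * T k * (T l * T j)‖ := by
        gcongr with j hj
        exact hexpand hj ▸ norm_sum_le_of_le _ fun k _ => _root_.norm_sum_le _ _
    _ = ∑ k ∈ Λ.erase i, ∑ j ∈ Λ, ∑ l ∈ Λ.erase j, ‖T i * T k * (T l * T j)‖ := Finset.sum_comm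
    _ ≤ ∑ k ∈ Λ.erase i, (overlap (T i) (T k) * (K ^ 2 * η)) ^ 2 :=
        Finset.sum_le_sum fun k hk =>
          h.sum_norm_mul_mul_mul_swap_le hi (Finset.mem_of_mem_erase hk)
    _ ≤ (∑ k ∈ Λ.erase i, overlap (T i) (T k) * (K ^ 2 * η)) ^ 2 :=
        Finset.sum_sq_le_sq_sum_of_nonneg fun k _ =>
          mul_nonneg (overlap_nonneg _ _) (by positivity)
    _ ≤ (η * (K ^ 2 * η)) ^ 2 := by
        rw [← Finset.sum_mul]
        have := Finset.sum_nonneg fun k (_ : k ∈ Λ.erase i) => overlap_nonneg (T i) (T k)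
        gcongr
        exact h.sum_erase_overlap_le i hi
    _ = (K ^ 2 * η ^ 2) ^ 2 := by ring

theorem sum_norm_crossTerm_apply_sq_le {𝕜 H : Type*} [RCLike 𝕜] [NormedAddCommGroup H]
    [InnerProductSpace 𝕜 H] [CompleteSpace H] {T : ι → H →L[𝕜] H}
    (h : IsAlmostOrthogonal Λ T K η) (u : H) :
    ∑ i ∈ Λ, ‖crossTerm Λ T i u‖ ^ 2 ≤ (K ^ 2 * η ^ 2) ^ 2 * ‖u‖ ^ 2 :=
  sum_norm_apply_sq_le_of_sum_norm_mul_star_le (sq_nonneg _)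
    (fun _ hi => h.sum_norm_crossTerm_mul_star_le hi) u

end IsAlmostOrthogonal

end AlmostOrthogonal

theorem continuousOn_indicator_of_isClosed {α β : Type*} [TopologicalSpace α] [TopologicalSpace β]
    [Zero β] {s I : Set α} {f : α → β} (hf : ContinuousOn f (s ∩ I)) (hin : IsClosed (s ∩ I))
    (hout : IsClosed (s \ I)) : ContinuousOn (I.indicator f) s := by
  rw [← Set.inter_union_sdiff s I]
  refine ContinuousOn.union_of_isClosed (hf.congr fun t ht => Set.indicator_of_mem ht.2 f)
    (continuousOn_const (c := 0) |>.congr fun t ht => Set.indicator_of_notMem ht.2 f) hin hout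

section SpectralCutoff

variable {H : Type*} [NormedAddCommGroup H] [InnerProductSpace ℂ H]

theorem algebraMap_apply_eq_smul (μ : ℝ) (x : H) :
    algebraMap ℝ (H →L[ℂ] H) μ x = (μ : ℂ) • x := by
  simp [Algebra.algebraMap_eq_smul_one]

variable [CompleteSpace H]

/-- The spectral projection of `T` on `I`. It is obtained from the continuous functional calculus,
so it is meaningful only when `I` and its complement cut the spectrum in closed sets. -/
def spectralCutoff (I : Set ℝ) (T : H →L[ℂ] H) : H →L[ℂ] H := cfc (I.indicator 1) T

variable {T : H →L[ℂ] H} {I : Set ℝ}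

theorem spectralCutoff_eq_zero (h : ∀ t ∈ spectrum ℝ T, t ∉ I) : spectralCutoff I T = 0 :=
  (cfc_congr fun t ht => Set.indicator_of_notMem (h t ht) 1).trans (cfc_const_zero ℝ T)

theorem sub_algebraMap_eq_cfc (hT : IsSelfAdjoint T) (μ : ℝ) :
    T - algebraMap ℝ (H →L[ℂ] H) μ = cfc (fun t : ℝ => t - μ) T := by
  rw [cfc_sub (fun t : ℝ => t) (fun _ => μ) T, cfc_id' ℝ T, cfc_const μ T]

theorem apply_spectralCutoff (hT : IsSelfAdjoint T)
    (hin : IsClosed (spectrum ℝ T ∩ I)) (hout : IsClosed (spectrum ℝ T \ I)) {l : ℝ}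
    (hl : ∀ t ∈ spectrum ℝ T, t ∈ I → t = l) (x : H) :
    T (spectralCutoff I T x) = (l : ℂ) • spectralCutoff I T x := by
  have hzero : (T - algebraMap ℝ (H →L[ℂ] H) l) * spectralCutoff I T = 0 := by
    rw [sub_algebraMap_eq_cfc hT, spectralCutoff, ← cfc_mul (fun t => t - l) _ T (by fun_prop)
      (continuousOn_indicator_of_isClosed continuous_one.continuousOn hin hout),
      ← cfc_const_zero ℝ T]
    refine cfc_congr fun t ht => ?_
    by_cases htI : t ∈ I
    · simp [hl t ht htI]
    · simp [htI]
  have := congrArg (fun S : H →L[ℂ] H => S x) hzero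
  rwa [mul_apply_eq_comp, sub_apply, algebraMap_apply_eq_smul, zero_apply, sub_eq_zero] at this

theorem mul_norm_sub_spectralCutoff_le (hT : IsSelfAdjoint T)
    (hin : IsClosed (spectrum ℝ T ∩ I)) (hout : IsClosed (spectrum ℝ T \ I)) {r μ : ℝ} (hr : 0 < r)
    (hgap : ∀ t ∈ spectrum ℝ T, t ∉ I → r ≤ |t - μ|) (x : H) :
    r * ‖x - spectralCutoff I T x‖ ≤ ‖T x - (μ : ℂ) • x‖ := by
  set q : ℝ → ℝ := Iᶜ.indicator fun t => (t - μ)⁻¹ with hq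
  have hne {t : ℝ} (ht : t ∈ spectrum ℝ T) (htI : t ∉ I) : t - μ ≠ 0 :=
    abs_pos.1 (hr.trans_le (hgap t ht htI))
  have hq_cont : ContinuousOn q (spectrum ℝ T) :=
    continuousOn_indicator_of_isClosed
      (ContinuousOn.inv₀ (by fun_prop) fun t ht => hne ht.1 ht.2) hout (by rwa [Set.sdiff_compl])
  have hq_norm : ‖cfc q T‖ ≤ r⁻¹ := by
    refine norm_cfc_le (by positivity) fun t ht => ?_
    by_cases htI : t ∈ I
    · simp [hq, htI, hr.le]
    · simpa [hq, htI] using inv_anti₀ hr (hgap t ht htI)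
  have hone : 1 - spectralCutoff I T = cfc q T * (T - algebraMap ℝ _ μ) := by
    rw [sub_algebraMap_eq_cfc hT, spectralCutoff, ← cfc_mul _ _ T hq_cont, ← cfc_const_one ℝ T,
      ← cfc_sub _ _ T continuousOn_const
        (continuousOn_indicator_of_isClosed continuous_one.continuousOn hin hout)]
    refine cfc_congr fun t ht => ?_
    by_cases htI : t ∈ I
    · simp [hq, htI]
    · simp [hq, htI, hne ht htI]
  have happly : x - spectralCutoff I T x = cfc q T (T x - (μ : ℂ) • x) := by
    have := congrArg (fun S : H →L[ℂ] H => S x) hone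
    rwa [mul_apply_eq_comp, sub_apply, sub_apply, algebraMap_apply_eq_smul, one_apply_eq_self]
      at this
  calc r * ‖x - spectralCutoff I T x‖ ≤ r * (r⁻¹ * ‖T x - (μ : ℂ) • x‖) := by
        rw [happly]; gcongr; exact (ContinuousLinearMap.le_opNorm _ _).trans (by gcongr)
    _ = ‖T x - (μ : ℂ) • x‖ := by field_simp

end SpectralCutoff

section IsolatedSite

variable {H : Type*} [NormedAddCommGroup H] [InnerProductSpace ℂ H]

/-- The eigenvalues of `A` in `J` have total multiplicity at most one. -/
def HasAtMostOneEigenvalue (A : H →L[ℂ] H) (J : Set ℝ) : Prop :=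
  ∀ μ₁ ∈ J, ∀ μ₂ ∈ J, ∀ u v : H, A u = (μ₁ : ℂ) • u → A v = (μ₂ : ℂ) • v →
    u ≠ 0 → v ≠ 0 → (μ₁ ≠ μ₂ ∨ ⟪u, v⟫_ℂ = 0) → False

/-- Among the operators `T j`, `j ∈ Λ`, only `T j₀` may have spectrum in `J`, and there it has at
most one spectral point, of multiplicity at most one. -/
structure HasIsolatedSite {ι : Type*} (Λ : Finset ι) (T : ι → H →L[ℂ] H) (J : Set ℝ) (j₀ : ι) :
    Prop where
  mem : j₀ ∈ Λ
  notMem_spectrum : ∀ j ∈ Λ, j ≠ j₀ → ∀ μ ∈ J, (μ : ℂ) ∉ spectrum ℂ (T j)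
  eq_of_mem_spectrum : ∀ μ₁ ∈ J, ∀ μ₂ ∈ J, (μ₁ : ℂ) ∈ spectrum ℂ (T j₀) →
    (μ₂ : ℂ) ∈ spectrum ℂ (T j₀) → μ₁ = μ₂
  simple : ∀ μ ∈ J, ∀ u v : H, T j₀ u = (μ : ℂ) • u → T j₀ v = (μ : ℂ) • v →
    u ≠ 0 → v ≠ 0 → ⟪u, v⟫_ℂ = 0 → False

namespace HasIsolatedSite

variable {ι : Type*} {Λ : Finset ι} {T : ι → H →L[ℂ] H} {j₀ : ι} {J I : Set ℝ}

theorem subsingleton_spectrum_inter (h : HasIsolatedSite Λ T J j₀) (hIJ : I ⊆ J) {j : ι}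
    (hj : j ∈ Λ) : (spectrum ℝ (T j) ∩ I).Subsingleton := by
  rintro s ⟨hs, hsI⟩ t ⟨ht, htI⟩
  have hs' : (s : ℂ) ∈ spectrum ℂ (T j) := spectrum.algebraMap_mem_iff ℂ |>.2 hs
  have ht' : (t : ℂ) ∈ spectrum ℂ (T j) := spectrum.algebraMap_mem_iff ℂ |>.2 ht
  rcases eq_or_ne j j₀ with rfl | hne
  · exact h.eq_of_mem_spectrum s (hIJ hsI) t (hIJ htI) hs' ht'
  · exact absurd hs' (h.notMem_spectrum j hj hne s (hIJ hsI))

theorem isClosed_spectrum_inter (h : HasIsolatedSite Λ T J j₀) (hIJ : I ⊆ J) {j : ι}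
    (hj : j ∈ Λ) : IsClosed (spectrum ℝ (T j) ∩ I) :=
  (h.subsingleton_spectrum_inter hIJ hj).finite.isClosed

theorem exists_smul_add_smul_eq_zero (h : HasIsolatedSite Λ T J j₀) {l : ℝ} (hl : l ∈ J) {p q : H}
    (hp : T j₀ p = (l : ℂ) • p) (hq : T j₀ q = (l : ℂ) • q) :
    ∃ a b : ℂ, (a ≠ 0 ∨ b ≠ 0) ∧ a • p + b • q = 0 := by
  by_cases hp0 : p = 0
  · exact ⟨1, 0, by simp, by simp [hp0]⟩
  have hpp : ⟪p, p⟫_ℂ ≠ 0 := by simpa using hp0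
  refine ⟨-(⟪p, q⟫_ℂ / ⟪p, p⟫_ℂ), 1, by simp, ?_⟩
  by_contra hne
  refine h.simple l hl p _ hp ?_ hp0 hne ?_
  · rw [map_add, map_smul, map_smul, hp, hq, smul_add, smul_comm, smul_comm (l : ℂ) (1 : ℂ)]
  · rw [inner_add_right, inner_smul_right, inner_smul_right]
    field_simp
    ring

variable [CompleteSpace H]

theorem spectralCutoff_eq_zero (h : HasIsolatedSite Λ T J j₀) (hIJ : I ⊆ J) {j : ι} (hj : j ∈ Λ)
    (hne : j ≠ j₀) : spectralCutoff I (T j) = 0 :=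
  _root_.spectralCutoff_eq_zero fun t ht htI => h.notMem_spectrum j hj hne t (hIJ htI)
    (spectrum.algebraMap_mem_iff ℂ |>.2 ht)

theorem mul_norm_sub_spectralCutoff_le (h : HasIsolatedSite Λ T J j₀) (hIJ : I ⊆ J) {j : ι}
    (hj : j ∈ Λ) (hT : IsSelfAdjoint (T j)) (hI : IsOpen I) {r μ : ℝ} (hr : 0 < r)
    (hgap : ∀ t ∉ I, r ≤ |t - μ|) (x : H) :
    r * ‖x - spectralCutoff I (T j) x‖ ≤ ‖T j x - (μ : ℂ) • x‖ :=
  _root_.mul_norm_sub_spectralCutoff_le hT (h.isClosed_spectrum_inter hIJ hj)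
    ((spectrum.isClosed _).sdiff hI) hr (fun t _ => hgap t) x

theorem exists_spectralCutoff_apply_eq_zero (h : HasIsolatedSite Λ T J j₀) (hIJ : I ⊆ J)
    (hT : IsSelfAdjoint (T j₀)) (hI : IsOpen I) (u v : H) :
    ∃ a b : ℂ, (a ≠ 0 ∨ b ≠ 0) ∧
      ∀ j ∈ Λ, spectralCutoff I (T j) (T j (a • u + b • v)) = 0 := by
  suffices ∃ a b : ℂ, (a ≠ 0 ∨ b ≠ 0) ∧ a • spectralCutoff I (T j₀) (T j₀ u) +
      b • spectralCutoff I (T j₀) (T j₀ v) = 0 by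
    obtain ⟨a, b, hab, hzero⟩ := this
    refine ⟨a, b, hab, fun j hj => ?_⟩
    rcases eq_or_ne j j₀ with rfl | hne
    · simpa only [map_add, map_smul] using hzero
    · rw [h.spectralCutoff_eq_zero hIJ hj hne, zero_apply]
  rcases (spectrum ℝ (T j₀) ∩ I).eq_empty_or_nonempty with hempty | ⟨l, hl, hlI⟩
  · have hzero : spectralCutoff I (T j₀) = 0 := _root_.spectralCutoff_eq_zero fun t ht htI =>
      hempty.subset ⟨ht, htI⟩
    exact ⟨1, 0, by simp, by simp [hzero]⟩
  · have happly := apply_spectralCutoff hT (h.isClosed_spectrum_inter hIJ h.mem)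
      ((spectrum.isClosed _).sdiff hI) fun t ht htI =>
        h.subsingleton_spectrum_inter hIJ h.mem ⟨ht, htI⟩ ⟨hl, hlI⟩
    exact h.exists_smul_add_smul_eq_zero (hIJ hlI) (happly _) (happly _)

end HasIsolatedSite

theorem norm_smul_add_smul_sq_of_inner_eq_zero {u v : H} (huv : ⟪u, v⟫_ℂ = 0) (a b : ℂ) :
    ‖a • u + b • v‖ ^ 2 = ‖a‖ ^ 2 * ‖u‖ ^ 2 + ‖b‖ ^ 2 * ‖v‖ ^ 2 := by
  rw [sq, norm_add_sq_eq_norm_sq_add_norm_sq_of_inner_eq_zero (𝕜 := ℂ), norm_smul, norm_smul]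
  · ring
  · rw [inner_smul_left, inner_smul_right, huv, mul_zero, mul_zero]

theorem norm_smul_add_smul_sq_pos_of_inner_eq_zero {u v : H} (huv : ⟪u, v⟫_ℂ = 0) (hu : u ≠ 0)
    (hv : v ≠ 0) {a b : ℂ} (hab : a ≠ 0 ∨ b ≠ 0) : 0 < ‖a • u + b • v‖ ^ 2 := by
  have := norm_pos_iff.2 hu
  have := norm_pos_iff.2 hv
  rw [norm_smul_add_smul_sq_of_inner_eq_zero huv]
  rcases hab with h | h <;> have := norm_pos_iff.2 h <;> positivity

theorem mul_norm_sq_le_norm_apply_sq_of_inner_eq_zero {A : H →L[ℂ] H} {u v : H}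
    (huv : ⟪u, v⟫_ℂ = 0) {μ₁ μ₂ m : ℝ} (hu : A u = (μ₁ : ℂ) • u) (hv : A v = (μ₂ : ℂ) • v)
    (hm : 0 ≤ m) (h₁ : m ≤ μ₁) (h₂ : m ≤ μ₂) (a b : ℂ) :
    m ^ 2 * ‖a • u + b • v‖ ^ 2 ≤ ‖A (a • u + b • v)‖ ^ 2 := by
  rw [map_add, map_smul, map_smul, hu, hv, smul_smul, smul_smul,
    norm_smul_add_smul_sq_of_inner_eq_zero huv, norm_smul_add_smul_sq_of_inner_eq_zero huv,
    norm_mul, norm_mul, Complex.norm_of_nonneg (hm.trans h₁), Complex.norm_of_nonneg (hm.trans h₂)]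
  calc m ^ 2 * (‖a‖ ^ 2 * ‖u‖ ^ 2 + ‖b‖ ^ 2 * ‖v‖ ^ 2)
      = (‖a‖ * m) ^ 2 * ‖u‖ ^ 2 + (‖b‖ * m) ^ 2 * ‖v‖ ^ 2 := by ring
    _ ≤ _ := by gcongr

theorem abs_eigenvalue_le_norm {A : H →L[ℂ] H} {μ : ℝ} {u : H} (hu : A u = (μ : ℂ) • u)
    (hu0 : u ≠ 0) : |μ| ≤ ‖A‖ := by
  refine le_of_mul_le_mul_right ?_ (norm_pos_iff.2 hu0)
  simpa [hu, norm_smul] using A.le_opNorm u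

theorem le_abs_sub_of_notMem_Ioo {c ρ r t μ : ℝ} (hμ : μ ∈ Set.Icc (c - ρ) (c + ρ))
    (ht : t ∉ Set.Ioo (c - (ρ + r)) (c + (ρ + r))) : r ≤ |t - μ| := by
  rw [Set.mem_Ioo, not_and_or, not_lt, not_lt] at ht
  rw [le_abs]
  rcases ht with ht | ht
  · right; linarith [hμ.1]
  · left; linarith [hμ.2]

section Family

variable {ι : Type*} [DecidableEq ι] {Λ : Finset ι} {T : ι → H →L[ℂ] H}

theorem apply_apply_sub_smul_eq_neg_crossTerm {i : ι} (hi : i ∈ Λ) {μ : ℝ} {u : H}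
    (hu : (∑ j ∈ Λ, T j) u = (μ : ℂ) • u) :
    T i (T i u) - (μ : ℂ) • T i u = -crossTerm Λ T i u := by
  have := congrArg (fun S : H →L[ℂ] H => S u) (mul_sum_eq_add_crossTerm T hi)
  simp only [mul_apply_eq_comp, add_apply, hu, map_smul] at this
  rw [this, sub_add_cancel_left]

variable [CompleteSpace H]

theorem inner_eq_zero_of_isSelfAdjoint_of_ne {A : H →L[ℂ] H} (hA : IsSelfAdjoint A)
    {μ₁ μ₂ : ℝ} (hne : μ₁ ≠ μ₂) {u v : H} (hu : A u = (μ₁ : ℂ) • u) (hv : A v = (μ₂ : ℂ) • v) :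
    ⟪u, v⟫_ℂ = 0 :=
  hA.isSymmetric.orthogonalFamily_eigenspaces (i := (μ₁ : ℂ)) (j := (μ₂ : ℂ))
    (by exact_mod_cast hne) ⟨u, Module.End.mem_eigenspace_iff.2 hu⟩
    ⟨v, Module.End.mem_eigenspace_iff.2 hv⟩

theorem norm_sum_apply_sq_le (hT : ∀ i ∈ Λ, IsSelfAdjoint (T i)) (z : H) :
    ‖(∑ i ∈ Λ, T i) z‖ ^ 2 ≤
      ∑ i ∈ Λ, ‖T i z‖ ^ 2 + ‖∑ i ∈ Λ, crossTerm Λ T i‖ * ‖z‖ ^ 2 := by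
  set A := ∑ i ∈ Λ, T i with hA
  have hsq : A * A = ∑ i ∈ Λ, T i * T i + ∑ i ∈ Λ, crossTerm Λ T i := by
    rw [← Finset.sum_add_distrib, hA, Finset.sum_mul]
    exact Finset.sum_congr rfl fun i hi => mul_sum_eq_add_crossTerm T hi
  have hinner {B : H →L[ℂ] H} (hB : IsSelfAdjoint B) : RCLike.re ⟪z, (B * B) z⟫_ℂ = ‖B z‖ ^ 2 := by
    rw [← inner_self_eq_norm_sq (𝕜 := ℂ), mul_apply_eq_comp]
    exact congrArg _ (hB.isSymmetric z (B z)).symm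
  rw [← hinner (isSelfAdjoint_sum Λ hT), hsq, add_apply, inner_add_right, map_add, sum_apply,
    inner_sum, map_sum, Finset.sum_congr rfl fun i hi => hinner (hT i hi)]
  gcongr
  calc _ ≤ ‖z‖ * ‖(∑ i ∈ Λ, crossTerm Λ T i) z‖ :=
        (RCLike.re_le_norm _).trans (norm_inner_le_norm _ _)
    _ ≤ ‖z‖ * (‖∑ i ∈ Λ, crossTerm Λ T i‖ * ‖z‖) := by
        gcongr; exact ContinuousLinearMap.le_opNorm _ _
    _ = _ := by ring

variable {j₀ : ι} {c ρ r : ℝ}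

namespace HasIsolatedSite

theorem exists_mul_norm_apply_smul_add_smul_le
    (h : HasIsolatedSite Λ T (Set.Icc (c - (ρ + r)) (c + (ρ + r))) j₀)
    (hT : ∀ i ∈ Λ, IsSelfAdjoint (T i)) (hr : 0 < r) {μ₁ μ₂ : ℝ}
    (hμ₁ : μ₁ ∈ Set.Icc (c - ρ) (c + ρ)) (hμ₂ : μ₂ ∈ Set.Icc (c - ρ) (c + ρ)) {u v : H}
    (hu : (∑ i ∈ Λ, T i) u = (μ₁ : ℂ) • u) (hv : (∑ i ∈ Λ, T i) v = (μ₂ : ℂ) • v) :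
    ∃ a b : ℂ, (a ≠ 0 ∨ b ≠ 0) ∧ ∀ i ∈ Λ, r * ‖T i (a • u + b • v)‖ ≤
      ‖a‖ * ‖crossTerm Λ T i u‖ + ‖b‖ * ‖crossTerm Λ T i v‖ := by
  set I := Set.Ioo (c - (ρ + r)) (c + (ρ + r))
  obtain ⟨a, b, hab, hzero⟩ := h.exists_spectralCutoff_apply_eq_zero Set.Ioo_subset_Icc_self
    (hT j₀ h.mem) (I := I) isOpen_Ioo u v
  refine ⟨a, b, hab, fun i hi => ?_⟩
  have hcross {μ : ℝ} (hμ : μ ∈ Set.Icc (c - ρ) (c + ρ)) {w : H}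
      (hw : (∑ j ∈ Λ, T j) w = (μ : ℂ) • w) :
      r * ‖T i w - spectralCutoff I (T i) (T i w)‖ ≤ ‖crossTerm Λ T i w‖ := by
    rw [← norm_neg (crossTerm Λ T i w), ← apply_apply_sub_smul_eq_neg_crossTerm hi hw]
    exact h.mul_norm_sub_spectralCutoff_le Set.Ioo_subset_Icc_self hi (hT i hi) isOpen_Ioo hr
      (fun _ ht => le_abs_sub_of_notMem_Ioo hμ ht) _
  have hsplit : T i (a • u + b • v) = a • (T i u - spectralCutoff I (T i) (T i u)) +
      b • (T i v - spectralCutoff I (T i) (T i v)) := by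
    rw [← sub_zero (T i _), ← hzero i hi]
    simp only [map_add, map_smul, smul_sub]
    abel
  calc r * ‖T i (a • u + b • v)‖
      ≤ r * (‖a‖ * ‖T i u - spectralCutoff I (T i) (T i u)‖ +
          ‖b‖ * ‖T i v - spectralCutoff I (T i) (T i v)‖) := by
        rw [hsplit]; gcongr; exact (norm_add_le _ _).trans_eq (by rw [norm_smul, norm_smul])
    _ = ‖a‖ * (r * ‖T i u - spectralCutoff I (T i) (T i u)‖) +
          ‖b‖ * (r * ‖T i v - spectralCutoff I (T i) (T i v)‖) := by ring
    _ ≤ _ := by gcongr; exacts [hcross hμ₁ hu, hcross hμ₂ hv]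

theorem exists_sum_norm_apply_smul_add_smul_sq_le
    (h : HasIsolatedSite Λ T (Set.Icc (c - (ρ + r)) (c + (ρ + r))) j₀)
    (hT : ∀ i ∈ Λ, IsSelfAdjoint (T i)) {θ : ℝ}
    (happly : ∀ u, ∑ i ∈ Λ, ‖crossTerm Λ T i u‖ ^ 2 ≤ θ ^ 2 * ‖u‖ ^ 2) (hr : 0 < r) {μ₁ μ₂ : ℝ}
    (hμ₁ : μ₁ ∈ Set.Icc (c - ρ) (c + ρ)) (hμ₂ : μ₂ ∈ Set.Icc (c - ρ) (c + ρ)) {u v : H}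
    (hu : (∑ i ∈ Λ, T i) u = (μ₁ : ℂ) • u) (hv : (∑ i ∈ Λ, T i) v = (μ₂ : ℂ) • v)
    (horth : ⟪u, v⟫_ℂ = 0) :
    ∃ a b : ℂ, (a ≠ 0 ∨ b ≠ 0) ∧
      r ^ 2 * ∑ i ∈ Λ, ‖T i (a • u + b • v)‖ ^ 2 ≤ 2 * θ ^ 2 * ‖a • u + b • v‖ ^ 2 := by
  obtain ⟨a, b, hab, hle⟩ := h.exists_mul_norm_apply_smul_add_smul_le hT hr hμ₁ hμ₂ hu hv
  refine ⟨a, b, hab, ?_⟩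
  calc r ^ 2 * ∑ i ∈ Λ, ‖T i (a • u + b • v)‖ ^ 2
      ≤ ∑ i ∈ Λ, 2 * (‖a‖ ^ 2 * ‖crossTerm Λ T i u‖ ^ 2 + ‖b‖ ^ 2 * ‖crossTerm Λ T i v‖ ^ 2) := by
        rw [Finset.mul_sum]
        refine Finset.sum_le_sum fun i hi => ?_
        rw [← mul_pow, ← mul_pow, ← mul_pow]
        exact (pow_le_pow_left₀ (by positivity) (hle i hi) 2).trans add_sq_le
    _ = 2 * (‖a‖ ^ 2 * ∑ i ∈ Λ, ‖crossTerm Λ T i u‖ ^ 2 +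
          ‖b‖ ^ 2 * ∑ i ∈ Λ, ‖crossTerm Λ T i v‖ ^ 2) := by
        rw [← Finset.mul_sum, Finset.sum_add_distrib, Finset.mul_sum, Finset.mul_sum]
    _ ≤ 2 * (‖a‖ ^ 2 * (θ ^ 2 * ‖u‖ ^ 2) + ‖b‖ ^ 2 * (θ ^ 2 * ‖v‖ ^ 2)) := by
        gcongr; exacts [happly u, happly v]
    _ = 2 * θ ^ 2 * ‖a • u + b • v‖ ^ 2 := by
        rw [norm_smul_add_smul_sq_of_inner_eq_zero horth]; ring

-- A combination of two orthogonal eigenvectors that the cutoff at `j₀` annihilates is almost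
-- annihilated by every site, whereas `∑ i ∈ Λ, T i` enlarges it by the factor `m`.
theorem hasAtMostOneEigenvalue_of_crossTerm_le
    (h : HasIsolatedSite Λ T (Set.Icc (c - (ρ + r)) (c + (ρ + r))) j₀)
    (hT : ∀ i ∈ Λ, IsSelfAdjoint (T i)) {θ m : ℝ} (hsum : ‖∑ i ∈ Λ, crossTerm Λ T i‖ ≤ θ)
    (happly : ∀ u, ∑ i ∈ Λ, ‖crossTerm Λ T i u‖ ^ 2 ≤ θ ^ 2 * ‖u‖ ^ 2)
    (hm : 0 < m) (hmc : m ≤ c - ρ) (hr : 0 < r) (hθr : 2 * θ ≤ m * r) (hθm : 2 * θ < m ^ 2) :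
    HasAtMostOneEigenvalue (∑ i ∈ Λ, T i) (Set.Icc (c - ρ) (c + ρ)) := by
  intro μ₁ hμ₁ μ₂ hμ₂ u v hu hv hu0 hv0 huv
  have horth : ⟪u, v⟫_ℂ = 0 := huv.elim
    (fun hne => inner_eq_zero_of_isSelfAdjoint_of_ne (isSelfAdjoint_sum Λ hT) hne hu hv) id
  obtain ⟨a, b, hab, hsites⟩ :=
    h.exists_sum_norm_apply_smul_add_smul_sq_le hT happly hr hμ₁ hμ₂ hu hv horth
  set z := a • u + b • v
  have hpos : 0 < ‖z‖ ^ 2 := norm_smul_add_smul_sq_pos_of_inner_eq_zero horth hu0 hv0 hab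
  have hlower : m ^ 2 * ‖z‖ ^ 2 ≤ ‖(∑ i ∈ Λ, T i) z‖ ^ 2 :=
    mul_norm_sq_le_norm_apply_sq_of_inner_eq_zero horth hu hv hm.le (hmc.trans hμ₁.1)
      (hmc.trans hμ₂.1) a b
  have hupper := (norm_sum_apply_sq_le hT z).trans
    (add_le_add_right (mul_le_mul_of_nonneg_right hsum hpos.le) _)
  have hratio : 2 * θ ^ 2 ≤ m ^ 2 / 2 * r ^ 2 := by
    have hθ : 0 ≤ θ := (norm_nonneg _).trans hsum
    nlinarith [pow_le_pow_left₀ (by positivity) hθr 2]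
  have hsites' : ∑ i ∈ Λ, ‖T i z‖ ^ 2 ≤ m ^ 2 / 2 * ‖z‖ ^ 2 := by
    refine le_of_mul_le_mul_left (hsites.trans ?_) (pow_pos hr 2)
    nlinarith [mul_le_mul_of_nonneg_right hratio hpos.le]
  nlinarith

end HasIsolatedSite

namespace IsAlmostOrthogonal

variable {K η m : ℝ}

-- A site other than `j₀` has a spectral gap of size `r` around `μ`, which is impossible when `r`
-- exceeds `‖T i‖ + |μ|`; hence there is no other site, and no cross term.
theorem hasAtMostOneEigenvalue_of_lt (h : IsAlmostOrthogonal Λ T K η)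
    (hsite : HasIsolatedSite Λ T (Set.Icc (c - (ρ + r)) (c + (ρ + r))) j₀)
    (hm : 0 < m) (hmc : m ≤ c - ρ) (hr : 0 < r) (hKr : 2 * K ^ 2 < r) :
    HasAtMostOneEigenvalue (∑ i ∈ Λ, T i) (Set.Icc (c - ρ) (c + ρ)) := by
  intro μ₁ hμ₁ μ₂ hμ₂ u v hu hv hu0 hv0
  have honly : ∀ i ∈ Λ, i = j₀ := by
    intro i hi
    by_contra hne
    have hgap : r * ‖u‖ ≤ ‖T i u - (μ₁ : ℂ) • u‖ := by
      simpa only [hsite.spectralCutoff_eq_zero Set.Ioo_subset_Icc_self hi hne, zero_apply,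
        sub_zero] using hsite.mul_norm_sub_spectralCutoff_le Set.Ioo_subset_Icc_self hi
          (h.isSelfAdjoint i hi) isOpen_Ioo hr (fun _ ht => le_abs_sub_of_notMem_Ioo hμ₁ ht) u
    have hle : ‖T i u - (μ₁ : ℂ) • u‖ ≤ (K ^ 2 + K ^ 2) * ‖u‖ := by
      refine (norm_sub_le _ _).trans ?_
      rw [norm_smul, Complex.norm_real, Real.norm_eq_abs, add_mul]
      gcongr
      · exact (T i).le_of_opNorm_le (h.norm_le hi) u
      · exact (abs_eigenvalue_le_norm hu hu0).trans h.norm_sum_le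
    nlinarith [norm_pos_iff.2 hu0]
  have hcross : ∀ i ∈ Λ, crossTerm Λ T i = 0 := by
    intro i hi
    have : Λ.erase i = ∅ := Finset.eq_empty_of_forall_notMem fun j hj =>
      Finset.ne_of_mem_erase hj ((honly j (Finset.mem_of_mem_erase hj)).trans (honly i hi).symm)
    rw [crossTerm, this, Finset.sum_empty, mul_zero]
  refine hsite.hasAtMostOneEigenvalue_of_crossTerm_le h.isSelfAdjoint (θ := 0)
    (by rw [Finset.sum_eq_zero hcross, norm_zero]) (fun w => ?_) hm hmc hr (by nlinarith)
    (by nlinarith) μ₁ hμ₁ μ₂ hμ₂ u v hu hv hu0 hv0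
  rw [Finset.sum_eq_zero fun i hi => by rw [hcross i hi]; simp]
  positivity

theorem hasAtMostOneEigenvalue_sum (h : IsAlmostOrthogonal Λ T K η)
    (hsite : HasIsolatedSite Λ T (Set.Icc (c - (ρ + r)) (c + (ρ + r))) j₀)
    (hm : 0 < m) (hmc : m ≤ c - ρ) (hr : K ^ 2 * η ^ 2 * (2 / m + 4 * K ^ 2 / m ^ 2) < r) :
    HasAtMostOneEigenvalue (∑ i ∈ Λ, T i) (Set.Icc (c - ρ) (c + ρ)) := by
  have hr0 : 0 < r := lt_of_le_of_lt (by positivity) hr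
  rcases lt_or_ge (2 * K ^ 2) r with hKr | hKr
  · exact h.hasAtMostOneEigenvalue_of_lt hsite hm hmc hr0 hKr
  · set θ := K ^ 2 * η ^ 2
    have hθ : 0 ≤ θ := by positivity
    rw [mul_add] at hr
    have hθr : θ * (2 / m) < r := lt_of_le_of_lt (le_add_of_nonneg_right (by positivity)) hr
    have hθm : θ * (4 * K ^ 2 / m ^ 2) < 2 * K ^ 2 :=
      lt_of_le_of_lt (le_add_of_nonneg_left (by positivity)) (hr.trans_le hKr)
    refine hsite.hasAtMostOneEigenvalue_of_crossTerm_le h.isSelfAdjoint h.norm_sum_crossTerm_le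
      h.sum_norm_crossTerm_apply_sq_le hm hmc hr0 ?_ ?_
    · field_simp at hθr
      linarith
    · have hK : 0 < K ^ 2 := by linarith
      refine lt_of_mul_lt_mul_left (?_ : K ^ 2 * (2 * θ) < K ^ 2 * m ^ 2) hK.le
      field_simp at hθm
      linarith

end IsAlmostOrthogonal

end Family

end IsolatedSite

section Negligible

open Asymptotics Filter

/-- A function on `(0, 1)` is `O(h^∞)`. Taking the filter `𝓟 (0, 1)` makes the bounds uniform on the
whole interval, not only near `0`. -/
def IsNegligible (f : ℝ → ℝ) : Prop :=
  ∀ N : ℕ, f =O[𝓟 (Set.Ioo 0 1)] fun h => h ^ N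

theorem isBigO_principal_Ioo_of_le {f : ℝ → ℝ} {g : ℝ → ℝ} {C : ℝ}
    (hf : ∀ h ∈ Set.Ioo (0 : ℝ) 1, 0 ≤ f h) (hfg : ∀ h ∈ Set.Ioo (0 : ℝ) 1, f h ≤ C * g h)
    (hg : ∀ h ∈ Set.Ioo (0 : ℝ) 1, 0 ≤ g h) :
    f =O[𝓟 (Set.Ioo 0 1)] g :=
  IsBigO.of_bound C <| eventually_principal.2 fun h hh => by
    rw [Real.norm_of_nonneg (hf h hh), Real.norm_of_nonneg (hg h hh)]
    exact hfg h hh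

namespace IsNegligible

variable {f g : ℝ → ℝ}

theorem add (hf : IsNegligible f) (hg : IsNegligible g) : IsNegligible fun h => f h + g h :=
  fun N => (hf N).add (hg N)

theorem mul_of_isBigO_inv_pow (hf : IsNegligible f) {p : ℕ}
    (hg : g =O[𝓟 (Set.Ioo 0 1)] fun h => (h ^ p)⁻¹) : IsNegligible fun h => f h * g h := by
  intro N
  refine ((hf (N + p)).mul hg).congr' .rfl (eventually_principal.2 fun h hh => ?_)
  have := (pow_pos hh.1 p).ne'
  simp only [pow_add]
  field_simp

theorem sqrt (hf : IsNegligible f) : IsNegligible fun h => √(f h) := by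
  intro N
  refine ((hf (N * 2)).sqrt (eventually_principal.2 fun h hh => pow_nonneg hh.1.le _)).congr' .rfl
    (eventually_principal.2 fun h hh => ?_)
  simp only [pow_mul, Real.sqrt_sq (pow_nonneg hh.1.le N)]

theorem exp_neg_inv : IsNegligible fun h => Real.exp (-h⁻¹) := by
  intro N
  refine isBigO_principal_Ioo_of_le (C := N.factorial) (fun h _ => (Real.exp_pos _).le)
    (fun h hh => ?_) fun h hh => by have := hh.1; positivity
  have hexp := Real.pow_div_factorial_le_exp h⁻¹ (inv_nonneg.2 hh.1.le) N
  have := pow_pos hh.1 N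
  rw [Real.exp_neg, inv_le_comm₀ (Real.exp_pos _) (by positivity)]
  rwa [mul_inv, ← inv_pow, ← div_eq_inv_mul]

theorem exists_le_mul_rpow (hf : IsNegligible f) (N : ℝ) :
    ∃ C, ∀ h, 0 < h → h < 1 → f h ≤ C * h ^ N := by
  obtain ⟨C, hC0, hC⟩ := (hf ⌈N⌉₊).exists_nonneg
  refine ⟨C, fun h hh hh1 => (le_abs_self _).trans
    ((eventually_principal.1 hC.bound h ⟨hh, hh1⟩).trans ?_)⟩
  rw [Real.norm_of_nonneg (by positivity), ← Real.rpow_natCast]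
  exact mul_le_mul_of_nonneg_left
    (Real.rpow_le_rpow_of_exponent_ge hh hh1.le (Nat.le_ceil N)) hC0

end IsNegligible

theorem exists_isNegligible_of_forall_le {F : ℝ → Set ℝ}
    (hF : ∀ N : ℕ, ∃ C, ∀ h ∈ Set.Ioo (0 : ℝ) 1, ∀ x ∈ F h, x ≤ C * h ^ N) :
    ∃ ω : ℝ → ℝ, IsNegligible ω ∧ ∀ h ∈ Set.Ioo (0 : ℝ) 1, ∀ x ∈ F h, x ≤ ω h := by
  have hbdd {h : ℝ} (hh : h ∈ Set.Ioo (0 : ℝ) 1) : BddAbove (insert 0 (F h)) := by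
    obtain ⟨C, hC⟩ := hF 0
    exact BddAbove.insert 0 ⟨C * h ^ 0, fun x => hC h hh x⟩
  have hnonneg (h : ℝ) : 0 ≤ sSup (insert 0 (F h)) := by
    by_cases hb : BddAbove (insert 0 (F h))
    · exact le_csSup hb (Set.mem_insert 0 _)
    · exact (Real.sSup_of_not_bddAbove hb).ge
  refine ⟨fun h => sSup (insert 0 (F h)), fun N => ?_,
    fun h hh x hx => le_csSup (hbdd hh) (Set.mem_insert_of_mem 0 hx)⟩
  obtain ⟨C, hC⟩ := hF N
  refine isBigO_principal_Ioo_of_le (C := |C|) (fun h _ => hnonneg h)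
    (fun h hh => csSup_le (Set.insert_nonempty 0 _) ?_) fun h hh => pow_nonneg hh.1.le N
  have := hh.1
  rintro x (rfl | hx)
  · positivity
  · exact (hC h hh x hx).trans (by gcongr; exact le_abs_self C)

end Negligible

section PhaseReflections

/-- The standard symplectic form on the phase plane, bundled as a continuous bilinear form so that
it can serve as the pairing of a vector Fourier transform. -/
def symplecticForm : (ℝ × ℝ) →L[ℝ] (ℝ × ℝ) →L[ℝ] ℝ :=
  (ContinuousLinearMap.fst ℝ ℝ ℝ).smulRight (ContinuousLinearMap.snd ℝ ℝ ℝ) -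
    (ContinuousLinearMap.snd ℝ ℝ ℝ).smulRight (ContinuousLinearMap.fst ℝ ℝ ℝ)

theorem symplecticForm_apply (v w : ℝ × ℝ) : symplecticForm v w = v.1 * w.2 - v.2 * w.1 := by
  simp [symplecticForm]

theorem inner_eq_integral_conj_mul (v w : L2R) : ⟪v, w⟫_ℂ = ∫ y, (starRingEnd ℂ) (v y) * w y := by
  rw [L2.inner_def]
  simp only [RCLike.inner_apply']

/-- The reflection of the function `u` in the phase point `z = (x, ξ)`, as an unbundled function
of `y`. -/
def phaseReflectionFun (h : ℝ) (z : ℝ × ℝ) (u : ℝ → ℂ) (y : ℝ) : ℂ :=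
  Circle.exp (2 / h * (y - z.1) * z.2) * u (2 * z.1 - y)

theorem norm_phaseReflectionFun (h : ℝ) (z : ℝ × ℝ) (u : ℝ → ℂ) (y : ℝ) :
    ‖phaseReflectionFun h z u y‖ = ‖u (2 * z.1 - y)‖ := by
  rw [phaseReflectionFun, norm_mul, Circle.norm_coe, one_mul]

theorem measurable_uncurry_phaseReflectionFun (h : ℝ) {u : ℝ → ℂ} (hu : Measurable u) :
    Measurable fun p : (ℝ × ℝ) × ℝ => phaseReflectionFun h p.1 u p.2 :=
  (by fun_prop : Continuous fun p : (ℝ × ℝ) × ℝ =>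
    (Circle.exp (2 / h * (p.2 - p.1.1) * p.1.2) : ℂ)).measurable.mul (hu.comp (by fun_prop))

theorem eLpNorm_phaseReflectionFun (h : ℝ) (z : ℝ × ℝ) (u : L2R) :
    eLpNorm (phaseReflectionFun h z u) 2 volume = eLpNorm u 2 volume := by
  rw [← eLpNorm_comp_measurePreserving (Lp.aestronglyMeasurable u)
    (Measure.measurePreserving_sub_left volume (2 * z.1))]
  exact eLpNorm_congr_norm_ae (.of_forall (norm_phaseReflectionFun h z u))

theorem memLp_phaseReflectionFun (h : ℝ) (z : ℝ × ℝ) (u : L2R) :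
    MemLp (phaseReflectionFun h z u) 2 volume := by
  refine ⟨?_, (eLpNorm_phaseReflectionFun h z u).trans_lt (Lp.memLp u).2⟩
  exact ((measurable_uncurry_phaseReflectionFun h (Lp.stronglyMeasurable u).measurable).comp
    measurable_prodMk_left).aestronglyMeasurable

/-- The phase-space reflection `u ↦ e^{2i(y - x)ξ/h} u(2x - y)` in the point `z = (x, ξ)`, acting on
`L²(ℝ)`. The Weyl quantization of `a` is the average of these reflections with weight `a`. -/
def phaseReflection (h : ℝ) (z : ℝ × ℝ) (u : L2R) : L2R :=
  (memLp_phaseReflectionFun h z u).toLp _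

theorem coeFn_phaseReflection (h : ℝ) (z : ℝ × ℝ) (u : L2R) :
    phaseReflection h z u =ᵐ[volume] phaseReflectionFun h z u :=
  MemLp.coeFn_toLp _

theorem norm_phaseReflection (h : ℝ) (z : ℝ × ℝ) (u : L2R) : ‖phaseReflection h z u‖ = ‖u‖ := by
  rw [phaseReflection, Lp.norm_toLp, eLpNorm_phaseReflectionFun, Lp.norm_def]

theorem inner_phaseReflection_eq_integral (h : ℝ) (z : ℝ × ℝ) (v u : L2R) :
    ⟪v, phaseReflection h z u⟫_ℂ = ∫ y, (starRingEnd ℂ) (v y) * phaseReflectionFun h z u y := by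
  rw [inner_eq_integral_conj_mul]
  refine integral_congr_ae ?_
  filter_upwards [coeFn_phaseReflection h z u] with y hy
  rw [hy]

theorem inner_phaseReflection_left (h : ℝ) (z : ℝ × ℝ) (v u : L2R) :
    ⟪phaseReflection h z v, u⟫_ℂ = ⟪v, phaseReflection h z u⟫_ℂ := by
  rw [← inner_conj_symm, inner_phaseReflection_eq_integral, inner_phaseReflection_eq_integral,
    ← integral_conj, ← integral_sub_left_eq_self _ volume (2 * z.1)]
  congr 1 with y
  have hphase : (starRingEnd ℂ) (Circle.exp (2 / h * (2 * z.1 - y - z.1) * z.2) : ℂ) =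
      Circle.exp (2 / h * (y - z.1) * z.2) := by
    rw [← Circle.coe_inv_eq_conj, ← Circle.exp_neg]
    congr 2
    ring
  simp only [phaseReflectionFun, map_mul, Complex.conj_conj, hphase, sub_sub_cancel]
  ring

theorem phaseReflection_phaseReflection (h : ℝ) (z z' : ℝ × ℝ) (u : L2R) :
    phaseReflection h z (phaseReflection h z' u) =
      (Circle.exp (2 / h * symplecticForm (z - z') z') : ℂ) •
        phaseReflection h (z - z') (phaseReflection h 0 u) := by
  have hcomp (x w : ℝ × ℝ) : phaseReflection h x (phaseReflection h w u) =ᵐ[volume]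
      phaseReflectionFun h x (phaseReflectionFun h w u) := by
    have hmp := (Measure.measurePreserving_sub_left (volume : Measure ℝ)
      (2 * x.1)).quasiMeasurePreserving
    filter_upwards [coeFn_phaseReflection h x (phaseReflection h w u),
      hmp.ae_eq_comp (coeFn_phaseReflection h w u)] with y hy hy'
    simp only [Function.comp_apply] at hy'
    rw [hy, phaseReflectionFun, phaseReflectionFun, hy']
  refine Lp.ext ?_
  filter_upwards [hcomp z z', hcomp (z - z') 0, Lp.coeFn_smul
    (Circle.exp (2 / h * symplecticForm (z - z') z') : ℂ)
    (phaseReflection h (z - z') (phaseReflection h 0 u))] with y hleft hright hsmul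
  rw [hleft, hsmul, Pi.smul_apply, hright]
  simp only [phaseReflectionFun, smul_eq_mul, ← mul_assoc, ← Circle.coe_mul, ← Circle.exp_add,
    symplecticForm_apply, Prod.fst_sub, Prod.snd_sub, Prod.fst_zero, Prod.snd_zero]
  rw [show 2 * z'.1 - (2 * z.1 - y) = 2 * 0 - (2 * (z.1 - z'.1) - y) by ring]
  congr 3
  ring

theorem stronglyMeasurable_inner_phaseReflection (h : ℝ) (v u : L2R) :
    StronglyMeasurable fun z => ⟪v, phaseReflection h z u⟫_ℂ := by
  simp only [inner_phaseReflection_eq_integral]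
  have hv : Measurable fun p : (ℝ × ℝ) × ℝ => (starRingEnd ℂ) (v p.2) :=
    Complex.continuous_conj.measurable.comp
      ((Lp.stronglyMeasurable v).measurable.comp measurable_snd)
  exact (hv.mul (measurable_uncurry_phaseReflectionFun h
    (Lp.stronglyMeasurable u).measurable)).stronglyMeasurable.integral_prod_right'

theorem norm_inner_phaseReflection_le (h : ℝ) (z : ℝ × ℝ) (v u : L2R) :
    ‖⟪v, phaseReflection h z u⟫_ℂ‖ ≤ ‖v‖ * ‖u‖ :=
  (norm_inner_le_norm _ _).trans_eq (by rw [norm_phaseReflection])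

theorem integrable_mul_conj_mul_phaseReflectionFun (h : ℝ) {a : ℝ × ℝ → ℝ} (ha : Integrable a)
    (v u : L2R) :
    Integrable (fun p : (ℝ × ℝ) × ℝ =>
      (a p.1 : ℂ) * ((starRingEnd ℂ) (v p.2) * phaseReflectionFun h p.1 u p.2))
      (volume.prod volume) := by
  have hu := (Lp.stronglyMeasurable u).measurable
  have hv := (Lp.stronglyMeasurable v).measurable
  have hsq (w : L2R) : Integrable (fun p : (ℝ × ℝ) × ℝ => ‖a p.1‖ * ‖w p.2‖ ^ 2)
      (volume.prod volume) :=
    ha.norm.mul_prod ((Lp.memLp w).integrable_norm_pow two_ne_zero)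
  have hskew : MeasurePreserving (fun p : (ℝ × ℝ) × ℝ => (p.1, 2 * p.1.1 - p.2))
      (volume.prod volume) (volume.prod volume) :=
    (MeasurePreserving.id volume).skew_product (g := fun (z : ℝ × ℝ) (y : ℝ) => 2 * z.1 - y)
      (by fun_prop)
      (.of_forall fun z => (Measure.measurePreserving_sub_left _ (2 * z.1)).map_eq)
  refine ((hsq v).add (hskew.integrable_comp_of_integrable (hsq u))).mono' ?_ (.of_forall ?_)
  · exact (Complex.continuous_ofReal.comp_aestronglyMeasurable
      ha.aestronglyMeasurable.comp_fst).mul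
      ((Complex.continuous_conj.measurable.comp (hv.comp measurable_snd)).mul
        (measurable_uncurry_phaseReflectionFun h hu)).aestronglyMeasurable
  · rintro ⟨z, y⟩
    simp only [norm_mul, Complex.norm_real, RCLike.norm_conj, norm_phaseReflectionFun,
      Pi.add_apply, Function.comp_apply, ← mul_add]
    gcongr
    nlinarith [sq_nonneg (‖v y‖ - ‖u (2 * z.1 - y)‖), sq_nonneg (‖v y‖ + ‖u (2 * z.1 - y)‖)]

end PhaseReflections

section WeylOperators

variable {h : ℝ} {a b : ℝ × ℝ → ℝ} {S T : L2R →L[ℂ] L2R}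

theorem integral_mul_phaseReflectionFun_eq_integral_weylKernel (hh : 0 < h) (u : ℝ → ℂ) {y : ℝ}
    (hy : Integrable fun z => (a z : ℂ) * phaseReflectionFun h z u y) :
    ∫ z, (a z : ℂ) * phaseReflectionFun h z u y =
      ((π * h : ℝ) : ℂ) * ∫ y', weylKernel h a y y' * u y' := by
  have hξ (x : ℝ) : ∫ ξ, (a (x, ξ) : ℂ) * phaseReflectionFun h (x, ξ) u y =
      ((2 * (π * h) : ℝ) : ℂ) * (weylKernel h a y (2 * x - y) * u (2 * x - y)) := by
    have hc : ((2 * (π * h) : ℝ) : ℂ) * ((1 / (2 * π * h) : ℝ) : ℂ) = 1 := by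
      rw [← Complex.ofReal_mul, ← mul_assoc, mul_one_div_cancel (by positivity), Complex.ofReal_one]
    rw [weylKernel, ← mul_assoc, ← mul_assoc, hc, one_mul, ← integral_mul_const]
    congr 1 with ξ
    rw [phaseReflectionFun, Circle.coe_exp, add_sub_cancel, mul_div_cancel_left₀ x two_ne_zero,
      show (y - (2 * x - y)) * ξ / h = 2 / h * (y - x) * ξ by ring, mul_comm Complex.I]
    ring
  calc ∫ z, (a z : ℂ) * phaseReflectionFun h z u y
      = ∫ x, ∫ ξ, (a (x, ξ) : ℂ) * phaseReflectionFun h (x, ξ) u y := integral_prod _ hy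
    _ = ((2 * (π * h) : ℝ) : ℂ) * ∫ x, weylKernel h a y (2 * x - y) * u (2 * x - y) := by
        simp only [hξ, integral_const_mul]
    _ = ((2 * (π * h) : ℝ) : ℂ) * ((2⁻¹ : ℝ) * ∫ y', weylKernel h a y y' * u y') := by
        rw [Measure.integral_comp_mul_left (fun x => weylKernel h a y (x - y) * u (x - y)) 2,
          integral_sub_right_eq_self (fun x => weylKernel h a y x * u x) y,
          abs_of_pos (by norm_num), Complex.real_smul]
    _ = ((π * h : ℝ) : ℂ) * ∫ y', weylKernel h a y y' * u y' := by
        rw [← mul_assoc, ← Complex.ofReal_mul, mul_right_comm, mul_inv_cancel₀ two_ne_zero, one_mul]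

theorem IsWeylQuant.inner_apply (hT : IsWeylQuant h a T) (hh : 0 < h) (ha : Integrable a)
    (v u : L2R) :
    ⟪v, T u⟫_ℂ = (((π * h)⁻¹ : ℝ) : ℂ) * ∫ z, (a z : ℂ) * ⟪v, phaseReflection h z u⟫_ℂ := by
  have hint := integrable_mul_conj_mul_phaseReflectionFun h ha v u
  simp only [inner_phaseReflection_eq_integral, ← integral_const_mul (a _ : ℂ)]
  rw [integral_integral_swap hint, inner_eq_integral_conj_mul, ← integral_const_mul]
  refine integral_congr_ae ?_
  filter_upwards [hT u, hint.swap.prod_right_ae] with y hTy hy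
  have hc : (((π * h)⁻¹ : ℝ) : ℂ) * ((π * h : ℝ) : ℂ) = 1 := by
    rw [← Complex.ofReal_mul, inv_mul_cancel₀ (by positivity), Complex.ofReal_one]
  by_cases hv : v y = 0
  · simp [hv]
  have hconj : (starRingEnd ℂ) (v y) ≠ 0 := (map_ne_zero _).2 hv
  simp only [Function.comp_apply, Prod.swap_prod_mk, mul_left_comm _ ((starRingEnd ℂ) (v y)),
    integral_const_mul] at hy ⊢
  rw [hTy, integral_mul_phaseReflectionFun_eq_integral_weylKernel hh u
    ((integrable_const_mul_iff hconj.isUnit _).1 hy), ← mul_assoc _ ((π * h : ℝ) : ℂ), hc, one_mul]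

theorem IsWeylQuant.isSelfAdjoint (hT : IsWeylQuant h a T) (hh : 0 < h) (ha : Integrable a) :
    IsSelfAdjoint T := by
  rw [ContinuousLinearMap.isSelfAdjoint_iff_isSymmetric]
  intro u v
  simp only [ContinuousLinearMap.coe_coe]
  rw [← inner_conj_symm, hT.inner_apply hh ha, hT.inner_apply hh ha, map_mul, ← integral_conj]
  simp only [map_mul, Complex.conj_ofReal, inner_conj_symm, inner_phaseReflection_left]

theorem norm_le_of_inner_eq_integral {α E : Type*} [MeasurableSpace α] {μ : Measure α}
    [NormedAddCommGroup E] [InnerProductSpace ℂ E] {A : E →L[ℂ] E} {U : α → E → E} {g : α → ℂ}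
    {c : ℂ} (hU : ∀ z u, ‖U z u‖ ≤ ‖u‖) (hg : Integrable g μ)
    (hA : ∀ v u, ⟪v, A u⟫_ℂ = c * ∫ z, g z * ⟪v, U z u⟫_ℂ ∂μ) : ‖A‖ ≤ ‖c‖ * ∫ z, ‖g z‖ ∂μ := by
  refine A.opNorm_le_of_re_inner_le (mul_nonneg (norm_nonneg _)
    (integral_nonneg fun _ => norm_nonneg _)) fun u v hu hv => (Complex.re_le_norm _).trans ?_
  rw [norm_inner_symm, hA, norm_mul]
  gcongr
  refine norm_integral_le_of_norm_le hg.norm (.of_forall fun z => ?_)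
  rw [norm_mul]
  refine mul_le_of_le_one_right (norm_nonneg _) ((norm_inner_le_norm _ _).trans ?_)
  rw [hv, one_mul]
  exact (hU z u).trans_eq hu

theorem IsWeylQuant.norm_le (hT : IsWeylQuant h a T) (hh : 0 < h) (ha : Integrable a) :
    ‖T‖ ≤ (π * h)⁻¹ * ∫ z, ‖a z‖ := by
  have := norm_le_of_inner_eq_integral (fun z u => (norm_phaseReflection h z u).le) ha.ofReal
    (hT.inner_apply hh ha)
  rw [Complex.norm_real, Real.norm_of_nonneg (by positivity)] at this
  simpa only [RCLike.norm_ofReal, Real.norm_eq_abs] using this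

/-- The symbol, up to a constant, of a product of two Weyl quantizations with respect to the
phase translations `R_s R_0`. -/
def twistedCorrelation (h : ℝ) (a b : ℝ × ℝ → ℝ) (s : ℝ × ℝ) : ℂ :=
  ∫ z, (Circle.exp (2 / h * symplecticForm s z) : ℂ) * (a (z + s) * b z : ℝ)

theorem integrable_twistedCorrelation_integrand (h : ℝ) (ha : Integrable a) (hb : Integrable b) :
    Integrable (fun p : (ℝ × ℝ) × (ℝ × ℝ) =>
      (Circle.exp (2 / h * symplecticForm p.1 p.2) : ℂ) * (a (p.2 + p.1) * b p.2 : ℝ))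
      (volume.prod volume) := by
  have hab : Integrable (fun p : (ℝ × ℝ) × (ℝ × ℝ) => a (p.2 + p.1) * b p.2)
      (volume.prod volume) := by
    simpa only [Function.comp_def, add_comm] using
      (measurePreserving_add_prod volume volume).integrable_comp_of_integrable (ha.mul_prod hb)
  refine hab.ofReal.bdd_mul (c := 1) (Continuous.aestronglyMeasurable ?_) (.of_forall fun p => ?_)
  · fun_prop
  · rw [Circle.norm_coe]

theorem integrable_twistedCorrelation (h : ℝ) (ha : Integrable a) (hb : Integrable b) :
    Integrable (twistedCorrelation h a b) :=
  (integrable_twistedCorrelation_integrand h ha hb).integral_prod_left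

theorem integral_integral_mul_inner_phaseReflection (h : ℝ) (ha : Integrable a)
    (hb : Integrable b) (v u : L2R) :
    ∫ z, (a z : ℂ) * ∫ z', (b z' : ℂ) * ⟪v, phaseReflection h z (phaseReflection h z' u)⟫_ℂ =
      ∫ s, twistedCorrelation h a b s * ⟪v, phaseReflection h s (phaseReflection h 0 u)⟫_ℂ := by
  set Ψ : ℝ × ℝ → ℝ × ℝ → ℂ := fun s z' =>
    (Circle.exp (2 / h * symplecticForm s z') : ℂ) * (a (z' + s) * b z' : ℝ) *
      ⟪v, phaseReflection h s (phaseReflection h 0 u)⟫_ℂ with hΨ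
  have hint : Integrable (Function.uncurry Ψ) (volume.prod volume) :=
    (integrable_twistedCorrelation_integrand h ha hb).mul_bdd (c := ‖v‖ * ‖phaseReflection h 0 u‖)
      (stronglyMeasurable_inner_phaseReflection h v
        (phaseReflection h 0 u)).aestronglyMeasurable.comp_fst
      (.of_forall fun p => norm_inner_phaseReflection_le h p.1 v _)
  have hshear (z z' : ℝ × ℝ) : (a z : ℂ) * ((b z' : ℂ) *
      ⟪v, phaseReflection h z (phaseReflection h z' u)⟫_ℂ) = Ψ (z - z') z' := by
    rw [phaseReflection_phaseReflection, inner_smul_right, hΨ]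
    simp only [add_sub_cancel, Complex.ofReal_mul]
    ring
  calc ∫ z, (a z : ℂ) * ∫ z', (b z' : ℂ) * ⟪v, phaseReflection h z (phaseReflection h z' u)⟫_ℂ
      = ∫ z, ∫ z', Ψ (z - z') z' := by simp only [← integral_const_mul, hshear]
    _ = ∫ z', ∫ z, Ψ (z - z') z' := integral_integral_swap
        ((measurePreserving_sub_prod volume volume).integrable_comp_of_integrable hint)
    _ = ∫ z', ∫ s, Ψ s z' := by
        congr 1 with z'
        exact integral_sub_right_eq_self (Ψ · z') z'
    _ = ∫ s, ∫ z', Ψ s z' := (integral_integral_swap hint).symm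
    _ = _ := by simp only [hΨ, integral_mul_const, twistedCorrelation]

theorem IsWeylQuant.inner_mul_apply (hS : IsWeylQuant h a S) (hT : IsWeylQuant h b T) (hh : 0 < h)
    (ha : Integrable a) (hb : Integrable b) (v u : L2R) :
    ⟪v, (S * T) u⟫_ℂ = ((((π * h)⁻¹) ^ 2 : ℝ) : ℂ) *
      ∫ s, twistedCorrelation h a b s * ⟪v, phaseReflection h s (phaseReflection h 0 u)⟫_ℂ := by
  rw [← integral_integral_mul_inner_phaseReflection h ha hb, mul_apply_eq_comp,
    hS.inner_apply hh ha, pow_two, Complex.ofReal_mul, mul_assoc]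
  simp only [← inner_phaseReflection_left _ _ v, hT.inner_apply hh hb,
    mul_left_comm (a _ : ℂ), integral_const_mul]

theorem IsWeylQuant.norm_mul_le (hS : IsWeylQuant h a S) (hT : IsWeylQuant h b T) (hh : 0 < h)
    (ha : Integrable a) (hb : Integrable b) :
    ‖S * T‖ ≤ ((π * h)⁻¹) ^ 2 * ∫ s, ‖twistedCorrelation h a b s‖ := by
  have := norm_le_of_inner_eq_integral (fun s u => ((norm_phaseReflection h s _).trans
    (norm_phaseReflection h 0 u)).le) (integrable_twistedCorrelation h ha hb)
    (hS.inner_mul_apply hT hh ha hb)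
  rwa [Complex.norm_real, Real.norm_of_nonneg (by positivity)] at this

end WeylOperators

section SmoothSymbols

open scoped ContDiff

theorem norm_iteratedFDeriv_le_mul_pow_of_notMem_tsupport {E F : Type*} [NormedAddCommGroup E]
    [NormedSpace ℝ E] [NormedAddCommGroup F] [NormedSpace ℝ F] {f : E → F} (hf : ContDiff ℝ ∞ f)
    {M : ℕ → ℝ} (hM : ∀ n x, ‖iteratedFDeriv ℝ n f x‖ ≤ M n) {x₀ : E} (hx₀ : x₀ ∉ tsupport f)
    (N i : ℕ) (x : E) : ‖iteratedFDeriv ℝ i f x‖ ≤ M (i + N) * ‖x - x₀‖ ^ N := by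
  induction N generalizing i x with
  | zero => simpa using hM i x
  | succ N ih =>
    have hzero : iteratedFDeriv ℝ i f x₀ = 0 :=
      Function.notMem_support.1 fun hmem => hx₀ (support_iteratedFDeriv_subset i hmem)
    have hfderiv (y : E) (hy : y ∈ Metric.closedBall x₀ ‖x - x₀‖) :
        ‖fderiv ℝ (iteratedFDeriv ℝ i f) y‖ ≤ M (i + 1 + N) * ‖x - x₀‖ ^ N := by
      rw [norm_fderiv_iteratedFDeriv]
      have hM0 : 0 ≤ M (i + 1 + N) := (norm_nonneg _).trans (hM _ x)
      refine (ih (i + 1) y).trans ?_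
      gcongr
      exact mem_closedBall_iff_norm.1 hy
    have hdiff : Differentiable ℝ (iteratedFDeriv ℝ i f) :=
      hf.differentiable_iteratedFDeriv (mod_cast WithTop.coe_lt_top i)
    have hmvt := (convex_closedBall x₀ ‖x - x₀‖).norm_image_sub_le_of_norm_fderiv_le
      (fun y _ => hdiff y) hfderiv (Metric.mem_closedBall_self (norm_nonneg _))
      (mem_closedBall_iff_norm.2 le_rfl)
    rwa [hzero, sub_zero, mul_assoc, ← pow_succ, add_assoc, add_comm 1 N] at hmvt

theorem exists_norm_eq_one_abs_symplecticForm_eq (w : ℝ × ℝ) :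
    ∃ v : ℝ × ℝ, ‖v‖ = 1 ∧ |symplecticForm v w| = ‖w‖ := by
  rcases le_total |w.1| |w.2| with hw | hw
  · exact ⟨(1, 0), by simp [Prod.norm_def], by simp [symplecticForm_apply, Prod.norm_def, hw]⟩
  · exact ⟨(0, 1), by simp [Prod.norm_def], by simp [symplecticForm_apply, Prod.norm_def, hw]⟩

theorem pow_norm_mul_norm_integral_exp_symplecticForm_le {h : ℝ} (hh : 0 < h) {f : ℝ × ℝ → ℂ}
    (hf : ContDiff ℝ ∞ f) (hfc : HasCompactSupport f) (s : ℝ × ℝ) (n : ℕ) :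
    ‖s‖ ^ n * ‖∫ z, (Circle.exp (2 / h * symplecticForm s z) : ℂ) * f z‖ ≤
      (2 * π * h) ^ n * ∑ l ∈ Finset.range (n + 1), ∫ z, ‖iteratedFDeriv ℝ l f z‖ := by
  have hint (l : ℕ) : Integrable fun z => ‖iteratedFDeriv ℝ l f z‖ :=
    (hf.continuous_iteratedFDeriv (mod_cast le_top)).norm.integrable_of_hasCompactSupport
      (hfc.iteratedFDeriv l).norm
  have hfourier : VectorFourier.fourierIntegral Real.fourierChar volume
      symplecticForm.toLinearMap₁₂ f ((π * h)⁻¹ • s) =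
      ∫ z, (Circle.exp (2 / h * symplecticForm s z) : ℂ) * f z := by
    rw [VectorFourier.fourierIntegral]
    congr 1 with z
    have harg : 2 * π * -symplecticForm z ((π * h)⁻¹ • s) = 2 / h * symplecticForm s z := by
      simp only [symplecticForm_apply, Prod.smul_fst, Prod.smul_snd, smul_eq_mul]
      field_simp
      ring
    rw [Circle.smul_def, smul_eq_mul, ← harg]
    rfl
  obtain ⟨v, hv, hvs⟩ := exists_norm_eq_one_abs_symplecticForm_eq ((π * h)⁻¹ • s)
  have hdecay := VectorFourier.pow_mul_norm_iteratedFDeriv_fourierIntegral_le symplecticForm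
    (μ := (volume : Measure (ℝ × ℝ))) (K := 0) (N := ⊤) hf (fun k l hk _ => by
      obtain rfl : k = 0 := by simpa using hk
      simpa using hint l) (k := 0) (n := n) le_rfl le_top v ((π * h)⁻¹ • s)
  rw [norm_iteratedFDeriv_zero, hfourier, hv, hvs, norm_smul, Real.norm_of_nonneg (by positivity),
    Finset.sum_product] at hdecay
  simp only [one_pow, pow_zero, mul_one, one_mul, Nat.cast_zero, mul_zero, zero_add,
    Finset.range_one, Finset.sum_singleton, mul_pow, inv_pow, mul_assoc] at hdecay
  rw [inv_mul_le_iff₀ (by positivity)] at hdecay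
  exact hdecay.trans_eq (by ring)

theorem integral_norm_le_mul_measureReal {α E : Type*} [MeasurableSpace α] {μ : Measure α}
    [NormedAddCommGroup E] {g : α → E} {s : Set α} {C : ℝ} (hs : μ s < ⊤)
    (hgC : ∀ x ∈ s, ‖g x‖ ≤ C) (hgs : ∀ x ∉ s, g x = 0) : ∫ x, ‖g x‖ ∂μ ≤ C * μ.real s := by
  rw [← setIntegral_eq_integral_of_forall_compl_eq_zero (s := s) fun x hx => by
    rw [hgs x hx, norm_zero]]
  refine (Real.le_norm_self _).trans (norm_setIntegral_le_of_norm_le_const hs fun x hx => ?_)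
  rw [norm_norm]
  exact hgC x hx

theorem volume_real_ball_prod (c : ℝ × ℝ) {r : ℝ} (hr : 0 ≤ r) :
    volume.real (Metric.ball c r) = (2 * r) ^ 2 := by
  rw [← ball_prod_same c.1 c.2, Measure.volume_eq_prod, measureReal_prod_prod,
    Real.volume_real_ball hr, Real.volume_real_ball hr, pow_two]

/-- A smooth symbol supported in the open unit square centred at `c`, with all derivatives bounded
by the sequence `M`. Since `ℝ × ℝ` carries the sup norm, this square is a ball of radius `1 / 2`. -/
structure IsCellSymbol (M : ℕ → ℝ) (c : ℝ × ℝ) (a : ℝ × ℝ → ℝ) : Prop where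
  contDiff : ContDiff ℝ ∞ a
  tsupport_subset : tsupport a ⊆ Metric.ball c (1 / 2)
  norm_iteratedFDeriv_le : ∀ n x, ‖iteratedFDeriv ℝ n a x‖ ≤ M n

namespace IsCellSymbol

variable {M : ℕ → ℝ} {c d : ℝ × ℝ} {a b : ℝ × ℝ → ℝ}

theorem nonneg (ha : IsCellSymbol M c a) (n : ℕ) : 0 ≤ M n :=
  (norm_nonneg _).trans (ha.norm_iteratedFDeriv_le n 0)

theorem eq_zero_of_notMem_ball (ha : IsCellSymbol M c a) {z : ℝ × ℝ}
    (hz : z ∉ Metric.ball c (1 / 2)) : a z = 0 :=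
  image_eq_zero_of_notMem_tsupport fun hmem => hz (ha.tsupport_subset hmem)

theorem hasCompactSupport (ha : IsCellSymbol M c a) : HasCompactSupport a :=
  HasCompactSupport.of_support_subset_isCompact (isCompact_closedBall c (1 / 2))
    ((subset_tsupport a).trans (ha.tsupport_subset.trans Metric.ball_subset_closedBall))

theorem integrable (ha : IsCellSymbol M c a) : Integrable a :=
  ha.contDiff.continuous.integrable_of_hasCompactSupport ha.hasCompactSupport

theorem integral_norm_le (ha : IsCellSymbol M c a) : ∫ z, ‖a z‖ ≤ M 0 := by
  have := integral_norm_le_mul_measureReal (μ := volume) (g := a)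
    Metric.isBounded_ball.measure_lt_top (fun z _ => by simpa using ha.norm_iteratedFDeriv_le 0 z)
    fun _ => ha.eq_zero_of_notMem_ball
  rwa [volume_real_ball_prod c (by norm_num), mul_one_div_cancel two_ne_zero, one_pow,
    mul_one] at this

theorem norm_iteratedFDeriv_correlation_le (ha : IsCellSymbol M c a) (hb : IsCellSymbol M d b)
    (hcd : 1 ≤ ‖c - d‖) (s z : ℝ × ℝ) (l N : ℕ) :
    ‖iteratedFDeriv ℝ l (fun z => a (z + s) * b z) z‖ ≤
      (∑ k ∈ Finset.range (l + 1), (l.choose k : ℝ) * M (k + N) * M (l - k)) * ‖s‖ ^ N := by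
  refine (norm_iteratedFDeriv_mul_le (ha.contDiff.comp (contDiff_id.add contDiff_const))
    hb.contDiff z (n := l) (mod_cast le_top)).trans ?_
  rw [Finset.sum_mul]
  refine Finset.sum_le_sum fun k _ => ?_
  by_cases hz : z ∈ tsupport b
  · have hza : z ∉ tsupport a := fun hza => (Metric.ball_disjoint_ball (by
      rw [dist_eq_norm]; linarith)).le_bot ⟨ha.tsupport_subset hza, hb.tsupport_subset hz⟩
    have hshift : ‖iteratedFDeriv ℝ k (fun z => a (z + s)) z‖ ≤ M (k + N) * ‖s‖ ^ N := by
      rw [iteratedFDeriv_comp_add_right]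
      simpa using norm_iteratedFDeriv_le_mul_pow_of_notMem_tsupport ha.contDiff
        ha.norm_iteratedFDeriv_le hza N k (z + s)
    calc (l.choose k : ℝ) * ‖iteratedFDeriv ℝ k (fun z => a (z + s)) z‖ *
          ‖iteratedFDeriv ℝ (l - k) b z‖
        ≤ (l.choose k : ℝ) * (M (k + N) * ‖s‖ ^ N) * M (l - k) := by
          have := ha.nonneg (k + N)
          gcongr
          exact hb.norm_iteratedFDeriv_le _ _
      _ = (l.choose k : ℝ) * M (k + N) * M (l - k) * ‖s‖ ^ N := by ring
  · have hzero : iteratedFDeriv ℝ (l - k) b z = 0 :=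
      Function.notMem_support.1 fun hmem => hz (support_iteratedFDeriv_subset _ hmem)
    rw [hzero, norm_zero, mul_zero]
    have := ha.nonneg (k + N)
    have := ha.nonneg (l - k)
    positivity

theorem integral_norm_iteratedFDeriv_correlation_le (ha : IsCellSymbol M c a)
    (hb : IsCellSymbol M d b) (hcd : 1 ≤ ‖c - d‖) (s : ℝ × ℝ) (l N : ℕ) :
    ∫ z, ‖iteratedFDeriv ℝ l (fun z => a (z + s) * b z) z‖ ≤
      (∑ k ∈ Finset.range (l + 1), (l.choose k : ℝ) * M (k + N) * M (l - k)) * ‖s‖ ^ N := by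
  have := integral_norm_le_mul_measureReal (μ := volume) (s := Metric.ball d (1 / 2))
    (g := iteratedFDeriv ℝ l (fun z => a (z + s) * b z)) Metric.isBounded_ball.measure_lt_top
    (fun z _ => ha.norm_iteratedFDeriv_correlation_le hb hcd s z l N)
    fun z hz => Function.notMem_support.1 fun hmem => hz
      (hb.tsupport_subset (tsupport_mul_subset_right (support_iteratedFDeriv_subset l hmem)))
  rwa [volume_real_ball_prod d (by norm_num), mul_one_div_cancel two_ne_zero, one_pow,
    mul_one] at this

theorem twistedCorrelation_eq_zero_of_notMem_ball (ha : IsCellSymbol M c a)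
    (hb : IsCellSymbol M d b) (h : ℝ) {s : ℝ × ℝ} (hs : s ∉ Metric.ball (c - d) 1) :
    twistedCorrelation h a b s = 0 := by
  have hab (z : ℝ × ℝ) : a (z + s) * b z = 0 := by
    by_contra hne
    have hza := mem_ball_iff_norm.1
      (not_imp_comm.1 ha.eq_zero_of_notMem_ball (left_ne_zero_of_mul hne))
    have hzb := mem_ball_iff_norm.1
      (not_imp_comm.1 hb.eq_zero_of_notMem_ball (right_ne_zero_of_mul hne))
    refine hs (mem_ball_iff_norm.2 ?_)
    calc ‖s - (c - d)‖ = ‖(z + s - c) - (z - d)‖ := by congr 1; abel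
      _ ≤ ‖z + s - c‖ + ‖z - d‖ := norm_sub_le _ _
      _ < 1 := by linarith
  simp [twistedCorrelation, hab]

theorem exists_pow_norm_mul_norm_twistedCorrelation_le (M : ℕ → ℝ) (n N : ℕ) :
    ∃ C : ℝ, ∀ h, 0 < h → ∀ c d a b, IsCellSymbol M c a → IsCellSymbol M d b → 1 ≤ ‖c - d‖ →
      ∀ s, ‖s‖ ^ n * ‖twistedCorrelation h a b s‖ ≤ C * h ^ n * ‖s‖ ^ N := by
  refine ⟨(2 * π) ^ n * ∑ l ∈ Finset.range (n + 1), ∑ k ∈ Finset.range (l + 1),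
    (l.choose k : ℝ) * M (k + N) * M (l - k), fun h hh c d a b ha hb hcd s => ?_⟩
  set f : ℝ × ℝ → ℝ := fun z => a (z + s) * b z
  have hf : ContDiff ℝ ∞ f :=
    (ha.contDiff.comp (contDiff_id.add contDiff_const)).mul hb.contDiff
  have hfc : HasCompactSupport f := hb.hasCompactSupport.mul_left
  have hofReal (l : ℕ) (z : ℝ × ℝ) :
      ‖iteratedFDeriv ℝ l (fun z => (f z : ℂ)) z‖ = ‖iteratedFDeriv ℝ l f z‖ :=
    Complex.ofRealLI.norm_iteratedFDeriv_comp_left hf.contDiffAt (mod_cast le_top)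
  calc ‖s‖ ^ n * ‖twistedCorrelation h a b s‖
      ≤ (2 * π * h) ^ n * ∑ l ∈ Finset.range (n + 1),
          ∫ z, ‖iteratedFDeriv ℝ l (fun z => (f z : ℂ)) z‖ :=
        pow_norm_mul_norm_integral_exp_symplecticForm_le hh
          (Complex.ofRealCLM.contDiff.comp hf) (hfc.comp_left Complex.ofReal_zero) s n
    _ ≤ (2 * π * h) ^ n * ∑ l ∈ Finset.range (n + 1),
          (∑ k ∈ Finset.range (l + 1), (l.choose k : ℝ) * M (k + N) * M (l - k)) * ‖s‖ ^ N := by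
        simp only [hofReal]
        gcongr with l
        exact ha.integral_norm_iteratedFDeriv_correlation_le hb hcd s l N
    _ = _ := by rw [← Finset.sum_mul]; ring

theorem exists_pow_norm_mul_norm_twistedCorrelation_le_pow (M : ℕ → ℝ) (p n : ℕ) :
    ∃ C : ℝ, ∀ h, 0 < h → h < 1 → ∀ c d a b, IsCellSymbol M c a → IsCellSymbol M d b →
      1 ≤ ‖c - d‖ → ∀ s, ‖s‖ ^ p * ‖twistedCorrelation h a b s‖ ≤ C * h ^ n := by
  obtain ⟨C₀, hC₀⟩ := exists_pow_norm_mul_norm_twistedCorrelation_le M 0 1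
  obtain ⟨C, hC⟩ := exists_pow_norm_mul_norm_twistedCorrelation_le M (n + p) n
  refine ⟨|C|, fun h hh hh1 c d a b ha hb hcd s => ?_⟩
  rcases eq_or_ne s 0 with rfl | hs
  · have hzero : ‖twistedCorrelation h a b 0‖ ≤ 0 := by
      simpa using hC₀ h hh c d a b ha hb hcd 0
    rw [norm_le_zero_iff.1 hzero, norm_zero (E := ℂ), mul_zero]
    positivity
  · have hs' : 0 < ‖s‖ ^ n := by positivity
    refine le_of_mul_le_mul_left ?_ hs'
    calc ‖s‖ ^ n * (‖s‖ ^ p * ‖twistedCorrelation h a b s‖)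
        = ‖s‖ ^ (n + p) * ‖twistedCorrelation h a b s‖ := by rw [pow_add, mul_assoc]
      _ ≤ C * h ^ (n + p) * ‖s‖ ^ n := hC h hh c d a b ha hb hcd s
      _ ≤ |C| * h ^ n * ‖s‖ ^ n := by
          gcongr ?_ * ?_ * _
          · exact le_abs_self C
          · exact pow_le_pow_of_le_one hh.le hh1.le (Nat.le_add_right n p)
      _ = ‖s‖ ^ n * (|C| * h ^ n) := mul_comm _ _

theorem exists_norm_twistedCorrelation_mul_pow_le (M : ℕ → ℝ) (p n : ℕ) :
    ∃ C : ℝ, ∀ h, 0 < h → h < 1 → ∀ c d a b, IsCellSymbol M c a → IsCellSymbol M d b →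
      1 ≤ ‖c - d‖ → ∀ s, ‖twistedCorrelation h a b s‖ * ‖c - d‖ ^ p ≤ C * h ^ n := by
  obtain ⟨C₀, hC₀⟩ := exists_pow_norm_mul_norm_twistedCorrelation_le_pow M 0 n
  obtain ⟨C, hC⟩ := exists_pow_norm_mul_norm_twistedCorrelation_le_pow M p n
  refine ⟨2 ^ (p - 1) * (C + C₀), fun h hh hh1 c d a b ha hb hcd s => ?_⟩
  have hbound₀ := hC₀ h hh hh1 c d a b ha hb hcd s
  have hbound := hC h hh hh1 c d a b ha hb hcd s
  rw [pow_zero, one_mul] at hbound₀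
  by_cases hs : s ∈ Metric.ball (c - d) 1
  · have hnorm : ‖c - d‖ ≤ ‖s‖ + 1 := by
      have := norm_le_norm_add_norm_sub s (c - d)
      linarith [mem_ball_iff_norm.1 hs]
    calc ‖twistedCorrelation h a b s‖ * ‖c - d‖ ^ p
        ≤ ‖twistedCorrelation h a b s‖ * (2 ^ (p - 1) * (‖s‖ ^ p + 1 ^ p)) := by
          gcongr
          exact (pow_le_pow_left₀ (norm_nonneg _) hnorm p).trans
            (add_pow_le (norm_nonneg s) zero_le_one p)
      _ = 2 ^ (p - 1) * (‖s‖ ^ p * ‖twistedCorrelation h a b s‖ +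
            ‖twistedCorrelation h a b s‖) := by rw [one_pow]; ring
      _ ≤ 2 ^ (p - 1) * (C * h ^ n + C₀ * h ^ n) := by gcongr
      _ = 2 ^ (p - 1) * (C + C₀) * h ^ n := by ring
  · rw [ha.twistedCorrelation_eq_zero_of_notMem_ball hb h hs, norm_zero, zero_mul, mul_assoc,
      add_mul]
    have := (norm_nonneg _).trans hbound₀
    have := (by positivity : 0 ≤ ‖s‖ ^ p * ‖twistedCorrelation h a b s‖).trans hbound
    positivity

theorem exists_norm_mul_mul_pow_le (M : ℕ → ℝ) (p n : ℕ) :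
    ∃ C : ℝ, ∀ h, 0 < h → h < 1 → ∀ c d a b S T, IsCellSymbol M c a → IsCellSymbol M d b →
      1 ≤ ‖c - d‖ → IsWeylQuant h a S → IsWeylQuant h b T → ‖S * T‖ * ‖c - d‖ ^ p ≤ C * h ^ n := by
  obtain ⟨C, hC⟩ := exists_norm_twistedCorrelation_mul_pow_le M p (n + 2)
  refine ⟨(π⁻¹) ^ 2 * 4 * C, fun h hh hh1 c d a b S T ha hb hcd hS hT => ?_⟩
  have hcdp : 0 < ‖c - d‖ ^ p := by positivity
  have hG : ∫ s, ‖twistedCorrelation h a b s‖ ≤ C * h ^ (n + 2) / ‖c - d‖ ^ p * 4 := by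
    have := integral_norm_le_mul_measureReal (μ := volume) (g := twistedCorrelation h a b)
      Metric.isBounded_ball.measure_lt_top
      (fun s _ => (le_div_iff₀ hcdp).2 (hC h hh hh1 c d a b ha hb hcd s))
      fun _ => ha.twistedCorrelation_eq_zero_of_notMem_ball hb h
    rwa [volume_real_ball_prod _ zero_le_one, show (2 * 1 : ℝ) ^ 2 = 4 by norm_num] at this
  calc ‖S * T‖ * ‖c - d‖ ^ p
      ≤ ((π * h)⁻¹) ^ 2 * (C * h ^ (n + 2) / ‖c - d‖ ^ p * 4) * ‖c - d‖ ^ p := by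
        gcongr
        refine (hS.norm_mul_le hT hh ha.integrable hb.integrable).trans ?_
        gcongr
    _ = (π⁻¹) ^ 2 * 4 * C * h ^ n := by field_simp; ring

end IsCellSymbol

end SmoothSymbols

section LatticeFamilies

open Asymptotics Filter

/-- A lattice site, regarded as a point of phase space. -/
def latticePoint (j : ℤ × ℤ) : ℝ × ℝ := (j.1, j.2)

theorem norm_latticePoint_sub (i j : ℤ × ℤ) : ‖latticePoint i - latticePoint j‖ = ‖i - j‖ := by
  simp [latticePoint, Prod.norm_def, Int.norm_eq_abs]

theorem one_le_norm_of_ne_zero {k : ℤ × ℤ} (hk : k ≠ 0) : 1 ≤ ‖k‖ := by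
  have hint {n : ℤ} (hn : n ≠ 0) : 1 ≤ ‖n‖ := by
    rw [Int.norm_eq_abs]
    exact_mod_cast Int.one_le_abs hn
  by_cases hk₁ : k.1 = 0
  · exact (hint fun hk₂ => hk (Prod.ext hk₁ hk₂)).trans (norm_snd_le k)
  · exact (hint hk₁).trans (norm_fst_le k)

theorem summable_inv_norm_pow_int_prod {n : ℕ} (hn : 2 < n) :
    Summable fun k : ℤ × ℤ => (‖k‖ ^ n)⁻¹ := by
  have := EisensteinSeries.summable_one_div_norm_rpow (k := n) (by exact_mod_cast hn)
  refine ((finTwoArrowEquiv ℤ).symm.summable_iff.2 this).congr fun k => ?_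
  rw [Function.comp_apply, Real.rpow_neg (norm_nonneg _), Real.rpow_natCast]
  congr 2
  simp [EisensteinSeries.norm_eq_max_natAbs, Prod.norm_def, Int.norm_eq_abs]

theorem sum_erase_inv_norm_sub_pow_le {n : ℕ} (hn : 2 < n) (Λ : Finset (ℤ × ℤ)) (i : ℤ × ℤ) :
    ∑ j ∈ Λ.erase i, (‖i - j‖ ^ n)⁻¹ ≤ ∑' k : ℤ × ℤ, (‖k‖ ^ n)⁻¹ := by
  rw [← (Equiv.subLeft i).tsum_eq]
  exact ((Equiv.subLeft i).summable_iff.2 (summable_inv_norm_pow_int_prod hn)).sum_le_tsum _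
    fun _ _ => by positivity

theorem overlap_le_of_norm_mul_mul_pow_le {E : Type*} [NormedRing E] {a b : E} {k ω : ℝ} {p : ℕ}
    (hk : 0 < k) (h : ‖a * b‖ * k ^ (p * 4) ≤ ω) : overlap a b ≤ √√ω * (k ^ p)⁻¹ := by
  rw [← div_eq_mul_inv, le_div_iff₀ (by positivity)]
  calc overlap a b * k ^ p = √√(‖a * b‖ * k ^ (p * 4)) := by
        rw [pow_mul k p 4, pow_mul (k ^ p) 2 2, Real.sqrt_mul (norm_nonneg _),
          Real.sqrt_sq (by positivity), Real.sqrt_mul (Real.sqrt_nonneg _),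
          Real.sqrt_sq (by positivity), overlap]
    _ ≤ √√ω := Real.sqrt_le_sqrt (Real.sqrt_le_sqrt h)

/-- The operators `T j`, `j ∈ Λ`, are the Weyl quantizations of symbols carried by the unit cells
centred at the lattice sites `j`, with common bounds `M` on the derivatives. -/
def IsCellFamily (M : ℕ → ℝ) (h : ℝ) (Λ : Finset (ℤ × ℤ)) (T : ℤ × ℤ → L2R →L[ℂ] L2R) : Prop :=
  ∀ j ∈ Λ, ∃ a, IsCellSymbol M (latticePoint j) a ∧ IsWeylQuant h a (T j)

-- Decay of order `12` in the distance leaves order `3` after the two square roots in `overlap`,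
-- and `‖k‖⁻³` is summable over `ℤ × ℤ`.
theorem exists_isNegligible_sum_erase_overlap_le (M : ℕ → ℝ) :
    ∃ η : ℝ → ℝ, IsNegligible η ∧ ∀ h ∈ Set.Ioo (0 : ℝ) 1, ∀ Λ T,
      IsCellFamily M h Λ T → ∀ i ∈ Λ, ∑ j ∈ Λ.erase i, overlap (T i) (T j) ≤ η h := by
  obtain ⟨ω, hω, hle⟩ := exists_isNegligible_of_forall_le
    (F := fun h => {x | ∃ Λ T, IsCellFamily M h Λ T ∧ ∃ i ∈ Λ, ∃ j ∈ Λ, i - j ≠ 0 ∧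
      ‖T i * T j‖ * ‖i - j‖ ^ (3 * 4) = x}) fun N => by
    obtain ⟨C, hC⟩ := IsCellSymbol.exists_norm_mul_mul_pow_le M (3 * 4) N
    refine ⟨C, fun h hh => ?_⟩
    rintro _ ⟨Λ, T, hT, i, hi, j, hj, hij, rfl⟩
    obtain ⟨a, ha, haT⟩ := hT i hi
    obtain ⟨b, hb, hbT⟩ := hT j hj
    rw [← norm_latticePoint_sub]
    exact hC h hh.1 hh.2 _ _ a b _ _ ha hb
      ((one_le_norm_of_ne_zero hij).trans_eq (norm_latticePoint_sub i j).symm) haT hbT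
  set σ : ℝ := ∑' k : ℤ × ℤ, (‖k‖ ^ 3)⁻¹
  refine ⟨fun h => √√(ω h) * σ, hω.sqrt.sqrt.mul_of_isBigO_inv_pow (p := 0) ?_,
    fun h hh Λ T hT i hi => ?_⟩
  · simpa using isBigO_const_const σ (one_ne_zero' ℝ) _
  · calc ∑ j ∈ Λ.erase i, overlap (T i) (T j)
        ≤ ∑ j ∈ Λ.erase i, √√(ω h) * (‖i - j‖ ^ 3)⁻¹ := by
          refine Finset.sum_le_sum fun j hj => ?_
          obtain ⟨hji, hj⟩ := Finset.mem_erase.1 hj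
          have hij : i - j ≠ 0 := sub_ne_zero.2 hji.symm
          exact overlap_le_of_norm_mul_mul_pow_le (norm_pos_iff.2 hij)
            (hle h hh _ ⟨Λ, T, hT, i, hi, j, hj, hij, rfl⟩)
      _ ≤ √√(ω h) * σ := by
          rw [← Finset.mul_sum]
          gcongr
          exact sum_erase_inv_norm_sub_pow_le (by norm_num) Λ i

theorem IsCellSymbol.norm_weylQuant_le {M : ℕ → ℝ} {c : ℝ × ℝ} {a : ℝ × ℝ → ℝ} {h : ℝ}
    {T : L2R →L[ℂ] L2R} (ha : IsCellSymbol M c a) (hT : IsWeylQuant h a T) (hh : 0 < h) :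
    ‖T‖ ≤ M 0 * h⁻¹ := by
  refine (hT.norm_le hh ha.integrable).trans ?_
  have := ha.nonneg 0
  rw [mul_comm (M 0)]
  gcongr
  · exact le_mul_of_one_le_left hh.le (by linarith [Real.pi_gt_three])
  · exact ha.integral_norm_le

theorem exists_isAlmostOrthogonal_of_isCellFamily (M : ℕ → ℝ) :
    ∃ K η : ℝ → ℝ, K =O[𝓟 (Set.Ioo 0 1)] (fun h => h⁻¹) ∧ IsNegligible η ∧
      ∀ h ∈ Set.Ioo (0 : ℝ) 1, ∀ Λ T, IsCellFamily M h Λ T →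
        IsAlmostOrthogonal Λ T (K h) (η h) := by
  obtain ⟨η, hη, hsum⟩ := exists_isNegligible_sum_erase_overlap_le M
  refine ⟨fun h => √(M 0 * h⁻¹) + η h, η, ?_, hη, fun h hh Λ T hT => ?_⟩
  · have hone {h : ℝ} (hh : h ∈ Set.Ioo (0 : ℝ) 1) : 1 ≤ h⁻¹ := (one_le_inv₀ hh.1).2 hh.2.le
    have hsqrt : (fun h => √(M 0 * h⁻¹)) =O[𝓟 (Set.Ioo 0 1)] fun h => h⁻¹ :=
      isBigO_principal_Ioo_of_le (C := √(M 0)) (fun h _ => Real.sqrt_nonneg _) (fun h hh => by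
        rw [Real.sqrt_mul' _ (inv_nonneg.2 hh.1.le)]
        gcongr
        exact Real.sqrt_le_self_iff.2 (.inr (hone hh))) fun h hh => inv_nonneg.2 hh.1.le
    have hη1 : η =O[𝓟 (Set.Ioo 0 1)] fun h => h⁻¹ := (hη 0).trans <|
      isBigO_principal_Ioo_of_le (C := 1) (fun h hh => pow_nonneg hh.1.le 0)
        (fun h hh => by simpa using hone hh) fun h hh => inv_nonneg.2 hh.1.le
    exact hsqrt.add hη1
  · refine ⟨fun i hi => ?_, fun i hi => ?_, hsum h hh Λ T hT⟩
    all_goals obtain ⟨a, ha, haT⟩ := hT i hi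
    · exact haT.isSelfAdjoint hh.1 ha.integrable
    · rw [← Finset.add_sum_erase Λ _ hi, overlap_self (haT.isSelfAdjoint hh.1 ha.integrable)]
      exact add_le_add (Real.sqrt_le_sqrt (ha.norm_weylQuant_le haT hh.1)) (hsum h hh Λ T hT i hi)

theorem isNegligible_sq_mul_sq_mul {K η : ℝ → ℝ} (hK : K =O[𝓟 (Set.Ioo 0 1)] fun h => h⁻¹)
    (hη : IsNegligible η) (m : ℝ) :
    IsNegligible fun h => K h ^ 2 * η h ^ 2 * (2 / m + 4 * K h ^ 2 / m ^ 2) := by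
  have hterm (q : ℕ) (C : ℝ) : IsNegligible fun h => η h * (C * (η h * K h ^ q)) :=
    hη.mul_of_isBigO_inv_pow (p := q)
      (by simpa using ((hη 0).mul (hK.pow q)).const_mul_left C)
  convert (hterm 2 (2 / m)).add (hterm 4 (4 / m ^ 2)) using 2
  ring

theorem isCellSymbol_shiftSymbol {M : ℕ → ℝ} {f : ℝ × ℝ → ℝ} (j : ℤ × ℤ)
    (hf : ContDiff ℝ (⊤ : ℕ∞) f)
    (hsupp : tsupport f ⊆ Set.Ioo (-(1 / 2) : ℝ) (1 / 2) ×ˢ Set.Ioo (-(1 / 2) : ℝ) (1 / 2))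
    (hM : ∀ n x, ‖iteratedFDeriv ℝ n f x‖ ≤ M n) :
    IsCellSymbol M (latticePoint j) (shiftSymbol f j) := by
  have hshift : shiftSymbol f j = fun z => f (z - latticePoint j) := rfl
  rw [hshift]
  refine ⟨hf.comp (contDiff_id.sub contDiff_const), fun z hz => ?_, fun n z => ?_⟩
  · have hmem : z - latticePoint j ∈ tsupport f :=
      tsupport_comp_subset_preimage f (continuous_id.sub continuous_const) hz
    have hmem := hsupp hmem
    rw [← Real.ball_zero_eq_Ioo, ball_prod_same] at hmem
    simpa [dist_eq_norm, Prod.mk_zero_zero] using hmem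
  · rw [iteratedFDeriv_comp_sub]
    exact hM n _

end LatticeFamilies

theorem weyl_sum_at_most_one_eigenvalue
    (b₀ : ℝ) (hb₀ : 0 < b₀) (M : ℕ → ℝ) (hM : ∀ N, 0 < M N) :
    ∃ r : ℝ → ℝ,
      (∀ h : ℝ, 0 < h → h < 1 → 0 ≤ r h) ∧
      (∀ N : ℝ, 0 < N → ∃ C : ℝ, ∀ h : ℝ, 0 < h → h < 1 → r h ≤ C * h ^ N) ∧
      ∀ (Λ : Finset (ℤ × ℤ)) (f : ℤ × ℤ → (ℝ × ℝ → ℝ)),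
        (∀ j ∈ Λ, ContDiff ℝ (⊤ : ℕ∞) (f j)) →
        (∀ j ∈ Λ, HasCompactSupport (f j)) →
        (∀ j ∈ Λ, tsupport (f j) ⊆
          Set.Ioo (-(1/2) : ℝ) (1/2) ×ˢ Set.Ioo (-(1/2) : ℝ) (1/2)) →
        (∀ j ∈ Λ, ∀ (n : ℕ) (x : ℝ × ℝ), ‖iteratedFDeriv ℝ n (f j) x‖ ≤ M n) →
        ∀ (μ₀ δ h : ℝ),
          b₀ ≤ μ₀ → 0 < δ → δ < b₀ / 2 → 0 < h → h < 1 →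
          ∀ T : ℤ × ℤ → (L2R →L[ℂ] L2R),
            (∀ j ∈ Λ, IsWeylQuant h (shiftSymbol (f j) j) (T j)) →
            ∀ jstar ∈ Λ,
              -- the spectra of the other site operators avoid the enlarged interval
              (∀ j ∈ Λ, j ≠ jstar →
                ∀ μ ∈ Set.Icc (μ₀ - (δ + r h)) (μ₀ + (δ + r h)),
                  (μ : ℂ) ∉ spectrum ℂ (T j)) →
              -- the exceptional site has at most one spectral point in the interval
              (∀ μ₁ ∈ Set.Icc (μ₀ - (δ + r h)) (μ₀ + (δ + r h)),
                ∀ μ₂ ∈ Set.Icc (μ₀ - (δ + r h)) (μ₀ + (δ + r h)),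
                  (μ₁ : ℂ) ∈ spectrum ℂ (T jstar) →
                  (μ₂ : ℂ) ∈ spectrum ℂ (T jstar) → μ₁ = μ₂) →
              -- and that spectral point is an eigenvalue of multiplicity one
              (∀ μ ∈ Set.Icc (μ₀ - (δ + r h)) (μ₀ + (δ + r h)),
                ∀ u v : L2R, T jstar u = (μ : ℂ) • u → T jstar v = (μ : ℂ) • v →
                  u ≠ 0 → v ≠ 0 → ⟪u, v⟫_ℂ = 0 → False) →
              -- conclusion: total eigenvalue multiplicity of A in [μ₀ ± δ] is ≤ 1
              ∀ μ₁ ∈ Set.Icc (μ₀ - δ) (μ₀ + δ), ∀ μ₂ ∈ Set.Icc (μ₀ - δ) (μ₀ + δ),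
                ∀ u v : L2R,
                  (∑ j ∈ Λ, T j) u = (μ₁ : ℂ) • u →
                  (∑ j ∈ Λ, T j) v = (μ₂ : ℂ) • v →
                  u ≠ 0 → v ≠ 0 → (μ₁ ≠ μ₂ ∨ ⟪u, v⟫_ℂ = 0) → False := by
  obtain ⟨K, η, hK, hη, hKη⟩ := exists_isAlmostOrthogonal_of_isCellFamily M
  refine ⟨fun h => K h ^ 2 * η h ^ 2 * (2 / (b₀ / 2) + 4 * K h ^ 2 / (b₀ / 2) ^ 2) +
    Real.exp (-h⁻¹), fun h _ _ => by positivity, fun N _ =>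
    ((isNegligible_sq_mul_sq_mul hK hη (b₀ / 2)).add .exp_neg_inv).exists_le_mul_rpow N, ?_⟩
  intro Λ f hf _ hsupp hbound μ₀ δ h hμ₀ _ hδ hh0 hh1 T hT jstar hjstar hother hunique hsimple
  have hcell : IsCellFamily M h Λ T := fun j hj => ⟨shiftSymbol (f j) j,
    isCellSymbol_shiftSymbol j (hf j hj) (hsupp j hj) (hbound j hj), hT j hj⟩
  have hsite : HasIsolatedSite Λ T _ jstar := ⟨hjstar, hother, hunique, hsimple⟩
  exact (hKη h ⟨hh0, hh1⟩ Λ T hcell).hasAtMostOneEigenvalue_sum hsite (half_pos hb₀)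
    (by linarith) (lt_add_of_pos_right _ (Real.exp_pos _))
end
end
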